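/- arXiv:math/0301217 — 5 statements merged into one kernel-verified Lean document; each statement's English description precedes it below -/
import Mathlib

section
/- (Polynomial spreading lemma.) For every δ_0 > 0, every c_0 ∈ (0,1) and every ε > 0 there exists κ = κ(δ_0, ε, c_0) > 0 with the following property. Let n be a positive integer, let P be a real polynomial of degree ≤ n with sup_{x∈[-1,1]} |P(x)| ≤ 1, let δ ≥ δ_0, let c satisfy c_0 ≤ c < 1 and 0 < ε < (1−c)/(2−c), let E ⊂ [-1,1] be a measurable set with 0 < |E| < κ such that sup_{x∈E} |P(x)| ≤ e^{-δ n}, and let I be an interval with E ⊂ I ⊂ [-1,1] and |I| ≤ |E|^{1/(2−c)+ε}. Then sup_{x∈I} |P(x)| ≤ e^{-c δ n}. -/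
open MeasureTheory Set

lemma bw_disc (n : ℕ) (P : Polynomial ℝ) (hP : P.natDegree ≤ n)
    (hb : ∀ x ∈ Set.Icc (-1:ℝ) 1, |P.eval x| ≤ 1) (w : ℂ) (hw0 : w ≠ 0) (hw : ‖w‖ ≤ 1) :
    ‖w‖ ^ n * ‖Polynomial.aeval ((w + w⁻¹) / 2) P‖ ≤ 1 := by
  let F : ℂ → ℂ := fun w => ∑ j ∈ Finset.range (n+1),
    (P.coeff j : ℂ) * (((w^2+1)/2)^j * w^(n-j))
  have hF : ∀ w : ℂ, w ≠ 0 → F w = w ^ n * Polynomial.aeval ((w + w⁻¹) / 2) P := by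
    intro w hw
    rw [Polynomial.aeval_eq_sum_range' (Nat.lt_succ_of_le hP), Finset.mul_sum]
    refine Finset.sum_congr rfl fun j hj => ?_
    have hj' : j ≤ n := Nat.lt_succ_iff.mp (Finset.mem_range.mp hj)
    have h1 : w ^ n = w ^ j * w ^ (n - j) := by rw [← pow_add, Nat.add_sub_cancel' hj']
    have h2 : (w^2+1)/2 = w * ((w + w⁻¹) / 2) := by field_simp
    rw [h1, h2, mul_pow, Complex.real_smul]
    ring
  have hd : DiffContOnCl ℂ F (Metric.ball 0 1) := by
    apply Differentiable.diffContOnCl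
    fun_prop
  have key := Complex.norm_le_of_forall_mem_frontier_norm_le (C := 1) Metric.isBounded_ball hd
    (fun z hz => by
      rw [frontier_ball _ one_ne_zero, mem_sphere_zero_iff_norm] at hz
      have hz0 : z ≠ 0 := by rintro rfl; simp at hz
      rw [hF z hz0, norm_mul, norm_pow, hz, one_pow, one_mul]
      have : (z + z⁻¹) / 2 = ((z.re : ℝ) : ℂ) := by
        rw [Complex.inv_eq_conj hz, Complex.add_conj]; push_cast; ring
      rw [this, ← Complex.coe_algebraMap, Polynomial.aeval_algebraMap_apply]
      simp only [Complex.coe_algebraMap, Complex.norm_real, Polynomial.coe_aeval_eq_eval]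
      apply hb
      have := Complex.abs_re_le_norm z
      rw [hz] at this
      exact abs_le.mp this)
    (z := w) (by
      rw [closure_ball _ one_ne_zero]; simpa using hw)
  rwa [hF w hw0, norm_mul, norm_pow] at key

lemma exists_joukowski (z : ℂ) : ∃ w : ℂ, w ≠ 0 ∧ ‖w‖ ≤ 1 ∧ z = (w + w⁻¹) / 2 := by
  obtain ⟨s, hs⟩ := IsAlgClosed.exists_pow_nat_eq (z^2 - 1) (n := 2) (by norm_num)
  have hprod : (z + s) * (z - s) = 1 := by linear_combination -hs
  have h1 : z + s ≠ 0 := left_ne_zero_of_mul_eq_one hprod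
  have h2 : z - s ≠ 0 := right_ne_zero_of_mul_eq_one hprod
  have hi : (z + s)⁻¹ = z - s := inv_eq_of_mul_eq_one_right hprod
  have hi' : (z - s)⁻¹ = z + s := by rw [← hi, inv_inv]
  by_cases h : ‖z + s‖ ≤ 1
  · exact ⟨z + s, h1, h, by rw [hi]; ring⟩
  · refine ⟨z - s, h2, ?_, by rw [hi']; ring⟩
    rw [← hi, norm_inv]
    exact inv_le_one_of_one_le₀ (le_of_not_ge h)

lemma bw_bound (n : ℕ) (P : Polynomial ℝ) (hP : P.natDegree ≤ n)
    (hb : ∀ x ∈ Set.Icc (-1:ℝ) 1, |P.eval x| ≤ 1) (x : ℝ) (hx : x ∈ Set.Icc (-1:ℝ) 1)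
    (q : ℝ) (hq : 0 ≤ q) (z : ℂ) (hz : ‖z - x‖ ≤ q ^ 2) :
    ‖Polynomial.aeval z P‖ ≤ Real.exp (3 * q * n) := by
  obtain ⟨w, hw0, hw1, rfl⟩ := exists_joukowski z
  have hdisc := bw_disc n P hP hb w hw0 hw1
  set z := (w + w⁻¹) / 2 with hzdef
  have hwpos : 0 < ‖w‖ := norm_pos_iff.mpr hw0
  have e1 : ‖z - 1‖ = ‖w - 1‖ ^ 2 / (2 * ‖w‖) := by
    have : z - 1 = (w - 1)^2 / (2 * w) := by rw [hzdef]; field_simp; ring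
    rw [this]; simp
  have e2 : ‖z + 1‖ = ‖w + 1‖ ^ 2 / (2 * ‖w‖) := by
    have : z + 1 = (w + 1)^2 / (2 * w) := by rw [hzdef]; field_simp; ring
    rw [this]; simp
  have par := parallelogram_law_with_norm ℝ w 1
  simp only [norm_one] at par
  have f1 : ‖z - 1‖ ≤ q^2 + (1 - x) := by
    calc ‖z - 1‖ = ‖(z - x) + ((x - 1 : ℝ) : ℂ)‖ := by push_cast; ring_nf
      _ ≤ _ := (norm_add_le _ _).trans (by
        rw [Complex.norm_real, Real.norm_eq_abs, abs_of_nonpos (by linarith [hx.2])]; linarith)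
  have f2 : ‖z + 1‖ ≤ q^2 + (1 + x) := by
    calc ‖z + 1‖ = ‖(z - x) + ((x + 1 : ℝ) : ℂ)‖ := by push_cast; ring_nf
      _ ≤ _ := (norm_add_le _ _).trans (by
        rw [Complex.norm_real, Real.norm_eq_abs, abs_of_nonneg (by linarith [hx.1])]; linarith)
  have g : (‖w‖^2 + 1) ≤ (2 + 2 * q^2) * ‖w‖ := by
    have : ‖z - 1‖ + ‖z + 1‖ = (‖w‖^2+1) / ‖w‖ := by
      rw [e1, e2]; field_simp; nlinarith
    rw [← div_le_iff₀ hwpos, ← this]; linarith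
  -- t = sqrt ‖w‖
  obtain ⟨t, ht0, htw⟩ : ∃ t : ℝ, 0 < t ∧ t ^ 2 = ‖w‖ :=
    ⟨Real.sqrt ‖w‖, Real.sqrt_pos.mpr hwpos, Real.sq_sqrt hwpos.le⟩
  have ht1 : t ≤ 1 := by nlinarith
  have g2 : (1 - t^2) ≤ 3/2 * q * t := by
    refine le_of_abs_le (abs_le_of_sq_le_sq ?_ (by positivity))
    rw [← htw] at g
    nlinarith [sq_nonneg (q*t)]
  have g3 : 1 ≤ (1 + 3/2 * q) * t := by nlinarith
  have g4 : 1 ≤ Real.exp (3 * q) * ‖w‖ := by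
    have : 1 + 3/2*q ≤ Real.exp (3/2*q) := by linarith [Real.add_one_le_exp (3/2*q)]
    have h5 : 1 ≤ Real.exp (3/2*q) * t := g3.trans (by gcongr)
    have : Real.exp (3*q) * ‖w‖ = (Real.exp (3/2*q) * t)^2 := by
      rw [mul_pow, htw, ← Real.exp_nat_mul]; congr 2; push_cast; ring
    rw [this]; exact one_le_pow₀ h5
  have g5 : 1 ≤ Real.exp (3 * q * n) * ‖w‖ ^ n := by
    have := one_le_pow₀ g4 (n := n)
    rw [mul_pow, ← Real.exp_nat_mul] at this
    rwa [mul_comm (3 * q) (n:ℝ)]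
  have hA := norm_nonneg (Polynomial.aeval z P)
  calc ‖Polynomial.aeval z P‖ ≤ ‖Polynomial.aeval z P‖ * (Real.exp (3 * q * n) * ‖w‖ ^ n) :=
        le_mul_of_one_le_right hA g5
    _ = Real.exp (3 * q * n) * (‖w‖ ^ n * ‖Polynomial.aeval z P‖) := by ring
    _ ≤ _ := mul_le_of_le_one_right (Real.exp_pos _).le hdisc

lemma iteratedDeriv_poly (p : Polynomial ℂ) (k : ℕ) :
    iteratedDeriv k (fun z => p.eval z) = fun z => (Polynomial.derivative^[k] p).eval z := by
  induction k with
  | zero => simp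
  | succ k ih =>
    rw [iteratedDeriv_succ, ih, Function.iterate_succ_apply']
    ext z; simp

lemma markov_type (n k : ℕ) (hn : 0 < n) (hk : 0 < k) (P : Polynomial ℝ) (hP : P.natDegree ≤ n)
    (hb : ∀ x ∈ Set.Icc (-1:ℝ) 1, |P.eval x| ≤ 1) (x : ℝ) (hx : x ∈ Set.Icc (-1:ℝ) 1) :
    |(Polynomial.derivative^[k] P).eval x| ≤ k.factorial * (Real.exp 3 * (n / k : ℝ)^2)^k := by
  have hn' : (0:ℝ) < n := by exact_mod_cast hn
  have hk' : (0:ℝ) < k := by exact_mod_cast hk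
  have hR : (0:ℝ) < ((k/n : ℝ))^2 := by positivity
  have := Complex.norm_iteratedDeriv_le_of_forall_mem_sphere_norm_le (c := (x:ℂ))
    (f := fun z => (P.map (algebraMap ℝ ℂ)).eval z) (C := Real.exp (3 * (k/n:ℝ) * n)) k hR
    (Polynomial.differentiable _).diffContOnCl (fun z hz => by
      rw [Polynomial.eval_map_algebraMap]
      exact bw_bound n P hP hb x hx _ (by positivity) z (by
        rw [mem_sphere_iff_norm] at hz; exact hz.le))
  rw [iteratedDeriv_poly] at this
  simp only at this
  rw [Polynomial.iterate_derivative_map, ← Complex.coe_algebraMap, Polynomial.eval_map_algebraMap,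
    Polynomial.aeval_algebraMap_apply] at this
  simp only [Complex.coe_algebraMap, Complex.norm_real, Polynomial.coe_aeval_eq_eval,
    Real.norm_eq_abs] at this
  refine this.trans (le_of_eq ?_)
  have h3 : (3 * (k/n:ℝ) * n) = k * 3 := by field_simp
  rw [h3, Real.exp_nat_mul, mul_div_assoc, mul_pow]
  congr 1
  rw [div_eq_mul_inv, ← inv_pow, ← inv_pow, inv_div]

lemma rolle_iter (k : ℕ) : ∀ (p : Polynomial ℝ) (a b : ℝ) (f : ℕ → ℝ),
    (∀ i < k, f i < f (i+1)) → (∀ i ≤ k, p.eval (f i) = 0 ∧ f i ∈ Icc a b) →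
    ∃ ξ ∈ Icc a b, (Polynomial.derivative^[k] p).eval ξ = 0 := by
  induction k with
  | zero => intro p a b f _ h; exact ⟨f 0, (h 0 le_rfl).2, (h 0 le_rfl).1⟩
  | succ k ih =>
    intro p a b f hf h
    have : ∀ i, ∃ c, i ≤ k → (c ∈ Ioo (f i) (f (i+1)) ∧ p.derivative.eval c = 0) := by
      intro i
      by_cases hi : i ≤ k
      · obtain ⟨c, hc, hc'⟩ := exists_deriv_eq_zero (f := fun x => p.eval x) (hf i (by omega))
          p.continuousOn (by simp only [(h i (by omega)).1, (h (i+1) (by omega)).1])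
        exact ⟨c, fun _ => ⟨hc, by simpa using hc'⟩⟩
      · exact ⟨0, fun h => absurd h hi⟩
    choose g hg using this
    obtain ⟨ξ, h1, h2⟩ := ih p.derivative a b g
      (fun i hi => (hg i (by omega)).1.2.trans (hg (i+1) (by omega)).1.1)
      (fun i hi => ⟨(hg i hi).2, (h i (by omega)).2.1.trans (hg i hi).1.1.le,
        (hg i hi).1.2.le.trans (h (i+1) (by omega)).2.2⟩)
    exact ⟨ξ, h1, by rwa [Function.iterate_succ_apply]⟩

lemma rolle_finset (k : ℕ) (p : Polynomial ℝ) (a b : ℝ) (S : Finset ℝ) (hS : S.card = k + 1)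
    (h : ∀ x ∈ S, p.eval x = 0 ∧ x ∈ Icc a b) :
    ∃ ξ ∈ Icc a b, (Polynomial.derivative^[k] p).eval ξ = 0 := by
  let e := S.orderEmbOfFin hS
  refine rolle_iter k p a b (fun i => if hi : i < k + 1 then e ⟨i, hi⟩ else 0) ?_ ?_
  · intro i hi
    have h1 : i < k + 1 := by omega
    have h2 : i + 1 < k + 1 := by omega
    simp only [h1, h2, dif_pos]
    exact e.strictMono (by simp)
  · intro i hi
    have h1 : i < k + 1 := by omega
    simp only [h1, dif_pos]
    exact h _ (S.orderEmbOfFin_mem hS _)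

lemma interp_error (k : ℕ) (P : Polynomial ℝ) (a b : ℝ) (v : ℕ → ℝ)
    (hv : Set.InjOn v (Finset.range k)) (hvI : ∀ i < k, v i ∈ Icc a b) (x : ℝ) (hx : x ∈ Icc a b)
    (B : ℝ) (hB : ∀ ξ ∈ Icc a b, |(Polynomial.derivative^[k] P).eval ξ| ≤ k.factorial * B) :
    |P.eval x - (Lagrange.interpolate (Finset.range k) v (fun i => P.eval (v i))).eval x|
      ≤ B * (b - a) ^ k := by
  have hab : 0 ≤ b - a := by linarith [hx.1, hx.2]
  have hB0 : 0 ≤ B := by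
    have := (abs_nonneg _).trans (hB x hx)
    exact (mul_nonneg_iff_of_pos_left (by positivity)).mp this
  set Q := Lagrange.interpolate (Finset.range k) v (fun i => P.eval (v i)) with hQ
  set N := Lagrange.nodal (Finset.range k) v with hN
  by_cases hxv : ∃ i < k, x = v i
  · obtain ⟨i, hi, rfl⟩ := hxv
    rw [hQ, Lagrange.eval_interpolate_at_node _ hv (Finset.mem_range.mpr hi), sub_self, abs_zero]
    positivity
  push Not at hxv
  have hNx : N.eval x ≠ 0 := Lagrange.eval_nodal_not_at_node (fun i hi =>
    hxv i (Finset.mem_range.mp hi))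
  set lam := (P.eval x - Q.eval x) / N.eval x with hlam
  obtain ⟨ξ, hξ, hz⟩ := rolle_finset k (P - Q - Polynomial.C lam * N) a b
    (insert x ((Finset.range k).image v)) (by
      rw [Finset.card_insert_of_notMem, Finset.card_image_of_injOn hv, Finset.card_range]
      simp only [Finset.mem_image, Finset.mem_range, not_exists, not_and]
      exact fun i hi h => hxv i hi h.symm) (by
      intro y hy
      rw [Finset.mem_insert, Finset.mem_image] at hy
      rcases hy with rfl | ⟨i, hi, rfl⟩
      · refine ⟨?_, hx⟩
        simp only [Polynomial.eval_sub, Polynomial.eval_mul, Polynomial.eval_C]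
        rw [hlam]; field_simp; ring
      · refine ⟨?_, hvI i (Finset.mem_range.mp hi)⟩
        simp only [Polynomial.eval_sub, Polynomial.eval_mul, Polynomial.eval_C]
        rw [hQ, hN, Lagrange.eval_interpolate_at_node _ hv hi, Lagrange.eval_nodal_at_node hi]
        ring)
  have hQk : Polynomial.derivative^[k] Q = 0 := by
    have : Q.degree < (k:ℕ) := by
      have h0 := Lagrange.degree_interpolate_lt (s := Finset.range k)
        (fun i => P.eval (v i)) hv
      rwa [Finset.card_range] at h0
    exact Polynomial.iterate_derivative_eq_zero_of_degree_lt this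
  have hNk : Polynomial.derivative^[k] N = Polynomial.C (k.factorial : ℝ) := by
    have h1 : N.natDegree = k := by simp [hN]
    have hm : N.Monic := Lagrange.nodal_monic
    have h2 := Polynomial.natDegree_iterate_derivative N k
    rw [h1, Nat.sub_self, Nat.le_zero] at h2
    rw [Polynomial.eq_C_of_natDegree_eq_zero h2, Polynomial.coeff_iterate_derivative, zero_add]
    have h3 : N.coeff k = 1 := by
      have := hm.coeff_natDegree
      rwa [h1] at this
    rw [h3, Nat.descFactorial_self]; simp
  rw [Polynomial.iterate_derivative_sub, Polynomial.iterate_derivative_sub, hQk,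
    Polynomial.iterate_derivative_C_mul, hNk] at hz
  simp at hz
  have h1 := hB ξ hξ
  have hfp : (0:ℝ) < k.factorial := by positivity
  have hl : |lam| ≤ B := by
    have : (Polynomial.derivative^[k] P).eval ξ = k.factorial * lam := by linarith
    rw [this, abs_mul, abs_of_pos hfp] at h1
    exact le_of_mul_le_mul_left h1 hfp
  have : P.eval x - Q.eval x = lam * N.eval x := by rw [hlam]; field_simp
  rw [this, abs_mul]
  gcongr
  rw [hN, Lagrange.eval_nodal, Finset.abs_prod]
  calc _ ≤ ∏ i ∈ Finset.range k, (b - a) := Finset.prod_le_prod (fun _ _ => abs_nonneg _)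
        (fun i hi => by
          have := hvI i (Finset.mem_range.mp hi)
          rw [abs_le]; constructor <;> linarith [this.1, this.2, hx.1, hx.2])
    _ = _ := by simp

lemma spaced_points (h : ℝ) (hh : 0 < h) (k : ℕ) : ∀ (E : Set ℝ) (a b : ℝ), E ⊆ Icc a b →
    (k : ℝ) * h < (volume E).toReal →
    ∃ v : ℕ → ℝ, (∀ i ≤ k, v i ∈ E) ∧ ∀ i < k, v i + h ≤ v (i+1) := by
  induction k with
  | zero =>
    intro E a b _ hv
    have : E.Nonempty := by
      rw [Set.nonempty_iff_ne_empty]; rintro rfl; simp at hv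
    obtain ⟨x, hx⟩ := this
    exact ⟨fun _ => x, fun _ _ => hx, by simp⟩
  | succ k ih =>
    intro E a b hE hv
    have hne : E.Nonempty := by
      rw [Set.nonempty_iff_ne_empty]; rintro rfl; simp at hv
      have : (0:ℝ) < (k+1)*h := by positivity
      linarith
    have hbd : BddBelow E := ⟨a, fun x hx => (hE hx).1⟩
    set η := ((volume E).toReal - (k+1:ℕ) * h) with hη
    have hη0 : 0 < η := by rw [hη]; linarith
    obtain ⟨x, hxE, hx⟩ := exists_lt_of_csInf_lt hne (show sInf E < sInf E + η / 2 by linarith)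
    have hsub : E ⊆ Icc (sInf E) (x + h) ∪ (E ∩ Ici (x + h)) := by
      intro y hy
      by_cases hyx : y ≤ x + h
      · exact Or.inl ⟨csInf_le hbd hy, hyx⟩
      · exact Or.inr ⟨hy, (not_le.mp hyx).le⟩
    have hfin : volume (E ∩ Ici (x + h)) ≠ ⊤ :=
      ne_top_of_le_ne_top (by simp) (measure_mono (inter_subset_left.trans hE) :
        _ ≤ volume (Icc a b))
    have hm : (volume E).toReal ≤ (x + h - sInf E) + (volume (E ∩ Ici (x + h))).toReal := by
      have h1 := (measure_mono (μ := volume) hsub).trans (measure_union_le _ _)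
      have h2 := ENNReal.toReal_mono (by simp [hfin]) h1
      rw [ENNReal.toReal_add (by simp) hfin, Real.volume_Icc, ENNReal.toReal_ofReal] at h2
      · exact h2
      · linarith [csInf_le hbd hxE]
    obtain ⟨v, hv1, hv2⟩ := ih (E ∩ Ici (x + h)) a b (inter_subset_left.trans hE) (by
      push_cast at hη; linarith)
    refine ⟨fun i => if i = 0 then x else v (i - 1), ?_, ?_⟩
    · intro i hi
      rcases i with _ | i
      · simpa using hxE
      · simpa using (hv1 i (by omega)).1
    · intro i hi
      rcases i with _ | i
      · simpa using (hv1 0 (by omega)).2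
      · simpa using hv2 i (by omega)

lemma spaced_far (h : ℝ) (k : ℕ) (v : ℕ → ℝ) (hv : ∀ i < k, v i + h ≤ v (i+1)) (i j : ℕ)
    (hij : i ≤ j) (hj : j ≤ k) : ((j:ℝ) - i) * h ≤ v j - v i := by
  induction j, hij using Nat.le_induction with
  | base => simp
  | succ j hij ih =>
    have := ih (by omega)
    have := hv j (by omega)
    push_cast; linarith

lemma prod_dist (k i : ℕ) (hi : i ≤ k) :
    ∏ j ∈ (Finset.range (k+1)).erase i, |(i:ℝ) - j| = i.factorial * (k - i).factorial := by
  have hset : (Finset.range (k+1)).erase i = Finset.range i ∪ Finset.Ico (i+1) (k+1) := by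
    ext j; simp; omega
  have hdis : Disjoint (Finset.range i) (Finset.Ico (i+1) (k+1)) := by
    rw [Finset.disjoint_left]; intro j; simp; omega
  rw [hset, Finset.prod_union hdis]
  congr 1
  · rw [← Finset.prod_range_reflect, ← Finset.prod_range_add_one_eq_factorial]
    push_cast
    refine Finset.prod_congr rfl fun j hj => ?_
    have : j < i := Finset.mem_range.mp hj
    have h2 : i - 1 - j = i - (j+1) := by omega
    rw [h2, Nat.cast_sub (by omega)]
    push_cast
    rw [abs_of_nonneg] <;> ring_nf; positivity
  · rw [Finset.prod_Ico_eq_prod_range, ← Finset.prod_range_add_one_eq_factorial]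
    have h2 : k + 1 - (i+1) = k - i := by omega
    rw [h2]; push_cast
    refine Finset.prod_congr rfl fun j hj => ?_
    rw [abs_of_nonpos] <;> ring_nf; linarith [(Nat.cast_nonneg j : (0:ℝ) ≤ j)]

/-- Lagrange bound, with `k+1` nodes. -/
lemma lagrange_bound (k : ℕ) (v : ℕ → ℝ) (a b h A : ℝ) (hh : 0 < h)
    (hv : ∀ i < k, v i + h ≤ v (i+1)) (hvI : ∀ i ≤ k, v i ∈ Icc a b) (r : ℕ → ℝ)
    (hr : ∀ i ≤ k, |r i| ≤ A) (x : ℝ) (hx : x ∈ Icc a b) :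
    |(Lagrange.interpolate (Finset.range (k+1)) v r).eval x|
      ≤ A * ((2 * (b - a) / h) ^ k / k.factorial) := by
  have hab : 0 ≤ b - a := by linarith [hx.1, hx.2]
  have hbasis : ∀ i ∈ Finset.range (k+1), |(Lagrange.basis (Finset.range (k+1)) v i).eval x| ≤
      ((b-a)/h)^k / (i.factorial * (k-i).factorial) := by
    intro i hi
    have hik : i ≤ k := Nat.lt_succ_iff.mp (Finset.mem_range.mp hi)
    rw [Lagrange.basis, Polynomial.eval_prod, Finset.abs_prod, ← prod_dist k i hik]
    have hcard : ((Finset.range (k+1)).erase i).card = k := by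
      rw [Finset.card_erase_of_mem hi]; simp
    have : ((b-a)/h)^k = ∏ j ∈ (Finset.range (k+1)).erase i, ((b-a)/h) := by
      rw [Finset.prod_const, hcard]
    rw [this, ← Finset.prod_div_distrib]
    refine Finset.prod_le_prod (fun _ _ => abs_nonneg _) fun j hj => ?_
    rw [Finset.mem_erase, Finset.mem_range] at hj
    have hjk : j ≤ k := by omega
    have hd : |(i:ℝ) - j| * h ≤ |v i - v j| := by
      rcases le_total i j with hij | hij
      · have := spaced_far h k v hv i j hij hjk
        have hc : (i:ℝ) ≤ j := by exact_mod_cast hij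
        rw [abs_of_nonpos (by linarith)]
        exact le_trans (by linarith) (neg_le_abs _)
      · have := spaced_far h k v hv j i hij hik
        have hc : (j:ℝ) ≤ i := by exact_mod_cast hij
        rw [abs_of_nonneg (by linarith)]
        exact le_trans (by linarith) (le_abs_self _)
    have hpos : 0 < |(i:ℝ) - j| := by
      rw [abs_pos, sub_ne_zero]; exact_mod_cast hj.1.symm
    simp only [Lagrange.basisDivisor, Polynomial.eval_mul, Polynomial.eval_C, Polynomial.eval_sub,
      Polynomial.eval_X, abs_mul, abs_inv]
    rw [div_div, inv_mul_eq_div]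
    apply div_le_div₀ hab _ (by positivity) (by linarith)
    have h1 := hvI j hjk
    rw [abs_le]; constructor <;> linarith [h1.1, h1.2, hx.1, hx.2]
  have hA : 0 ≤ A := (abs_nonneg _).trans (hr 0 (by omega))
  rw [Lagrange.interpolate_apply, Polynomial.eval_finsetSum]
  calc _ ≤ ∑ i ∈ Finset.range (k+1), A * (((b-a)/h)^k / (i.factorial * (k-i).factorial)) := by
        refine (Finset.abs_sum_le_sum_abs _ _).trans (Finset.sum_le_sum fun i hi => ?_)
        rw [Polynomial.eval_mul, Polynomial.eval_C, abs_mul]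
        exact mul_le_mul (hr i (Nat.lt_succ_iff.mp (Finset.mem_range.mp hi))) (hbasis i hi)
          (abs_nonneg _) hA
    _ = ∑ i ∈ Finset.range (k+1), A * (((b-a)/h)^k / k.factorial) * (k.choose i : ℝ) := by
        refine Finset.sum_congr rfl fun i hi => ?_
        have hik : i ≤ k := Nat.lt_succ_iff.mp (Finset.mem_range.mp hi)
        rw [Nat.cast_choose ℝ hik]
        field_simp
    _ = _ := by
        rw [← Finset.mul_sum, ← Nat.cast_sum, Nat.sum_range_choose]
        push_cast
        rw [mul_div_assoc 2 (b-a) h, mul_pow 2]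
        ring

lemma factorial_bound (p : ℕ) :
    (2:ℝ) ^ p * (p + 1) ^ p / p.factorial ≤ Real.exp 3 ^ p := by
  rcases Nat.eq_zero_or_pos p with rfl | hp
  · simp
  have hp' : (1:ℝ) ≤ p := by exact_mod_cast hp
  have h1 : ((p:ℝ) + 1) ^ p / p.factorial ≤ Real.exp (p + 1) :=
    Real.pow_div_factorial_le_exp _ (by positivity) p
  have h2 : (2:ℝ) ^ p ≤ Real.exp p := by
    have : (2:ℝ) ≤ Real.exp 1 := by linarith [Real.add_one_le_exp (1:ℝ)]
    calc (2:ℝ)^p ≤ Real.exp 1 ^ p := by gcongr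
      _ = Real.exp p := by rw [← Real.exp_nat_mul, mul_one]
  rw [mul_div_assoc]
  calc _ ≤ Real.exp p * Real.exp (p+1) := by gcongr
    _ = Real.exp (2 * p + 1) := by rw [← Real.exp_add]; ring_nf
    _ ≤ Real.exp (p * 3) := Real.exp_le_exp.mpr (by linarith)
    _ = _ := Real.exp_nat_mul _ _

lemma core_bound (n : ℕ) (hn : 0 < n) (P : Polynomial ℝ) (hP : P.natDegree ≤ n)
    (hb : ∀ x ∈ Set.Icc (-1:ℝ) 1, |P.eval x| ≤ 1) (E : Set ℝ) (a b A : ℝ)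
    (hE : E ⊆ Icc a b) (hI : Icc a b ⊆ Icc (-1:ℝ) 1) (hm : 0 < (volume E).toReal)
    (hA : ∀ x ∈ E, |P.eval x| ≤ A) (p : ℕ) (x : ℝ) (hx : x ∈ Icc a b) :
    |P.eval x| ≤ A * (Real.exp 3 * (b - a) / (volume E).toReal) ^ p
      + (Real.exp 3 * (n / (p + 1) : ℝ) ^ 2 * (b - a)) ^ (p + 1) := by
  set m := (volume E).toReal with hmdef
  have hab : 0 ≤ b - a := by linarith [hx.1, hx.2]
  have hh : 0 < m / (p + 1) := by positivity
  obtain ⟨v, hvE, hvs⟩ := spaced_points (m / (p+1)) hh p E a b hE (by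
    rw [← hmdef, mul_div_assoc', div_lt_iff₀ (by positivity)]; nlinarith)
  have hA0 : 0 ≤ A := (abs_nonneg _).trans (hA _ (hvE 0 (by omega)))
  have hinj : Set.InjOn v (Finset.range (p+1)) := by
    have key : ∀ i j : ℕ, i < j → j ≤ p → v i ≠ v j := by
      intro i j hij hj
      have h1 := spaced_far _ p v hvs i j hij.le hj
      have h2 : (0:ℝ) < (j:ℝ) - i := by
        have : (i:ℝ) < j := by exact_mod_cast hij
        linarith
      have := mul_pos h2 hh
      intro h; rw [h] at h1; linarith
    intro i hi j hj hij
    simp only [Finset.coe_range, mem_Iio] at hi hj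
    rcases lt_trichotomy i j with h | h | h
    · exact absurd hij (key i j h (by omega))
    · exact h
    · exact absurd hij.symm (key j i h (by omega))
  have h1 := lagrange_bound p v a b _ A hh hvs (fun i hi => hE (hvE i hi))
    (fun i => P.eval (v i)) (fun i hi => hA _ (hvE i hi)) x hx
  have h2 := interp_error (p+1) P a b v hinj (fun i hi => hE (hvE i (by omega))) x hx _
    (fun ξ hξ => markov_type n (p+1) hn (by omega) P hP hb ξ (hI hξ))
  push_cast at h2
  rw [← mul_pow] at h2
  have h3 : (2 * (b - a) / (m / (p+1))) ^ p / p.factorial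
      ≤ (Real.exp 3 * (b - a) / m) ^ p := by
    have e1 : (2 * (b - a) / (m / (p+1))) ^ p / p.factorial
      = (2 ^ p * ((p:ℝ)+1)^p / p.factorial) * ((b - a) / m) ^ p := by
      rw [← mul_pow, div_mul_eq_mul_div, ← mul_pow]; congr 2; field_simp
    have e2 : (Real.exp 3 * (b - a) / m) ^ p = Real.exp 3 ^ p * ((b - a) / m) ^ p := by
      rw [← mul_pow, mul_div_assoc]
    rw [e1, e2]
    gcongr
    exact factorial_bound p
  have h4 := h1.trans (mul_le_mul_of_nonneg_left h3 hA0)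
  set q := Polynomial.eval x (Lagrange.interpolate (Finset.range (p+1)) v fun i => P.eval (v i))
  calc |P.eval x| = |q + (P.eval x - q)| := by ring_nf
    _ ≤ _ := (abs_add_le _ _).trans (add_le_add h4 h2)

lemma exists_threshold (ε K δ₀ : ℝ) (hε : 0 < ε) (hδ : 0 < δ₀) :
    ∃ L₀ : ℝ, ∀ L, L₀ ≤ L → 0 < L ∧ 1 ≤ (L + 3) * 2 / (ε * δ₀) ∧
      K + 2 * Real.log ((L + 3) * 2 / (ε * δ₀)) ≤ ε / 2 * L := by
  have hM : Filter.Tendsto (fun L : ℝ => (L + 3) * 2 / (ε * δ₀)) Filter.atTop Filter.atTop :=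
    ((Filter.tendsto_atTop_add_const_right _ 3 Filter.tendsto_id).atTop_mul_const
      two_pos).atTop_div_const (by positivity)
  have hη : 0 < ε ^ 2 * δ₀ / 16 := by positivity
  have h1 : ∀ᶠ y : ℝ in Filter.atTop, ‖Real.log y‖ ≤ (ε^2*δ₀/16) * ‖y‖ :=
    Real.isLittleO_log_id_atTop.def hη
  have h2 := hM.eventually h1
  obtain ⟨L₀, hL⟩ := Filter.eventually_atTop.mp ((h2.and (hM.eventually_ge_atTop 1)).and
    ((Filter.eventually_gt_atTop 0).and (Filter.eventually_ge_atTop ((K + 3*ε/4) * (4/ε)))))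
  refine ⟨L₀, fun L h => ?_⟩
  obtain ⟨⟨g1, g2⟩, g3, g4⟩ := hL L h
  refine ⟨g3, g2, ?_⟩
  have g5 : Real.log ((L + 3) * 2 / (ε * δ₀)) ≤ ε / 8 * (L + 3) := by
    refine (le_abs_self _).trans (g1.trans (le_of_eq ?_))
    rw [Real.norm_eq_abs, abs_of_nonneg (by linarith)]
    field_simp; norm_num
  have g6 : K + 3*ε/4 ≤ ε/4 * L := by
    have := mul_le_mul_of_nonneg_left g4 (show 0 ≤ ε/4 by positivity)
    have e : ε/4 * ((K + 3*ε/4) * (4/ε)) = K + 3*ε/4 := by field_simp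
    linarith
  linarith

set_option maxHeartbeats 1000000 in
/-- The numerical heart of the argument. -/
lemma numeric (ε δ₀ γ H L δ c s ℓ m : ℝ) (n : ℕ) (hn : 0 < n) (hε : 0 < ε) (hδ₀ : 0 < δ₀)
    (hγ : γ = ε / 2 * (ε * δ₀)) (hH : Real.exp (-H) = 1 - Real.exp (-γ)) (hH0 : 0 ≤ H)
    (hδ : δ₀ ≤ δ) (hc0 : 0 < c) (hc : ε < 1 - c) (hs : c + ε ≤ s) (hs1 : s < 1)
    (hL : 0 < L) (hM : 1 ≤ (L + 3) * 2 / (ε * δ₀))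
    (hK : (6 + H) + 2 * Real.log ((L + 3) * 2 / (ε * δ₀)) ≤ ε / 2 * L)
    (hm : m = Real.exp (-L)) (hℓ0 : 0 ≤ ℓ) (hℓ : ℓ ≤ Real.exp (-(s * L))) :
    ∃ p : ℕ, Real.exp (-δ * n) * (Real.exp 3 * ℓ / m) ^ p
      + (Real.exp 3 * (n / (p + 1) : ℝ) ^ 2 * ℓ) ^ (p + 1) ≤ Real.exp (-c * δ * n) := by
  have hn' : (1:ℝ) ≤ n := by exact_mod_cast hn
  have hδp : 0 < δ := by linarith
  set M := (L + 3) * 2 / (ε * δ₀) with hMdef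
  set D := 3 + (1 - s) * L with hD
  have hDpos : 0 < D := by have := mul_pos (sub_pos.mpr hs1) hL; linarith
  have hDle : D ≤ L + 3 := by nlinarith
  have hδn : δ₀ ≤ δ * n := by nlinarith
  have hγle : γ ≤ ε / 2 * ((1 - c) * (δ * n)) := by
    have h1c : 0 ≤ 1 - c := by linarith
    rw [hγ]; gcongr
  set A := ((1 - c) * (δ * n) - γ) / D with hA
  have hAlow : (1 - ε / 2) * ((1 - c) * (δ * n)) / D ≤ A := by
    rw [hA]; gcongr; linarith
  have hpp : 0 < (1 - c) * (δ * n) := mul_pos (by linarith) (by linarith)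
  have hA0 : 0 ≤ A := le_trans (div_nonneg (mul_nonneg (by linarith) hpp.le) hDpos.le) hAlow
  refine ⟨⌊A⌋₊, ?_⟩
  set p := ⌊A⌋₊
  have hp1 : (p:ℝ) ≤ A := Nat.floor_le hA0
  have hp2 : A < p + 1 := Nat.lt_floor_add_one A
  have hk : 0 < (p:ℝ) + 1 := by positivity
  -- first term
  have t1 : Real.exp (-δ * n) * (Real.exp 3 * ℓ / m) ^ p
      ≤ Real.exp (-c * δ * n) * Real.exp (-γ) := by
    have h1 : Real.exp 3 * ℓ / m ≤ Real.exp D := by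
      rw [hm, div_le_iff₀ (Real.exp_pos _), ← Real.exp_add]
      calc _ ≤ Real.exp 3 * Real.exp (-(s*L)) := by gcongr
        _ = _ := by rw [← Real.exp_add]; congr 1; rw [hD]; ring
    have h0 : 0 ≤ Real.exp 3 * ℓ / m := by rw [hm]; positivity
    calc _ ≤ Real.exp (-δ * n) * Real.exp D ^ p := by gcongr
      _ = Real.exp (-δ * n + p * D) := by rw [← Real.exp_nat_mul, ← Real.exp_add]
      _ ≤ Real.exp (-c * δ * n + -γ) := by
        apply Real.exp_le_exp.mpr
        have : p * D ≤ (1 - c) * (δ * n) - γ := by rwa [hA, le_div_iff₀ hDpos] at hp1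
        linarith
      _ = _ := Real.exp_add _ _
  -- second term
  have hnM : (n:ℝ) / (p + 1) ≤ M := by
    rw [div_le_iff₀ hk]
    have h1 : (1 - ε / 2) * ((1 - c) * (δ * n)) ≤ (p + 1) * D := by
      rw [← div_le_iff₀ hDpos]; linarith
    have h2 : ε / 2 * δ₀ * n ≤ (1 - ε / 2) * ((1 - c) * (δ * n)) := by
      have : ε * δ₀ ≤ (1 - c) * δ := mul_le_mul hc.le hδ hδ₀.le (by linarith)
      have h5 : (1:ℝ)/2 ≤ 1 - ε/2 := by linarith
      have h6 := mul_le_mul h5 this (by positivity) (by linarith)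
      have := mul_le_mul_of_nonneg_right h6 (by positivity : (0:ℝ) ≤ n)
      linarith
    have h3 : (p + 1) * D ≤ (p+1) * (L + 3) := by gcongr
    have h4 : M * (p+1) = ((p + 1) * (L + 3)) / (ε / 2 * δ₀) := by rw [hMdef]; field_simp
    rw [h4, le_div_iff₀ (by positivity)]
    linarith
  have hlogM : 0 ≤ Real.log M := Real.log_nonneg hM
  set X := s * L - 3 - 2 * Real.log M - H with hX
  have hεL : 0 < ε * L := by positivity
  have hsL : (c + ε) * L ≤ s * L := by gcongr
  have hcL : 0 < c * L := by positivity
  have hX0 : 0 ≤ X := by linarith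
  have hsL1 : s * L ≤ L := mul_le_of_le_one_left hL.le hs1.le
  have hXL : X ≤ L := by linarith
  have hkey : c * (δ * n) ≤ (p + 1) * X := by
    have h1 : (1 - ε / 2) * ((1 - c) * (δ * n)) / D * X ≤ (p + 1) * X :=
      mul_le_mul_of_nonneg_right (by linarith) hX0
    refine le_trans ?_ h1
    rw [div_mul_eq_mul_div, le_div_iff₀ hDpos]
    have h2 : c * D ≤ (1 - ε/2) * (1 - c) * X := by
      have e1 : ε / 2 * (1 - c) * X ≤ ε / 2 * L := by
        have e0 : (1 - c) * X ≤ L := (mul_le_of_le_one_left hX0 (by linarith)).trans hXL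
        have := mul_le_mul_of_nonneg_left e0 (show 0 ≤ ε / 2 by positivity)
        linarith
      have e2 : (1 - c) * (3 + 2 * Real.log M + H) ≤ 3 + 2 * Real.log M + H :=
        mul_le_of_le_one_left (by linarith) (by linarith)
      have e3 : c * D = 3 * c + c * L - c * s * L := by rw [hD]; ring
      have e4 : (1 - c) * X = s * L - c * s * L - (1 - c) * (3 + 2 * Real.log M + H) := by
        rw [hX]; ring
      linarith
    have := mul_le_mul_of_nonneg_right h2 (show 0 ≤ δ * n by linarith)
    linarith
  have t2 : (Real.exp 3 * (n / (p + 1) : ℝ) ^ 2 * ℓ) ^ (p + 1)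
      ≤ Real.exp (-c * δ * n) * Real.exp (-H) := by
    have hMpos : 0 < M := by linarith
    have h1 : Real.exp 3 * (n / (p + 1) : ℝ) ^ 2 * ℓ ≤ Real.exp (-(X + H)) := by
      calc _ ≤ Real.exp 3 * M ^ 2 * Real.exp (-(s*L)) := by gcongr
        _ = Real.exp 3 * Real.exp (2 * Real.log M) * Real.exp (-(s*L)) := by
            congr 2
            rw [show (2:ℝ) * Real.log M = ((2:ℕ):ℝ) * Real.log M by norm_num, Real.exp_nat_mul,
              Real.exp_log hMpos]
        _ = _ := by rw [← Real.exp_add, ← Real.exp_add]; congr 1; rw [hX]; ring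
    calc _ ≤ Real.exp (-(X + H)) ^ (p + 1) := by gcongr
      _ = Real.exp (((p + 1 : ℕ):ℝ) * (-(X + H))) := by rw [← Real.exp_nat_mul]
      _ ≤ Real.exp (-c * δ * n + -H) := by
        apply Real.exp_le_exp.mpr
        push_cast
        have : 0 ≤ (p:ℝ) * H := by positivity
        linarith
      _ = _ := Real.exp_add _ _
  rw [hH] at t2
  linarith

theorem polynomial_spreading_lemma :
    ∀ δ₀ : ℝ, 0 < δ₀ → ∀ c₀ : ℝ, 0 < c₀ → c₀ < 1 → ∀ ε : ℝ, 0 < ε →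
    ∃ κ : ℝ, 0 < κ ∧
      ∀ n : ℕ, 0 < n → ∀ P : Polynomial ℝ, P.natDegree ≤ n →
      (∀ x ∈ Set.Icc (-1:ℝ) 1, |P.eval x| ≤ 1) →
      ∀ δ : ℝ, δ₀ ≤ δ → ∀ c : ℝ, c₀ ≤ c → c < 1 → ε < (1 - c) / (2 - c) →
      ∀ E : Set ℝ, MeasurableSet E → E ⊆ Set.Icc (-1:ℝ) 1 →
        0 < (volume E).toReal → (volume E).toReal < κ →
        (∀ x ∈ E, |P.eval x| ≤ Real.exp (-δ * n)) →
      ∀ a b : ℝ, E ⊆ Set.Icc a b → Set.Icc a b ⊆ Set.Icc (-1:ℝ) 1 →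
        b - a ≤ ((volume E).toReal) ^ (1 / (2 - c) + ε) →
      ∀ x ∈ Set.Icc a b, |P.eval x| ≤ Real.exp (-c * δ * n) := by
  intro δ₀ hδ₀ c₀ hc₀ hc₀1 ε hε
  set γ := ε / 2 * (ε * δ₀) with hγ
  have hγ0 : 0 < γ := by positivity
  have hη : 0 < 1 - Real.exp (-γ) := by
    have : Real.exp (-γ) < 1 := by
      rw [← Real.exp_zero]; exact Real.exp_lt_exp.mpr (by linarith)
    linarith
  set H := -Real.log (1 - Real.exp (-γ)) with hHdef
  have hH : Real.exp (-H) = 1 - Real.exp (-γ) := by rw [hHdef, neg_neg, Real.exp_log hη]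
  have hH0 : 0 ≤ H := by
    have := Real.log_nonpos hη.le (by linarith [Real.exp_pos (-γ)])
    linarith
  obtain ⟨L₀, hL₀⟩ := exists_threshold ε (6 + H) δ₀ hε hδ₀
  refine ⟨Real.exp (-L₀), Real.exp_pos _, ?_⟩
  intro n hn P hP hb δ hδ c hc hc1 hεc E _ _ hm hmκ hA a b hE hI hab x hx
  set m := (volume E).toReal with hmdef
  have hmL : m = Real.exp (-(-Real.log m)) := by rw [neg_neg, Real.exp_log hm]
  obtain ⟨g1, g2, g3⟩ := hL₀ (-Real.log m) (by
    have := Real.log_lt_log hm hmκ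
    rw [Real.log_exp] at this; linarith)
  have h2c : 0 < 2 - c := by linarith
  have hεc' : ε < 1 - c := hεc.trans_le (div_le_self (by linarith) (by linarith))
  have hs : c + ε ≤ 1 / (2 - c) + ε := by
    have : c ≤ 1 / (2 - c) := by rw [le_div_iff₀ h2c]; nlinarith [sq_nonneg (1 - c)]
    linarith
  have hs1 : 1 / (2 - c) + ε < 1 := by
    have : 1 / (2 - c) + (1 - c) / (2 - c) = 1 := by field_simp; ring
    linarith
  obtain ⟨p, hp⟩ := numeric ε δ₀ γ H (-Real.log m) δ c (1 / (2 - c) + ε) (b - a) m n hn hε hδ₀ hγ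
    hH hH0 hδ (by linarith) hεc' hs hs1 g1 g2 g3 hmL (by linarith [hx.1, hx.2])
    (hab.trans (le_of_eq (by rw [Real.rpow_def_of_pos hm]; congr 1; ring)))
  exact (core_bound n hn P hP hb E a b _ hE hI hm hA p x hx).trans hp
end

section
/- Let n be a positive integer, let P be a real polynomial of degree ≤ n with sup_{x∈[-1,1]} |P(x)| ≤ 1, let δ > 0, let E ⊂ [-1,1] be a measurable set with |E| > 0 such that sup_{x∈E} |P(x)| ≤ e^{-δ n}, let I be an interval with E ⊂ I ⊂ [-1,1], and set η = |I|/|E|. Then for every integer k ≥ 0, sup_{x∈I} |P(x)| ≤ (4η)^k · ( e^{-δ n} + ( e |I| n² / (k+1)² )^{k+1} ). -/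
open MeasureTheory Set

theorem pse_rolle_seq (a b : ℝ) (k : ℕ) : ∀ (g : Polynomial ℝ) (z : ℕ → ℝ),
    (∀ i < k, z i < z (i+1)) → (∀ i ≤ k, z i ∈ Set.Icc a b) → (∀ i ≤ k, g.eval (z i) = 0) →
    ∃ ξ ∈ Set.Icc a b, (Polynomial.derivative^[k] g).eval ξ = 0 := by
  induction k with
  | zero => intro g z _ h2 h3; exact ⟨z 0, h2 0 le_rfl, by simpa using h3 0 le_rfl⟩
  | succ k ih =>
    intro g z h1 h2 h3
    have H : ∀ i, ∃ w, i ≤ k → (w ∈ Set.Ioo (z i) (z (i+1)) ∧ g.derivative.eval w = 0) := by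
      intro i
      by_cases hi : i ≤ k
      · obtain ⟨c, hc, hc'⟩ := exists_deriv_eq_zero (f := fun x => g.eval x) (h1 i (by omega))
          g.continuous.continuousOn (by rw [h3 i (by omega), h3 (i+1) (by omega)])
        exact ⟨c, fun _ => ⟨hc, by simpa using hc'⟩⟩
      · exact ⟨0, fun h => absurd h hi⟩
    choose w hw using H
    obtain ⟨ξ, hξ, h⟩ := ih g.derivative w
      (fun i hi => (hw i (by omega)).1.2.trans (hw (i+1) (by omega)).1.1)
      (fun i hi => ⟨(h2 i (by omega)).1.trans (hw i hi).1.1.le,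
        (hw i hi).1.2.le.trans (h2 (i+1) (by omega)).2⟩)
      (fun i hi => (hw i hi).2)
    exact ⟨ξ, hξ, by rw [Function.iterate_succ_apply]; exact h⟩

theorem pse_rolle (a b : ℝ) (k : ℕ) (g : Polynomial ℝ) (s : Finset ℝ) (hs : s.card = k + 1)
    (h2 : ∀ z ∈ s, z ∈ Set.Icc a b) (h3 : ∀ z ∈ s, g.eval z = 0) :
    ∃ ξ ∈ Set.Icc a b, (Polynomial.derivative^[k] g).eval ξ = 0 := by
  have key : ∀ i (h : i < k+1), (if h : i < k+1 then s.orderEmbOfFin hs ⟨i, h⟩ else 0)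
      = s.orderEmbOfFin hs ⟨i, h⟩ := fun i h => by simp [h]
  refine pse_rolle_seq a b k g (fun i => if h : i < k+1 then s.orderEmbOfFin hs ⟨i, h⟩ else 0)
    ?_ ?_ ?_
  · intro i hi
    rw [key i (by omega), key (i+1) (by omega)]
    exact (s.orderEmbOfFin hs).strictMono (by simp)
  · intro i hi
    rw [key i (by omega)]
    exact h2 _ (s.orderEmbOfFin_mem hs _)
  · intro i hi
    rw [key i (by omega)]
    exact h3 _ (s.orderEmbOfFin_mem hs _)

/-- interpolation error -/
theorem pse_interp (a b : ℝ) (k : ℕ) (P : Polynomial ℝ) (v : ℕ → ℝ)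
    (hv : Set.InjOn v (Finset.range (k+1))) (hm : ∀ i ∈ Finset.range (k+1), v i ∈ Set.Icc a b)
    (M : ℝ) (hM : ∀ y ∈ Set.Icc a b, |(Polynomial.derivative^[k+1] P).eval y| ≤ M)
    (x : ℝ) (hx : x ∈ Set.Icc a b) :
    |P.eval x - (Lagrange.interpolate (Finset.range (k+1)) v (fun i => P.eval (v i))).eval x|
      ≤ (b - a)^(k+1) * M / (k+1).factorial := by
  set s := Finset.range (k+1) with hs
  set Q := Lagrange.interpolate s v (fun i => P.eval (v i)) with hQ
  have hM0 : 0 ≤ M := (abs_nonneg _).trans (hM x hx)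
  have hab : a ≤ b := hx.1.trans hx.2
  have hba : 0 ≤ b - a := by linarith
  have hnode : ∀ i ∈ s, Q.eval (v i) = P.eval (v i) := fun i hi =>
    Lagrange.eval_interpolate_at_node (fun i => P.eval (v i)) hv hi
  by_cases hxn : ∃ i ∈ s, x = v i
  · obtain ⟨i, hi, rfl⟩ := hxn
    rw [hnode i hi, sub_self, abs_zero]; positivity
  · push Not at hxn
    set N := Lagrange.nodal s v with hN
    have hNx : N.eval x ≠ 0 := Lagrange.eval_nodal_not_at_node hxn
    set c := (P.eval x - Q.eval x) / N.eval x with hc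
    have hcN : P.eval x - Q.eval x = c * N.eval x := by rw [hc]; field_simp
    set g := P - Q - Polynomial.C c * N with hg
    have hxs : x ∉ s.image v := by
      intro h
      obtain ⟨i, hi, h⟩ := Finset.mem_image.mp h
      exact hxn i hi h.symm
    obtain ⟨ξ, hξ, h0⟩ := pse_rolle a b (k+1) g (insert x (s.image v))
      (by rw [Finset.card_insert_of_notMem hxs, Finset.card_image_of_injOn hv, hs, Finset.card_range])
      (by
        intro z hz
        rcases Finset.mem_insert.mp hz with rfl | hz
        · exact hx
        · obtain ⟨i, hi, rfl⟩ := Finset.mem_image.mp hz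
          exact hm i hi)
      (by
        intro z hz
        rcases Finset.mem_insert.mp hz with rfl | hz
        · simp only [hg, Polynomial.eval_sub, Polynomial.eval_mul, Polynomial.eval_C]; linarith
        · obtain ⟨i, hi, rfl⟩ := Finset.mem_image.mp hz
          simp only [hg, Polynomial.eval_sub, Polynomial.eval_mul, Polynomial.eval_C]
          rw [hnode i hi, hN, Lagrange.eval_nodal_at_node hi]; ring)
    have hQd : Polynomial.derivative^[k+1] Q = 0 := by
      apply Polynomial.iterate_derivative_eq_zero_of_degree_lt
      have := Lagrange.degree_interpolate_lt (fun i => P.eval (v i)) hv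
      rw [hs, Finset.card_range] at this
      rw [hQ, hs]
      exact this
    have hNd : Polynomial.derivative^[k+1] N = Polynomial.C ((k+1).factorial : ℝ) := by
      have h1 : N.natDegree = k+1 := by simp [hN, hs]
      have h2 : N.coeff (k+1) = 1 := by
        have := (Lagrange.nodal_monic (s := s) (v := v)).coeff_natDegree
        rwa [← hN, h1] at this
      have h3 : (Polynomial.derivative^[k+1] N).natDegree ≤ 0 := by
        have := Polynomial.natDegree_iterate_derivative N (k+1)
        omega
      rw [Polynomial.eq_C_of_natDegree_le_zero h3, Polynomial.coeff_iterate_derivative]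
      rw [zero_add, Nat.descFactorial_self, h2]
      simp
    have hh : (Polynomial.derivative^[k+1] P).eval ξ = c * (k+1).factorial := by
      rw [hg, Polynomial.iterate_derivative_sub, Polynomial.iterate_derivative_sub, hQd,
        Polynomial.iterate_derivative_C_mul, hNd] at h0
      simp only [Polynomial.eval_sub, Polynomial.eval_mul, Polynomial.eval_C, Polynomial.eval_zero] at h0
      linarith
    have hc' : |c| * (k+1).factorial ≤ M := by
      have := hM ξ hξ
      rwa [hh, abs_mul, Nat.abs_cast] at this
    have hfac : (0:ℝ) < (k+1).factorial := by positivity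
    have hNb : |N.eval x| ≤ (b-a)^(k+1) := by
      rw [hN, Lagrange.eval_nodal, Finset.abs_prod]
      calc _ ≤ ∏ i ∈ s, (b - a) := by
            apply Finset.prod_le_prod
            · intros; positivity
            · intro i hi
              have := hm i hi
              rw [abs_le]; constructor <;> linarith [this.1, this.2, hx.1, hx.2]
        _ = _ := by simp [hs]
    rw [hcN, abs_mul]
    calc |c| * |N.eval x| ≤ (M / (k+1).factorial) * (b-a)^(k+1) := by
          gcongr
          rwa [le_div_iff₀ hfac]
      _ = _ := by ring

theorem pse_comp (α β : ℝ) (P : Polynomial ℝ) (j : ℕ) :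
    Polynomial.derivative^[j] (P.comp (Polynomial.C α * Polynomial.X + Polynomial.C β)) =
      Polynomial.C (α^j) * (Polynomial.derivative^[j] P).comp (Polynomial.C α * Polynomial.X + Polynomial.C β) := by
  induction j with
  | zero => simp
  | succ j ih =>
    rw [Function.iterate_succ_apply', ih, Function.iterate_succ_apply', Polynomial.derivative_C_mul,
      Polynomial.derivative_comp]
    simp [pow_succ]
    ring

theorem pse_affine (n : ℕ) (P : Polynomial ℝ) (hdeg : P.natDegree ≤ n)
    (hP : ∀ x ∈ Set.Icc (-1:ℝ) 1, |P.eval x| ≤ 1) (α β : ℝ) (hα : 1/2 ≤ |α|) (hαβ : |α| + |β| ≤ 1)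
    (j : ℕ) : |(Polynomial.derivative^[j] P).eval (α + β)| ≤
      2^j * (Polynomial.derivative^[j] (Polynomial.Chebyshev.T ℝ n)).eval 1 := by
  set R := P.comp (Polynomial.C α * Polynomial.X + Polynomial.C β) with hR
  have hRd : R.degree ≤ n := by
    apply Polynomial.degree_le_of_natDegree_le
    rw [hR, Polynomial.natDegree_comp]
    calc _ ≤ n * 1 := Nat.mul_le_mul hdeg Polynomial.natDegree_linear_le
      _ = n := by simp
  have hRb : ∀ x ∈ Set.Icc (-1:ℝ) 1, |R.eval x| ≤ 1 := by
    intro x hx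
    rw [hR, Polynomial.eval_comp]
    apply hP
    simp only [Polynomial.eval_add, Polynomial.eval_mul, Polynomial.eval_C, Polynomial.eval_X]
    refine abs_le.mp ?_
    have hx' : |x| ≤ 1 := abs_le.mpr hx
    calc |α * x + β| ≤ |α * x| + |β| := abs_add_le _ _
      _ = |α| * |x| + |β| := by rw [abs_mul]
      _ ≤ |α| * 1 + |β| := by gcongr
      _ ≤ 1 := by linarith
  have h1 := Polynomial.Chebyshev.eval_iterate_derivative_le_of_forall_abs_le_one (k := j) le_rfl hRd hRb
  have h2 := Polynomial.Chebyshev.eval_iterate_derivative_le_of_forall_abs_le_one (n := n) (P := -R) (k := j)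
    le_rfl (by simpa using hRd) (by simpa using hRb)
  rw [Polynomial.iterate_derivative_neg, Polynomial.eval_neg] at h2
  have h3 : |(Polynomial.derivative^[j] R).eval 1| ≤
      (Polynomial.derivative^[j] (Polynomial.Chebyshev.T ℝ n)).eval 1 := abs_le.mpr ⟨by linarith, h1⟩
  have h4 : (Polynomial.derivative^[j] R).eval 1 = α^j * (Polynomial.derivative^[j] P).eval (α+β) := by
    rw [hR, pse_comp]; simp
  rw [h4, abs_mul, abs_pow] at h3
  have h5 : 1 ≤ 2^j * |α|^j := by
    rw [← mul_pow]; exact one_le_pow₀ (by linarith)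
  calc _ ≤ (2^j * |α|^j) * |(Polynomial.derivative^[j] P).eval (α+β)| :=
        le_mul_of_one_le_left (abs_nonneg _) h5
    _ = 2^j * (|α|^j * |(Polynomial.derivative^[j] P).eval (α+β)|) := by ring
    _ ≤ _ := by gcongr

theorem pse_T (n j : ℕ) :
    (Polynomial.derivative^[j] (Polynomial.Chebyshev.T ℝ n)).eval 1 ≤
      (n:ℝ)^(2*j) * 2^j * j.factorial / (2*j).factorial := by
  induction j with
  | zero => simp
  | succ j ih =>
    have h := Polynomial.Chebyshev.iterate_derivative_T_eval_one_recurrence (R := ℝ) n j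
    have h0 : 0 ≤ (Polynomial.derivative^[j] (Polynomial.Chebyshev.T ℝ n)).eval 1 := by
      have h1 := Polynomial.Chebyshev.eval_iterate_derivative_le_of_forall_abs_le_one (n := n)
        (P := 0) (k := j) (x := 1) le_rfl (by simp) (by simp)
      simpa using h1
    have e1 : (2*(j+1)).factorial = (2*j+2)*((2*j+1)*(2*j).factorial) := by
      rw [show 2*(j+1) = 2*j+1+1 by ring, Nat.factorial_succ, Nat.factorial_succ]
    rw [e1, Nat.factorial_succ]
    push_cast
    have hf : (0:ℝ) < (2*j).factorial := by positivity
    rw [le_div_iff₀ hf] at ih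
    rw [le_div_iff₀ (by positivity)]
    push_cast at h
    set A := (Polynomial.derivative^[j] (Polynomial.Chebyshev.T ℝ n)).eval 1
    set B := (Polynomial.derivative^[j+1] (Polynomial.Chebyshev.T ℝ n)).eval 1
    calc B * ((2*j+2)*((2*j+1)*(2*j).factorial)) = ((2*j+1)*B)*((2*j+2)*(2*j).factorial) := by ring
      _ = ((n:ℝ)^2 - (j:ℝ)^2) * A * ((2*j+2)*(2*j).factorial) := by rw [h]
      _ ≤ (n:ℝ)^2 * A * ((2*j+2)*(2*j).factorial) := by
          gcongr
          nlinarith [sq_nonneg (j:ℝ)]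
      _ = (n:ℝ)^2*(2*j+2) * (A * (2*j).factorial) := by ring
      _ ≤ (n:ℝ)^2*(2*j+2) * ((n:ℝ)^(2*j) * 2^j * j.factorial) := by gcongr
      _ = _ := by ring

theorem pse_markov (n : ℕ) (P : Polynomial ℝ) (hdeg : P.natDegree ≤ n)
    (hP : ∀ x ∈ Set.Icc (-1:ℝ) 1, |P.eval x| ≤ 1) (j : ℕ) (x : ℝ) (hx : x ∈ Set.Icc (-1:ℝ) 1) :
    |(Polynomial.derivative^[j] P).eval x| ≤
      (n:ℝ)^(2*j) * 4^j * j.factorial / (2*j).factorial := by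
  have H : |(Polynomial.derivative^[j] P).eval x| ≤
      2^j * (Polynomial.derivative^[j] (Polynomial.Chebyshev.T ℝ n)).eval 1 := by
    rcases le_total 0 x with h | h
    · have := pse_affine n P hdeg hP ((1+x)/2) ((x-1)/2)
        (by rw [abs_of_nonneg (by linarith)]; linarith)
        (by rw [abs_of_nonneg (by linarith), abs_of_nonpos (by linarith [hx.2])]; linarith) j
      rwa [show (1+x)/2+(x-1)/2 = x by ring] at this
    · have := pse_affine n P hdeg hP ((x-1)/2) ((1+x)/2)
        (by rw [abs_of_nonpos (by linarith)]; linarith)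
        (by rw [abs_of_nonpos (by linarith), abs_of_nonneg (by linarith [hx.1])]; linarith) j
      rwa [show (x-1)/2+(1+x)/2 = x by ring] at this
  refine H.trans ?_
  calc _ ≤ 2^j * ((n:ℝ)^(2*j) * 2^j * j.factorial / (2*j).factorial) := by
        gcongr; exact pse_T n j
    _ = _ := by rw [show (4:ℝ)^j = 2^j*2^j by rw [← mul_pow]; norm_num]; ring

theorem pse_arith (j : ℕ) (hj : 1 ≤ j) :
    4 * (j:ℝ)^(2*j) ≤ (2*j).factorial * Real.exp 1 ^ j := by
  have he := Real.exp_one_gt_d9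
  have he' := Real.exp_one_lt_d9
  induction j, hj using Nat.le_induction with
  | base => norm_num [Nat.factorial]; linarith
  | succ j hj ih =>
    have hj0 : (1:ℝ) ≤ j := by exact_mod_cast hj
    have e1 : (2*(j+1)).factorial = (2*j+2)*((2*j+1)*(2*j).factorial) := by
      rw [show 2*(j+1) = 2*j+1+1 by ring, Nat.factorial_succ, Nat.factorial_succ]
    rw [e1]; push_cast
    have h1 : ((j:ℝ)+1)^j ≤ j^j * Real.exp 1 := by
      have : (j:ℝ)+1 ≤ j * Real.exp (1/j) := by
        have := Real.add_one_le_exp (1/(j:ℝ))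
        calc (j:ℝ)+1 = j * (1/j+1) := by field_simp; ring
          _ ≤ _ := by gcongr
      calc ((j:ℝ)+1)^j ≤ (j * Real.exp (1/j))^j := by gcongr
        _ = _ := by rw [mul_pow, ← Real.exp_nat_mul]; congr 2; field_simp
    have h2 : ((j:ℝ)+1)^(2*j) ≤ (j:ℝ)^(2*j) * Real.exp 1^2 := by
      calc ((j:ℝ)+1)^(2*j) = (((j:ℝ)+1)^j)^2 := by rw [← pow_mul]; ring_nf
        _ ≤ (j^j * Real.exp 1)^2 := by gcongr
        _ = _ := by rw [mul_pow, ← pow_mul]; ring_nf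
    calc 4 * ((j:ℝ)+1)^(2*(j+1)) = 4 * (((j:ℝ)+1)^(2*j)) * (j+1)^2 := by ring
      _ ≤ 4 * ((j:ℝ)^(2*j) * Real.exp 1^2) * (j+1)^2 := by gcongr
      _ = (4 * (j:ℝ)^(2*j)) * (Real.exp 1^2 * (j+1)^2) := by ring
      _ ≤ ((2*j).factorial * Real.exp 1 ^ j) * (Real.exp 1^2 * (j+1)^2) := by gcongr
      _ = ((2*j).factorial * Real.exp 1 ^ (j+1)) * (j+1) * (Real.exp 1 * (j+1)) := by ring
      _ ≤ ((2*j).factorial * Real.exp 1 ^ (j+1)) * (j+1) * (2*(2*j+1)) := by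
          refine mul_le_mul_of_nonneg_left ?_ (by positivity)
          nlinarith
      _ = _ := by ring

theorem pse_weights (k : ℕ) :
    ∑ i ∈ Finset.range (k+1), (∏ j ∈ (Finset.range (k+1)).erase i,
      |Polynomial.Chebyshev.node k i - Polynomial.Chebyshev.node k j|)⁻¹ ≤ 2^k := by
  have h := Lagrange.coeff_eq_sum (P := Polynomial.Chebyshev.T ℝ k)
    (Polynomial.Chebyshev.strictAntiOn_node k).injOn
    (by simp; norm_cast; omega)
  have h2 : (Polynomial.Chebyshev.T ℝ k).coeff k = 2^(k-1) := by
    trans (Polynomial.Chebyshev.T ℝ k).leadingCoeff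
    · simp [Polynomial.leadingCoeff]
    · simp
  rw [Finset.card_range, Nat.add_sub_cancel, h2] at h
  calc _ = (2:ℝ)^(k-1) := by
        rw [h]
        apply Finset.sum_congr rfl
        intro i hi
        have hi' : i ≤ k := by simpa [Nat.lt_succ_iff] using hi
        rw [Polynomial.Chebyshev.eval_T_real_node (by simpa using hi'), ← Finset.abs_prod]
        have hp := Polynomial.Chebyshev.zero_lt_prod_node_sub_node hi'
        set p := ∏ j ∈ (Finset.range (k+1)).erase i,
          (Polynomial.Chebyshev.node k i - Polynomial.Chebyshev.node k j)
        have : |p| = (-1)^i * p := by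
          rw [← abs_of_pos hp, abs_mul]; simp
        rw [this, mul_inv]
        rcases neg_one_pow_eq_or ℝ i with h | h <;> rw [h] <;> simp [div_eq_mul_inv]
    _ ≤ _ := by gcongr <;> [norm_num; omega]

/-- points in a compact set realising its distribution function -/
theorem pse_points (K : Set ℝ) (hK : IsCompact K) (hne : K.Nonempty) (a b : ℝ) (hab : a ≤ b)
    (hKI : K ⊆ Set.Icc a b) :
    ∃ x : ℝ → ℝ, (∀ s ∈ Set.Icc 0 (volume K).toReal, x s ∈ K) ∧
      ∀ s ∈ Set.Icc 0 (volume K).toReal, ∀ t ∈ Set.Icc 0 (volume K).toReal,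
        |s - t| ≤ |x s - x t| := by
  set F : ℝ → ℝ := fun t => (volume (K ∩ Set.Iic t)).toReal with hF
  have hfin : ∀ t, volume (K ∩ Set.Iic t) ≠ ⊤ := fun t =>
    ((measure_mono Set.inter_subset_left).trans_lt hK.measure_lt_top).ne
  have hmono : Monotone F := fun s t h =>
    ENNReal.toReal_mono (hfin t) (measure_mono (by gcongr))
  have hlip : ∀ s t, s ≤ t → F t - F s ≤ t - s := by
    intro s t h
    have h1 : K ∩ Set.Iic t ⊆ (K ∩ Set.Iic s) ∪ Set.Ioc s t := by
      rintro z ⟨hz, hz'⟩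
      rcases le_or_gt z s with h | h
      · exact Or.inl ⟨hz, h⟩
      · exact Or.inr ⟨h, hz'⟩
    have h2 := (measure_mono (μ := volume) h1).trans (measure_union_le _ _)
    have h3 := ENNReal.toReal_mono (by simp [hfin s]) h2
    rw [ENNReal.toReal_add (hfin s) (by simp), Real.volume_Ioc,
      ENNReal.toReal_ofReal (by linarith)] at h3
    simp only [hF]; linarith
  have habs : ∀ s t, |F s - F t| ≤ |s - t| := by
    intro s t
    rcases le_total s t with h | h
    · rw [abs_sub_comm, abs_sub_comm s t, abs_of_nonneg (by linarith [hmono h]), abs_of_nonneg (by linarith)]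
      exact hlip s t h
    · rw [abs_of_nonneg (by linarith [hmono h]), abs_of_nonneg (by linarith)]
      exact hlip t s h
  have hcont : Continuous F := by
    have : LipschitzWith 1 F := LipschitzWith.of_dist_le_mul (fun s t => by
      simpa [Real.dist_eq] using habs s t)
    exact this.continuous
  have hzero : ∀ c, (∀ z ∈ K, c ≤ z) → F c = 0 := by
    intro c hc
    have : K ∩ Set.Iic c ⊆ {c} := by
      rintro z ⟨hz, hz'⟩
      exact le_antisymm hz' (hc z hz)
    have h2 : volume (K ∩ Set.Iic c) = 0 := measure_mono_null this (by simp)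
    simp [hF, h2]
  have hFa : F a = 0 := hzero a (fun z hz => (hKI hz).1)
  have hFb : F b = (volume K).toReal := by
    simp only [hF]
    have hsub : K ⊆ Set.Iic b := fun z hz => (hKI hz).2
    rw [Set.inter_eq_left.mpr hsub]
  have H : ∀ s, ∃ c, s ∈ Set.Icc 0 (volume K).toReal → c ∈ K ∧ F c = s := by
    intro s
    by_cases hs : s ∈ Set.Icc 0 (volume K).toReal
    swap
    · exact ⟨0, fun h => absurd h hs⟩
    obtain ⟨t, ht, rfl⟩ := intermediate_value_Icc hab hcont.continuousOn
      (by rw [hFa, hFb]; exact hs : s ∈ Set.Icc (F a) (F b))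
    by_cases hemp : (K ∩ Set.Iic t).Nonempty
    · obtain ⟨c, hc⟩ := (hK.inter_right isClosed_Iic).exists_isGreatest hemp
      refine ⟨c, fun _ => ⟨hc.1.1, ?_⟩⟩
      have : K ∩ Set.Iic c = K ∩ Set.Iic t := by
        apply Set.Subset.antisymm
        · exact Set.inter_subset_inter_right _ (Set.Iic_subset_Iic.mpr hc.1.2)
        · intro z hz
          exact ⟨hz.1, hc.2 hz⟩
      simp only [hF, this]
    · obtain ⟨c, hc⟩ := hK.exists_isLeast hne
      refine ⟨c, fun _ => ⟨hc.1, ?_⟩⟩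
      rw [hzero c (fun z hz => hc.2 hz)]
      rw [Set.not_nonempty_iff_eq_empty] at hemp
      simp [hF, hemp]
  choose x hx using H
  refine ⟨x, fun s hs => (hx s hs).1, fun s hs t ht => ?_⟩
  have := habs (x s) (x t)
  rwa [(hx s hs).2, (hx t ht).2] at this

theorem polynomial_spreading_estimate
    (n : ℕ) (hn : 0 < n) (P : Polynomial ℝ) (hdeg : P.natDegree ≤ n)
    (hP : ∀ x ∈ Set.Icc (-1:ℝ) 1, |P.eval x| ≤ 1)
    (δ : ℝ) (hδ : 0 < δ)
    (E : Set ℝ) (hEmeas : MeasurableSet E) (hEsub : E ⊆ Set.Icc (-1:ℝ) 1)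
    (hEpos : 0 < (volume E).toReal)
    (hPE : ∀ x ∈ E, |P.eval x| ≤ Real.exp (-δ * n))
    (a b : ℝ) (hab : a ≤ b) (hEI : E ⊆ Set.Icc a b)
    (hI : Set.Icc a b ⊆ Set.Icc (-1:ℝ) 1)
    (k : ℕ) :
    ∀ x ∈ Set.Icc a b,
      |P.eval x| ≤ (4 * ((b - a) / (volume E).toReal)) ^ k *
        (Real.exp (-δ * n) +
          (Real.exp 1 * (b - a) * (n : ℝ) ^ 2 / ((k : ℝ) + 1) ^ 2) ^ (k + 1)) := by
  intro x hx
  set m := (volume E).toReal with hm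
  set ε := Real.exp (-δ * n) with hε
  have hε0 : 0 < ε := Real.exp_pos _
  have hba : 0 ≤ b - a := by linarith
  have hKI : closure E ⊆ Set.Icc a b := closure_minimal hEI isClosed_Icc
  have hK : IsCompact (closure E) := isCompact_Icc.of_isClosed_subset isClosed_closure hKI
  have hne : (closure E).Nonempty := by
    rw [closure_nonempty_iff, Set.nonempty_iff_ne_empty]
    rintro rfl
    simp [hm] at hEpos
  have hmK : m ≤ (volume (closure E)).toReal :=
    ENNReal.toReal_mono hK.measure_lt_top.ne (measure_mono subset_closure)
  have hmL : m ≤ b - a := by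
    have := ENNReal.toReal_mono (by simp) (measure_mono (μ := volume) hEI)
    rwa [Real.volume_Icc, ENNReal.toReal_ofReal hba] at this
  have hPK : ∀ z ∈ closure E, |P.eval z| ≤ ε := by
    have hcl : IsClosed {z : ℝ | |P.eval z| ≤ ε} :=
      isClosed_le (P.continuous.abs) continuous_const
    exact fun z hz => closure_minimal (fun y hy => hPE y hy) hcl hz
  obtain ⟨X, hX1, hX2⟩ := pse_points (closure E) hK hne a b hab hKI
  set y : ℕ → ℝ := fun i => m / 2 * (1 + Polynomial.Chebyshev.node k i) with hy
  have hyI : ∀ i, y i ∈ Set.Icc 0 (volume (closure E)).toReal := by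
    intro i
    have := Polynomial.Chebyshev.node_mem_Icc (n := k) (i := i)
    constructor
    · exact mul_nonneg (by linarith) (by linarith [this.1])
    · refine le_trans ?_ hmK
      simp only [hy]
      nlinarith [this.2]
  set v : ℕ → ℝ := fun i => X (y i) with hv
  have hvK : ∀ i, v i ∈ closure E := fun i => hX1 _ (hyI i)
  have hsep : ∀ i j, m / 2 * |Polynomial.Chebyshev.node k i - Polynomial.Chebyshev.node k j|
      ≤ |v i - v j| := by
    intro i j
    refine le_trans (le_of_eq ?_) (hX2 _ (hyI i) _ (hyI j))
    rw [← abs_of_pos (show 0 < m/2 by linarith), ← abs_mul]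
    congr 1; simp only [hy]; ring
  have hnodepos : ∀ i ∈ Finset.range (k+1), ∀ j ∈ Finset.range (k+1), i ≠ j →
      0 < |Polynomial.Chebyshev.node k i - Polynomial.Chebyshev.node k j| := by
    intro i hi j hj hij
    rw [abs_pos, sub_ne_zero]
    exact fun h => hij ((Polynomial.Chebyshev.strictAntiOn_node k).injOn
      (Finset.mem_coe.mpr hi) (Finset.mem_coe.mpr hj) h)
  have hinj : Set.InjOn v (Finset.range (k+1)) := by
    intro i hi j hj h
    by_contra hij
    have h1 := hsep i j
    have h2 := hnodepos i (Finset.mem_coe.mp hi) j (Finset.mem_coe.mp hj) hij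
    rw [h, sub_self, abs_zero] at h1
    nlinarith
  have herr := pse_interp a b k P v hinj (fun i _ => hKI (hvK i)) _
    (fun z hz => pse_markov n P hdeg hP (k+1) z (hI hz)) x hx
  set Q := Lagrange.interpolate (Finset.range (k+1)) v (fun i => P.eval (v i)) with hQ
  have hQb : |Q.eval x| ≤ (4 * ((b-a)/m))^k * ε := by
    rw [hQ, Lagrange.interpolate_eq_sum, Polynomial.eval_finsetSum]
    refine (Finset.abs_sum_le_sum_abs _ _).trans ?_
    calc _ ≤ ∑ i ∈ Finset.range (k+1), ε * (2*(b-a)/m)^k *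
          (∏ j ∈ (Finset.range (k+1)).erase i,
          |Polynomial.Chebyshev.node k i - Polynomial.Chebyshev.node k j|)⁻¹ := by
          apply Finset.sum_le_sum
          intro i hi
          have hcard : ((Finset.range (k+1)).erase i).card = k := by
            rw [Finset.card_erase_of_mem hi]; simp
          simp only [Polynomial.eval_mul, Polynomial.eval_C, Polynomial.eval_prod,
            Polynomial.eval_sub, Polynomial.eval_X]
          rw [abs_mul, abs_div, Finset.abs_prod, Finset.abs_prod, div_mul_eq_mul_div, mul_div_assoc,
            ← Finset.prod_div_distrib, mul_assoc]
          gcongr ?_ * ?_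
          · exact hPK _ (hvK i)
          · rw [← Finset.prod_inv_distrib]
            nth_rewrite 2 [← hcard]
            rw [← Finset.prod_const, ← Finset.prod_mul_distrib]
            apply Finset.prod_le_prod
            · intros; positivity
            · intro j hj
              have hj' := Finset.mem_erase.mp hj
              have hp := hnodepos i hi j hj'.2 hj'.1.symm
              have hs := hsep i j
              have hxj : |x - v j| ≤ b - a := by
                have := hKI (hvK j)
                rw [abs_le]; constructor <;> linarith [this.1, this.2, hx.1, hx.2]
              calc |x - v j| / |v i - v j| ≤ (b-a) / (m / 2 * |Polynomial.Chebyshev.node k i - Polynomial.Chebyshev.node k j|) := by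
                    gcongr
                _ = _ := by field_simp
      _ = ε * (2*(b-a)/m)^k * ∑ i ∈ Finset.range (k+1),
          (∏ j ∈ (Finset.range (k+1)).erase i,
          |Polynomial.Chebyshev.node k i - Polynomial.Chebyshev.node k j|)⁻¹ := by
          rw [Finset.mul_sum]
      _ ≤ ε * (2*(b-a)/m)^k * 2^k := by
          gcongr; exact pse_weights k
      _ = _ := by
          rw [mul_assoc, ← mul_pow]; ring
  have hη : 4 ≤ 4 * ((b-a)/m) := by
    have : 1 ≤ (b-a)/m := by rwa [le_div_iff₀ hEpos, one_mul]
    linarith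
  have hη' : (4:ℝ)^k ≤ (4 * ((b-a)/m))^k := by gcongr
  have herr2 : (b - a)^(k+1) * ((n:ℝ)^(2*(k+1)) * 4^(k+1) * (k+1).factorial / (2*(k+1)).factorial)
      / (k+1).factorial ≤ 4^k *
      (Real.exp 1 * (b - a) * (n : ℝ) ^ 2 / ((k : ℝ) + 1) ^ 2) ^ (k + 1) := by
    have har := pse_arith (k+1) (by omega)
    push_cast at har
    have hfac : (0:ℝ) < (k+1).factorial := by positivity
    have hfac2 : (0:ℝ) < (2*(k+1)).factorial := by positivity
    have hk1 : (0:ℝ) < ((k:ℝ)+1)^(2*(k+1)) := by positivity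
    calc _ = (b-a)^(k+1) * (n:ℝ)^(2*(k+1)) * 4^k * (4 / (2*(k+1)).factorial) := by
          field_simp; ring
      _ ≤ (b-a)^(k+1) * (n:ℝ)^(2*(k+1)) * 4^k * (Real.exp 1^(k+1) / ((k:ℝ)+1)^(2*(k+1))) := by
          gcongr (b-a)^(k+1) * (n:ℝ)^(2*(k+1)) * 4^k * ?_
          rw [div_le_div_iff₀ hfac2 hk1]
          linarith
      _ = _ := by
          rw [div_pow, mul_pow, mul_pow, ← pow_mul, ← pow_mul]; ring
  have hR0 : 0 ≤ (Real.exp 1 * (b - a) * (n : ℝ) ^ 2 / ((k : ℝ) + 1) ^ 2) ^ (k + 1) := by positivity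
  calc |P.eval x| = |Q.eval x + (P.eval x - Q.eval x)| := by congr 1; ring
    _ ≤ |Q.eval x| + |P.eval x - Q.eval x| := abs_add_le _ _
    _ ≤ (4 * ((b-a)/m))^k * ε + (4 * ((b-a)/m))^k *
        (Real.exp 1 * (b - a) * (n : ℝ) ^ 2 / ((k : ℝ) + 1) ^ 2) ^ (k + 1) :=
        add_le_add hQb ((herr.trans herr2).trans (by gcongr))
    _ = _ := by ring
end

section
/- Let n be a positive integer, let P be a real polynomial of degree ≤ n with sup_{x∈[-1,1]} |P(x)| ≤ 1, let I ⊂ [-1,1] be an interval with centre x_0, let k ≥ 0 be an integer, and let T_k P(x) = Σ_{j=0}^{k} P^{(j)}(x_0) (x−x_0)^j / j! be the degree-k Taylor polynomial of P at x_0. Then sup_{x∈I} |P(x) − T_k P(x)| ≤ (1/2) · ( e |I| n² / (k+1)² )^{k+1}. -/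
open Set Polynomial

theorem aux_cosh (x : ℝ) : 1 + x ^ 2 / 2 ≤ Real.cosh x := by
  have h1 : Real.cosh x = Real.cosh (x/2) ^ 2 + Real.sinh (x/2) ^ 2 := by
    rw [← Real.cosh_two_mul]; congr 1; ring
  have h2 := Real.cosh_sq (x/2)
  have h3 : (x/2)^2 ≤ Real.sinh (x/2) ^ 2 := by
    rcases le_total 0 (x/2) with h | h
    · have := Real.self_le_sinh_iff.mpr h
      nlinarith
    · have := Real.sinh_le_self_iff.mpr h
      nlinarith
  nlinarith

theorem aux_disc (n : ℕ) (P : ℝ[X]) (hdeg : P.natDegree ≤ n)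
    (hP : ∀ x ∈ Set.Icc (-1:ℝ) 1, |P.eval x| ≤ 1) (w : ℂ) (hw0 : w ≠ 0) (hw : ‖w‖ ≤ 1) :
    ‖w ^ n * (P.map (algebraMap ℝ ℂ)).eval ((w + w⁻¹) / 2)‖ ≤ 1 := by
  set g : ℂ → ℂ := fun w => ∑ i ∈ Finset.range (n+1),
    ((P.coeff i : ℝ) : ℂ) * ((w^2+1)/2)^i * w^(n-i) with hg
  have key : ∀ w : ℂ, w ≠ 0 →
      w ^ n * (P.map (algebraMap ℝ ℂ)).eval ((w + w⁻¹) / 2) = g w := by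
    intro w hw
    rw [eval_eq_sum_range' (n := n+1)
      (lt_of_le_of_lt natDegree_map_le (Nat.lt_succ_of_le hdeg)), Finset.mul_sum]
    refine Finset.sum_congr rfl fun i hi => ?_
    have hi' : i ≤ n := Nat.lt_succ_iff.mp (Finset.mem_range.mp hi)
    have e : (w + w⁻¹) / 2 = ((w^2+1)/2) * w⁻¹ := by field_simp
    obtain ⟨d, rfl⟩ := Nat.exists_eq_add_of_le hi'
    rw [e, mul_pow, coeff_map, Nat.add_sub_cancel_left, pow_add, inv_pow]
    simp only [Complex.coe_algebraMap]
    field_simp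
  rw [key w hw0]
  have hd : Differentiable ℂ g := by
    rw [hg]; fun_prop
  refine Complex.norm_le_of_forall_mem_frontier_norm_le (U := Metric.ball (0:ℂ) 1)
    Metric.isBounded_ball hd.diffContOnCl ?_ ?_
  · intro z hz
    rw [frontier_ball _ one_ne_zero, mem_sphere_zero_iff_norm] at hz
    have hz0 : z ≠ 0 := by
      intro h; simp [h] at hz
    rw [← key z hz0, norm_mul, norm_pow, hz, one_pow, one_mul]
    have : (z + z⁻¹) / 2 = ((z.re : ℝ) : ℂ) := by
      rw [Complex.inv_eq_conj hz, Complex.add_conj]; push_cast; ring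
    rw [this]
    have h2 : (P.map (algebraMap ℝ ℂ)).eval ((z.re : ℝ) : ℂ) = ((P.eval z.re : ℝ) : ℂ) := by
      rw [eval_map, ← Complex.coe_algebraMap, eval₂_at_apply]
    rw [h2, Complex.norm_real]
    apply hP
    have := Complex.abs_re_le_norm z
    rw [hz] at this
    exact abs_le.mp this
  · rw [closure_ball _ one_ne_zero]; simpa using hw

theorem aux_bw (n : ℕ) (P : ℝ[X]) (hdeg : P.natDegree ≤ n)
    (hP : ∀ x ∈ Set.Icc (-1:ℝ) 1, |P.eval x| ≤ 1) (z : ℂ) (r : ℝ) (hr : 0 ≤ r)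
    (hz : ‖z - 1‖ + ‖z + 1‖ ≤ 2 + 2 * r) :
    ‖(P.map (algebraMap ℝ ℂ)).eval z‖ ≤ Real.exp (n * √(2 * r)) := by
  obtain ⟨w, hw0, hw1, hwz⟩ : ∃ w : ℂ, w ≠ 0 ∧ ‖w‖ ≤ 1 ∧ z = (w + w⁻¹) / 2 := by
    obtain ⟨s, hs⟩ := IsAlgClosed.exists_pow_nat_eq (z^2-1) (n := 2) (by norm_num)
    have hprod : (z + s) * (z - s) = 1 := by linear_combination -hs
    have hne1 : z + s ≠ 0 := left_ne_zero_of_mul_eq_one hprod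
    have hne2 : z - s ≠ 0 := right_ne_zero_of_mul_eq_one hprod
    rcases le_total ‖z + s‖ 1 with h | h
    · refine ⟨z + s, hne1, h, ?_⟩
      rw [inv_eq_of_mul_eq_one_right hprod]; ring
    · refine ⟨z - s, hne2, ?_, ?_⟩
      · have := congrArg norm hprod
        rw [norm_mul, norm_one] at this
        nlinarith [norm_nonneg (z - s)]
      · rw [inv_eq_of_mul_eq_one_left hprod]; ring
  have hpos : 0 < ‖w‖ := norm_pos_iff.mpr hw0
  have h1 : ‖z - 1‖ = ‖w - 1‖^2 / (2 * ‖w‖) := by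
    have : z - 1 = (w-1)^2 / (2 * w) := by rw [hwz]; field_simp; ring
    rw [this]; simp
  have h2 : ‖z + 1‖ = ‖w + 1‖^2 / (2 * ‖w‖) := by
    have : z + 1 = (w+1)^2 / (2 * w) := by rw [hwz]; field_simp; ring
    rw [this]; simp
  have hpar := parallelogram_law_with_norm ℝ w 1
  have h3 : ‖w‖ + ‖w‖⁻¹ ≤ 2 + 2 * r := by
    have : ‖w‖ + ‖w‖⁻¹ = ‖z - 1‖ + ‖z + 1‖ := by
      rw [h1, h2]; field_simp
      simp at hpar
      nlinarith
    linarith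
  have h4 : -Real.log ‖w‖ ≤ √(2 * r) := by
    apply Real.le_sqrt_of_sq_le
    have hc : Real.cosh (Real.log ‖w‖) = (‖w‖ + ‖w‖⁻¹) / 2 := Real.cosh_log hpos
    have := aux_cosh (Real.log ‖w‖)
    nlinarith
  have h5 := aux_disc n P hdeg hP w hw0 hw1
  rw [← hwz, norm_mul, norm_pow] at h5
  have h6 : ‖w‖⁻¹ ≤ Real.exp √(2 * r) := by
    rw [← Real.exp_log (inv_pos.mpr hpos), Real.log_inv]
    exact Real.exp_le_exp.mpr h4
  calc _ ≤ (‖w‖⁻¹)^n := by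
        rw [inv_pow, ← one_div, le_div_iff₀ (by positivity)]; linarith
    _ ≤ (Real.exp √(2*r))^n := by gcongr
    _ = _ := by rw [← Real.exp_nat_mul]

theorem aux_iter {𝕜 : Type*} [NontriviallyNormedField 𝕜] (p : 𝕜[X]) (m : ℕ) :
    iteratedDeriv m (fun x => p.eval x) = fun x => (derivative^[m] p).eval x := by
  induction m with
  | zero => simp
  | succ m ih => rw [iteratedDeriv_succ, ih, Function.iterate_succ_apply']; ext x; simp

theorem aux_cauchy (n : ℕ) (hn : 0 < n) (P : ℝ[X]) (hdeg : P.natDegree ≤ n)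
    (hP : ∀ x ∈ Set.Icc (-1:ℝ) 1, |P.eval x| ≤ 1) (m : ℕ) (hm : 0 < m) (y : ℝ)
    (hy : y ∈ Set.Icc (-1:ℝ) 1) :
    |(derivative^[m] P).eval y| ≤
      m.factorial * (Real.exp 1 ^ 2 * n ^ 2 / (2 * m ^ 2)) ^ m := by
  have hn' : (0:ℝ) < n := by exact_mod_cast hn
  have hm' : (0:ℝ) < m := by exact_mod_cast hm
  set r : ℝ := 2 * m^2 / n^2 with hr
  have hr0 : 0 < r := by positivity
  have hs : √(2 * r) = 2 * m / n := by
    rw [show 2 * r = (2 * m / n)^2 by rw [hr]; field_simp]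
    exact Real.sqrt_sq (by positivity)
  have h := Complex.norm_iteratedDeriv_le_of_forall_mem_sphere_norm_le (c := (y:ℂ)) (R := r)
    (C := Real.exp (n * √(2 * r))) (f := fun z => (P.map (algebraMap ℝ ℂ)).eval z) m hr0
    (Polynomial.differentiable _).diffContOnCl (by
      intro z hz
      apply aux_bw n P hdeg hP z r hr0.le
      rw [mem_sphere_iff_norm] at hz
      have e1 : ‖z - 1‖ ≤ r + (1 - y) := by
        calc ‖z - 1‖ = ‖(z - y) + ((y - 1 : ℝ) : ℂ)‖ := by push_cast; ring_nf
          _ ≤ ‖z - y‖ + ‖((y - 1 : ℝ) : ℂ)‖ := norm_add_le _ _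
          _ = _ := by rw [hz, Complex.norm_real, Real.norm_eq_abs, abs_of_nonpos (by linarith [hy.2])]; ring
      have e2 : ‖z + 1‖ ≤ r + (1 + y) := by
        calc ‖z + 1‖ = ‖(z - y) + ((y + 1 : ℝ) : ℂ)‖ := by push_cast; ring_nf
          _ ≤ ‖z - y‖ + ‖((y + 1 : ℝ) : ℂ)‖ := norm_add_le _ _
          _ = _ := by rw [hz, Complex.norm_real, Real.norm_eq_abs, abs_of_nonneg (by linarith [hy.1])]; ring
      linarith)
  rw [aux_iter] at h
  have h2 : (derivative^[m] (P.map (algebraMap ℝ ℂ))).eval (y : ℂ)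
      = (((derivative^[m] P).eval y : ℝ) : ℂ) := by
    rw [iterate_derivative_map, eval_map, ← Complex.coe_algebraMap, eval₂_at_apply]
  simp only [h2, Complex.norm_real, Real.norm_eq_abs] at h
  refine h.trans (le_of_eq ?_)
  have e3 : Real.exp (n * √(2*r)) = (Real.exp 1 ^ 2)^m := by
    rw [hs, ← Real.exp_nat_mul, ← Real.exp_nat_mul]; congr 1; field_simp; push_cast; ring
  rw [e3, mul_div_assoc, ← div_pow, hr]
  congr 2
  field_simp

theorem aux_markov_pos (n : ℕ) (P : ℝ[X]) (hdeg : P.natDegree ≤ n)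
    (hP : ∀ x ∈ Set.Icc (-1:ℝ) 1, |P.eval x| ≤ 1) (y : ℝ)
    (hy : y ∈ Set.Icc (0:ℝ) 1) : (derivative P).eval y ≤ 2 * n ^ 2 := by
  -- rescale
  set Q : ℝ[X] := P.comp (C ((1+y)/2) * X + C ((y-1)/2)) with hQ
  have hQd : Q.degree ≤ n := by
    apply degree_le_of_natDegree_le
    refine natDegree_comp_le.trans ?_
    have := natDegree_linear_le (a := (1+y)/2) (b := (y-1)/2)
    nlinarith
  have h := Polynomial.Chebyshev.eval_iterate_derivative_le_of_forall_abs_le_one (k := 1)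
    (le_refl (1:ℝ)) hQd (by
      intro x hx
      rw [hQ, eval_comp]
      apply hP
      simp only [eval_add, eval_mul, eval_C, eval_X]
      constructor <;> nlinarith [hx.1, hx.2, hy.1, hy.2])
  simp only [Function.iterate_one] at h
  rw [Chebyshev.T_derivative_eq_U, hQ, derivative_comp] at h
  simp [Chebyshev.U_eval_one] at h
  ring_nf at h
  nlinarith [hy.1, hy.2]

theorem aux_markov (n : ℕ) (P : ℝ[X]) (hdeg : P.natDegree ≤ n)
    (hP : ∀ x ∈ Set.Icc (-1:ℝ) 1, |P.eval x| ≤ 1) (y : ℝ)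
    (hy : y ∈ Set.Icc (-1:ℝ) 1) : |(derivative P).eval y| ≤ 2 * n ^ 2 := by
  have main : ∀ Q : ℝ[X], Q.natDegree ≤ n → (∀ x ∈ Set.Icc (-1:ℝ) 1, |Q.eval x| ≤ 1) →
      ∀ y ∈ Set.Icc (0:ℝ) 1, |(derivative Q).eval y| ≤ 2 * n ^ 2 := by
    intro Q hQ hQ1 y hy
    rw [abs_le']
    refine ⟨aux_markov_pos n Q hQ hQ1 y hy, ?_⟩
    have := aux_markov_pos n (-Q) (by simpa using hQ) (by simpa using hQ1) y hy
    simpa using this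
  rcases le_total 0 y with h | h
  · exact main P hdeg hP y ⟨h, hy.2⟩
  · have := main (P.comp (-X)) (by
      refine natDegree_comp_le.trans ?_
      simpa using hdeg) (by
      intro x hx
      rw [eval_comp]
      apply hP
      simp only [eval_neg, eval_X]
      constructor <;> linarith [hx.1, hx.2]) (-y) ⟨by linarith, by linarith [hy.1]⟩
    simpa [derivative_comp] using this

theorem aux_deriv (n : ℕ) (hn : 0 < n) (P : ℝ[X]) (hdeg : P.natDegree ≤ n)
    (hP : ∀ x ∈ Set.Icc (-1:ℝ) 1, |P.eval x| ≤ 1) (k : ℕ) (y : ℝ)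
    (hy : y ∈ Set.Icc (-1:ℝ) 1) :
    |(derivative^[k+1] P).eval y| ≤ (k+1).factorial *
      ((1 / 2) * (2 * Real.exp 1 * n ^ 2 / ((k : ℝ) + 1) ^ 2) ^ (k + 1)) := by
  have he1 := Real.exp_one_gt_d9
  have he2 := Real.exp_one_lt_d9
  rcases Nat.eq_zero_or_pos k with rfl | hk
  · have := aux_markov n P hdeg hP y hy
    simp
    nlinarith [sq_nonneg (n:ℝ)]
  · refine (aux_cauchy n hn P hdeg hP (k+1) (Nat.succ_pos k) y hy).trans ?_
    gcongr
    push_cast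
    have e : Real.exp 1 ^ 2 * (n:ℝ) ^ 2 / (2 * ((k:ℝ) + 1) ^ 2)
        = (Real.exp 1 / 4) * (2 * Real.exp 1 * n ^ 2 / ((k : ℝ) + 1) ^ 2) := by
      field_simp; ring
    rw [e, mul_pow]
    gcongr
    calc (Real.exp 1 / 4)^(k+1) ≤ (Real.exp 1 / 4)^2 :=
          pow_le_pow_of_le_one (by positivity) (by linarith) (by omega)
      _ ≤ 1/2 := by nlinarith

theorem taylor_remainder_markov_bound
    (n : ℕ) (hn : 0 < n) (P : Polynomial ℝ) (hdeg : P.natDegree ≤ n)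
    (hP : ∀ x ∈ Set.Icc (-1:ℝ) 1, |P.eval x| ≤ 1)
    (a b : ℝ) (hab : a ≤ b) (hI : Set.Icc a b ⊆ Set.Icc (-1:ℝ) 1)
    (k : ℕ) :
    ∀ x ∈ Set.Icc a b,
      |P.eval x - ∑ j ∈ Finset.range (k + 1),
          ((Polynomial.derivative^[j] P).eval ((a + b) / 2)) * (x - (a + b) / 2) ^ j /
            (Nat.factorial j : ℝ)|
        ≤ (1 / 2) * (Real.exp 1 * (b - a) * (n : ℝ) ^ 2 / ((k : ℝ) + 1) ^ 2) ^ (k + 1) := by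
  intro x hx
  have hba : 0 ≤ b - a := by linarith
  set c := (a + b) / 2 with hc
  have hcm : c ∈ Set.Icc a b := ⟨by rw [hc]; linarith, by rw [hc]; linarith⟩
  rcases eq_or_ne c x with hcx | hcx
  · rw [Finset.sum_range_succ']
    simp only [← hcx, sub_self]
    simp
    positivity
  have hcA : ∀ N : ℕ, ContDiff ℝ N (fun x => P.eval x) := fun N => by
    simpa using P.contDiff_aeval (𝕜 := ℝ) N
  have hcd : ContDiff ℝ (k+1) (fun x => P.eval x) := by exact_mod_cast hcA (k+1)
  obtain ⟨ξ, hξ, h⟩ := taylor_mean_remainder_lagrange_iteratedDeriv (n := k) hcx hcd.contDiffOn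
  have hT : taylorWithinEval (fun x => P.eval x) k (uIcc c x) c x =
      ∑ j ∈ Finset.range (k + 1),
          ((Polynomial.derivative^[j] P).eval c) * (x - c) ^ j / (Nat.factorial j : ℝ) := by
    rw [taylor_within_apply]
    refine Finset.sum_congr rfl fun j _ => ?_
    rw [iteratedDerivWithin_eq_iteratedDeriv (uniqueDiffOn_uIcc hcx) (hcA j).contDiffAt
      left_mem_uIcc, aux_iter, smul_eq_mul]
    field_simp
  rw [hT, aux_iter] at h
  rw [h, abs_div, abs_mul, abs_pow, Nat.abs_cast]
  have hξI : ξ ∈ Set.Icc a b := (Set.uIcc_subset_Icc hcm hx) ⟨hξ.1.le, hξ.2.le⟩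
  have hd := aux_deriv n hn P hdeg hP k ξ (hI hξI)
  have hxc : |x - c| ≤ (b - a) / 2 := by
    rw [abs_le]; constructor <;> rw [hc] <;> linarith [hx.1, hx.2]
  have hf : (0:ℝ) < (k+1).factorial := by exact_mod_cast Nat.factorial_pos _
  rw [div_le_iff₀ hf]
  calc _ ≤ ((k+1).factorial *
      ((1 / 2) * (2 * Real.exp 1 * n ^ 2 / ((k : ℝ) + 1) ^ 2) ^ (k + 1))) *
        ((b - a) / 2) ^ (k + 1) := by gcongr
    _ = (k+1).factorial * ((1 / 2) *
        ((2 * Real.exp 1 * n ^ 2 / ((k : ℝ) + 1) ^ 2) * ((b - a) / 2)) ^ (k + 1)) := by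
      rw [mul_pow]; ring
    _ = _ := by
      rw [mul_comm]; congr 3; field_simp
end

section
/- For every δ_0 > 0, every c_0 ∈ (0,1) and every ε > 0 there exists κ = κ(δ_0, ε, c_0) > 0 with the following property. Let n be a positive integer, let P be a nonzero real polynomial of degree ≤ n, let δ ≥ δ_0, and let c satisfy c_0 ≤ c < 1 and 0 < ε < (1−c)/(2−c). If |𝔈_P(δ)| ≤ κ, then |𝔈_P(cδ)| ≥ |𝔈_P(δ)|^{1/(2−c)+ε}. -/
open MeasureTheory Set

/-- The sup norm of a polynomial on [-1,1]. -/
noncomputable def supNorm (P : Polynomial ℝ) : ℝ :=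
  sSup ((fun x => |P.eval x|) '' Set.Icc (-1:ℝ) 1)

/-- 𝔈_P(δ) = {x ∈ [-1,1] : |P(x)| ≤ e^{-δn} ‖P‖_{[-1,1]}}. -/
def sublevelSet (P : Polynomial ℝ) (n : ℕ) (δ : ℝ) : Set ℝ :=
  {x : ℝ | x ∈ Set.Icc (-1:ℝ) 1 ∧ |P.eval x| ≤ Real.exp (-δ * n) * supNorm P}


lemma diff_prod (s : Multiset ℂ) (m h : ℝ) :
    Differentiable ℂ (fun w : ℂ => (s.map (fun z : ℂ => w * m + h * (w ^ 2 + 1) / 2 - w * z)).prod) := by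
  induction s using Multiset.induction_on with
  | empty => simp
  | cons a t ih =>
    simp only [Multiset.map_cons, Multiset.prod_cons]
    exact Differentiable.mul (by fun_prop) ih

/-- growth -/
lemma growth (s : Multiset ℂ) (m h B η : ℝ) (hη : 0 < η)
    (hB : ∀ θ : ℝ, (s.map (fun z : ℂ => ‖((m + h * Real.cos θ : ℝ) : ℂ) - z‖)).prod ≤ B) :
    (s.map (fun z : ℂ => ‖((m + h * Real.cosh η : ℝ) : ℂ) - z‖)).prod ≤ B * Real.exp (η * s.card) := by
  set f : ℂ → ℂ := fun w => (s.map (fun z : ℂ => w * m + h * (w ^ 2 + 1) / 2 - w * z)).prod with hf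
  have key : ∀ w : ℂ, w ≠ 0 → ‖f w‖ = ‖w‖ ^ s.card *
      (s.map (fun z : ℂ => ‖(m + h * ((w + w⁻¹) / 2) : ℂ) - z‖)).prod := by
    intro w hw
    have : f w = (s.map (fun z : ℂ => w * ((m + h * ((w + w⁻¹) / 2) : ℂ) - z))).prod := by
      simp only [hf]
      congr 1
      apply Multiset.map_congr rfl
      intro z _
      field_simp
    rw [this, Multiset.prod_map_mul]
    simp only [Multiset.map_const', Multiset.prod_replicate, norm_mul, norm_pow]
    congr 1
    have := map_multiset_prod (normHom : ℂ →*₀ ℝ) (s.map (fun z : ℂ => ((m + h * ((w + w⁻¹) / 2) : ℂ) - z)))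
    simpa using this
  have hd : Differentiable ℂ f := by
    exact diff_prod s m h
  have hmax := Complex.norm_le_of_forall_mem_frontier_norm_le (f := f) (U := Metric.ball (0:ℂ) 1)
    (C := B) Metric.isBounded_ball hd.diffContOnCl (by
      intro w hw
      rw [frontier_ball _ one_ne_zero, mem_sphere_zero_iff_norm] at hw
      have hw0 : w ≠ 0 := by rintro rfl; simp at hw
      rw [key w hw0, hw, one_pow, one_mul]
      have := hB (Complex.arg w)
      convert this using 6
      have hw1 : w = Complex.exp (Complex.arg w * Complex.I) := by
        conv_lhs => rw [← Complex.norm_mul_exp_arg_mul_I w, hw]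
        simp
      push_cast
      rw [Complex.cos]
      congr 2
      conv_lhs => rw [hw1, ← Complex.exp_neg]
      simp [neg_mul])
    (z := (Real.exp (-η) : ℂ)) (subset_closure (by
      rw [Metric.mem_ball, dist_zero_right, Complex.norm_real, Real.norm_eq_abs, abs_of_pos (Real.exp_pos _)]
      simpa using hη))
  rw [key _ (by exact_mod_cast (Real.exp_pos _).ne'), Complex.norm_real, Real.norm_eq_abs, abs_of_pos (Real.exp_pos _),
    ← Real.exp_nat_mul] at hmax
  have e : (m + h * ((((Real.exp (-η) : ℝ) : ℂ) + ((Real.exp (-η) : ℝ) : ℂ)⁻¹) / 2) : ℂ) = ((m + h * Real.cosh η : ℝ) : ℂ) := by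
    rw [Real.cosh_eq]
    push_cast
    rw [← Complex.exp_neg]
    ring_nf
  rw [e] at hmax
  have e2 : (1:ℝ) = Real.exp (s.card * -η) * Real.exp (η * s.card) := by
    rw [← Real.exp_add]; ring_nf; simp
  calc _ = Real.exp (s.card * -η) * (s.map (fun z : ℂ => ‖((m + h * Real.cosh η : ℝ) : ℂ) - z‖)).prod * Real.exp (η * s.card) := by
        rw [mul_right_comm, ← e2, one_mul]
    _ ≤ _ := by gcongr

lemma lint_half (m : ℝ) (hm : 0 < m) :
    ∫⁻ x in Ioc (0:ℝ) m, (ENNReal.ofReal |x|) ^ (-1/2 : ℝ) = ENNReal.ofReal (2 * m ^ (1/2 : ℝ)) := by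
  have h1 : ∫⁻ x in Ioc (0:ℝ) m, (ENNReal.ofReal |x|) ^ (-1/2 : ℝ)
      = ∫⁻ x in Ioc (0:ℝ) m, ENNReal.ofReal (x ^ (-1/2 : ℝ)) := by
    apply setLIntegral_congr_fun measurableSet_Ioc
    intro x hx
    simp only
    rw [abs_of_pos hx.1, ENNReal.ofReal_rpow_of_pos hx.1]
  rw [h1, ← ofReal_integral_eq_lintegral_ofReal]
  · rw [← intervalIntegral.integral_of_le hm.le, integral_rpow (by norm_num)]
    congr 1
    norm_num
    ring
  · have := intervalIntegral.intervalIntegrable_rpow' (a := 0) (b := m) (r := (-1/2 : ℝ)) (by norm_num)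
    rwa [intervalIntegrable_iff_integrableOn_Ioc_of_le hm.le] at this
  · filter_upwards [ae_restrict_mem measurableSet_Ioc] with x hx
    exact Real.rpow_nonneg hx.1.le _

lemma lint_meas (a : ℝ) : Measurable (fun x : ℝ => (ENNReal.ofReal |x - a|) ^ (-1/2 : ℝ)) := by
  fun_prop

lemma lint_full (m : ℝ) (hm : 0 < m) :
    ∫⁻ x in Ioo (-m) m, (ENNReal.ofReal |x|) ^ (-1/2 : ℝ) ≤ ENNReal.ofReal (4 * m ^ (1/2 : ℝ)) := by
  have hsub : Ioo (-m) m ⊆ (Neg.neg ⁻¹' (Ioc 0 m)) ∪ ({0} ∪ Ioc 0 m) := by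
    intro x hx
    rcases lt_trichotomy x 0 with h | h | h
    · left; exact ⟨by linarith, by linarith [hx.1]⟩
    · right; left; exact h
    · right; right; exact ⟨h, hx.2.le⟩
  have hneg : ∫⁻ x in Neg.neg ⁻¹' (Ioc (0:ℝ) m), (ENNReal.ofReal |x|) ^ (-1/2 : ℝ)
      = ∫⁻ x in Ioc (0:ℝ) m, (ENNReal.ofReal |x|) ^ (-1/2 : ℝ) := by
    have := (Measure.measurePreserving_neg (volume : Measure ℝ)).setLIntegral_comp_preimage
      (s := Ioc 0 m) measurableSet_Ioc (f := fun x => (ENNReal.ofReal |x|) ^ (-1/2 : ℝ)) (by fun_prop)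
    simpa using this
  have h0 : ∫⁻ x in ({0} : Set ℝ), (ENNReal.ofReal |x|) ^ (-1/2 : ℝ) = 0 :=
    setLIntegral_measure_zero _ _ (by simp)
  calc _ ≤ _ := lintegral_mono_set hsub
    _ ≤ _ := lintegral_union_le _ _ _
    _ ≤ _ := add_le_add_right (lintegral_union_le _ _ _) _
    _ = _ := by
      rw [hneg, h0, lint_half m hm, zero_add, ← ENNReal.ofReal_add (by positivity) (by positivity)]
      ring_nf

lemma lint_set (A : Set ℝ) (a m : ℝ) (hm : 0 < m) (hA : volume A = ENNReal.ofReal m) :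
    ∫⁻ x in A, (ENNReal.ofReal |x - a|) ^ (-1/2 : ℝ) ≤ ENNReal.ofReal (5 * m ^ (1/2 : ℝ)) := by
  set B : Set ℝ := (fun x => x - a) ⁻¹' Ioo (-m) m with hB
  have hBm : MeasurableSet B := measurableSet_Ioo.preimage (by fun_prop)
  have h1 : ∫⁻ x in B, (ENNReal.ofReal |x - a|) ^ (-1/2 : ℝ) ≤ ENNReal.ofReal (4 * m ^ (1/2 : ℝ)) := by
    have := (measurePreserving_sub_right (volume : Measure ℝ) a).setLIntegral_comp_preimage
      (s := Ioo (-m) m) measurableSet_Ioo (f := fun x => (ENNReal.ofReal |x|) ^ (-1/2 : ℝ)) (by fun_prop)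
    rw [this]
    exact lint_full m hm
  have h2 : ∫⁻ x in A ∩ Bᶜ, (ENNReal.ofReal |x - a|) ^ (-1/2 : ℝ) ≤ ENNReal.ofReal (m ^ (1/2 : ℝ)) := by
    calc _ ≤ ∫⁻ x in A ∩ Bᶜ, ENNReal.ofReal (m ^ (-1/2 : ℝ)) := by
          apply lintegral_mono_ae
          have : ∀ᵐ x ∂(volume.restrict (A ∩ Bᶜ)), x ∈ Bᶜ := by
            have := ae_restrict_mem (μ := volume.restrict A) hBm.compl
            rwa [Measure.restrict_restrict hBm.compl, inter_comm] at this
          filter_upwards [this] with x hx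
          have hx' : m ≤ |x - a| := by
            by_contra hc
            exact hx (abs_lt.mp (not_le.mp hc))
          rw [ENNReal.ofReal_rpow_of_pos (by linarith)]
          apply ENNReal.ofReal_le_ofReal
          exact Real.rpow_le_rpow_of_nonpos hm hx' (by norm_num)
      _ ≤ ENNReal.ofReal (m ^ (-1/2 : ℝ)) * volume A := by
          rw [setLIntegral_const]
          gcongr
          exact inter_subset_left
      _ = _ := by
          rw [hA, ← ENNReal.ofReal_mul (by positivity)]
          congr 1
          nth_rw 2 [← Real.rpow_one m]
          rw [← Real.rpow_add hm]
          norm_num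
  calc _ ≤ ∫⁻ x in B ∪ (A ∩ Bᶜ), (ENNReal.ofReal |x - a|) ^ (-1/2 : ℝ) := by
        apply lintegral_mono_set
        intro x hx
        by_cases h : x ∈ B
        · exact Or.inl h
        · exact Or.inr ⟨hx, h⟩
    _ ≤ _ := lintegral_union_le _ _ _
    _ ≤ _ := add_le_add h1 h2
    _ = _ := by
      rw [← ENNReal.ofReal_add (by positivity) (by positivity)]
      ring_nf

lemma cartan_fin (k : ℕ) (hk : 0 < k) (z : Fin k → ℂ) (h : ℝ) (hh : 0 < h) (A : Set ℝ)
    (hfin : volume A ≠ ⊤) (hAm : MeasurableSet A)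
    (hA : ∀ x ∈ A, ∏ i, ‖(x : ℂ) - z i‖ ≤ h ^ k) : volume A ≤ ENNReal.ofReal (25 * h) := by
  by_cases h0 : volume A = 0
  · simp [h0]
  set m := (volume A).toReal with hmdef
  have hm : 0 < m := ENNReal.toReal_pos h0 hfin
  have hmA : volume A = ENNReal.ofReal m := (ENNReal.ofReal_toReal hfin).symm
  have hk' : (0:ℝ) < k := by exact_mod_cast hk
  have hol := ENNReal.lintegral_prod_norm_pow_le (μ := volume.restrict A) Finset.univ
    (f := fun (i : Fin k) (x : ℝ) => (ENNReal.ofReal |x - (z i).re|) ^ (-1/2 : ℝ))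
    (fun i _ => (lint_meas _).aemeasurable) (p := fun _ => (1 / k : ℝ))
    (by simp; field_simp) (fun _ _ => by positivity)
  have hr : ∏ i : Fin k, (∫⁻ x in A, (ENNReal.ofReal |x - (z i).re|) ^ (-1/2 : ℝ)) ^ (1 / k : ℝ)
      ≤ ENNReal.ofReal (5 * m ^ (1/2 : ℝ)) := by
    calc _ ≤ ∏ i : Fin k, (ENNReal.ofReal (5 * m ^ (1/2 : ℝ))) ^ (1 / k : ℝ) := by
          apply Finset.prod_le_prod'
          intro i _
          exact ENNReal.rpow_le_rpow (lint_set A _ m hm hmA) (by positivity)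
      _ = _ := by
          rw [Finset.prod_const, Finset.card_univ, Fintype.card_fin, ← ENNReal.rpow_natCast,
            ← ENNReal.rpow_mul, one_div_mul_cancel hk'.ne', ENNReal.rpow_one]
  have hl : ENNReal.ofReal (h ^ (-1/2 : ℝ)) * volume A ≤
      ∫⁻ x in A, ∏ i : Fin k, ((ENNReal.ofReal |x - (z i).re|) ^ (-1/2 : ℝ)) ^ (1 / k : ℝ) := by
    rw [← setLIntegral_const]
    apply setLIntegral_mono' hAm
    intro x hx
    have e : ∀ i : Fin k, ((ENNReal.ofReal |x - (z i).re|) ^ (-1/2 : ℝ)) ^ (1 / k : ℝ)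
        = (ENNReal.ofReal |x - (z i).re|) ^ (-1/(2 * k) : ℝ) := by
      intro i
      rw [← ENNReal.rpow_mul]
      congr 1
      field_simp
    simp only [e]
    rw [ENNReal.prod_rpow_of_ne_top (fun _ _ => ENNReal.ofReal_ne_top),
      ← ENNReal.ofReal_prod_of_nonneg (fun _ _ => abs_nonneg _)]
    have hp : ∏ i, |x - (z i).re| ≤ h ^ k := by
      refine le_trans ?_ (hA x hx)
      apply Finset.prod_le_prod (fun _ _ => abs_nonneg _)
      intro i _
      have := Complex.abs_re_le_norm ((x : ℂ) - z i)
      simpa using this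
    calc ENNReal.ofReal (h ^ (-1/2 : ℝ)) = (ENNReal.ofReal (h ^ k)) ^ (-1/(2 * k) : ℝ) := by
          rw [ENNReal.ofReal_rpow_of_pos (by positivity), ← Real.rpow_natCast, ← Real.rpow_mul hh.le]
          congr 2
          field_simp
      _ ≤ _ := by
          rw [show (-1/(2 * k) : ℝ) = -(1/(2*k)) by ring, ENNReal.rpow_neg, ENNReal.rpow_neg]
          apply ENNReal.inv_le_inv.mpr
          exact ENNReal.rpow_le_rpow (ENNReal.ofReal_le_ofReal hp) (by positivity)
  have hfinal := (hl.trans hol).trans hr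
  rw [hmA, ← ENNReal.ofReal_mul (by positivity), ENNReal.ofReal_le_ofReal_iff (by positivity)] at hfinal
  rw [hmA]
  apply ENNReal.ofReal_le_ofReal
  have e1 : h ^ (-1/2 : ℝ) = (Real.sqrt h)⁻¹ := by
    rw [Real.sqrt_eq_rpow, ← Real.rpow_neg hh.le]; norm_num
  rw [e1, ← Real.sqrt_eq_rpow] at hfinal
  have hs := Real.sqrt_pos.mpr hh
  have hs2 := Real.sqrt_pos.mpr hm
  have a1 := Real.mul_self_sqrt hh.le
  have a2 := Real.mul_self_sqrt hm.le
  rw [inv_mul_le_iff₀ hs] at hfinal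
  have : √m ≤ 5 * √h := by
    apply le_of_mul_le_mul_right _ hs2
    nlinarith
  nlinarith

lemma cartan (s : Multiset ℂ) (hs : 0 < s.card) (h : ℝ) (hh : 0 < h) (A : Set ℝ)
    (hfin : volume A ≠ ⊤) (hAm : MeasurableSet A)
    (hA : ∀ x ∈ A, (s.map (fun z : ℂ => ‖(x : ℂ) - z‖)).prod ≤ h ^ s.card) :
    volume A ≤ ENNReal.ofReal (25 * h) := by
  induction s using Quotient.inductionOn with
  | h l =>
    apply cartan_fin l.length (by simpa using hs) (fun i => l.get i) h hh A hfin hAm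
    intro x hx
    have := hA x hx
    simp only [Multiset.quot_mk_to_coe, Multiset.map_coe, Multiset.prod_coe, Multiset.coe_card] at this
    refine le_trans (le_of_eq ?_) this
    rw [← List.prod_ofFn]
    congr 1
    apply List.ext_get
    · simp
    · intro i h1 h2
      simp

lemma comp_sum (U A : Set ℝ) (hU : IsOpen U) (hAU : A ⊆ U) (β : ENNReal)
    (h : ∀ x ∈ U, volume (A ∩ connectedComponentIn U x) ≤ β * volume (connectedComponentIn U x)) :
    volume A ≤ β * volume U := by
  set S : Set (Set ℝ) := (fun x => connectedComponentIn U x) '' U with hS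
  have hdis : S.PairwiseDisjoint id := by
    rintro _ ⟨x, hx, rfl⟩ _ ⟨y, hy, rfl⟩ hne
    simp only [Function.onFun, id]
    rw [Set.disjoint_left]
    intro w hw1 hw2
    apply hne
    simp only
    rw [connectedComponentIn_eq hw1, connectedComponentIn_eq hw2]
  have hop : ∀ C ∈ S, IsOpen (id C) := by
    rintro _ ⟨x, hx, rfl⟩; exact hU.connectedComponentIn
  have hcount : S.Countable := hdis.countable_of_isOpen hop (by
    rintro _ ⟨x, hx, rfl⟩; exact ⟨x, mem_connectedComponentIn hx⟩)
  calc volume A ≤ volume (⋃ C ∈ S, A ∩ C) := by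
        apply measure_mono
        intro x hx
        simp only [mem_iUnion]
        exact ⟨_, ⟨x, hAU hx, rfl⟩, hx, mem_connectedComponentIn (hAU hx)⟩
    _ ≤ ∑' C : S, volume (A ∩ C) := measure_biUnion_le _ hcount _
    _ ≤ ∑' C : S, β * volume (C : Set ℝ) := by
        apply ENNReal.tsum_le_tsum
        rintro ⟨_, x, hx, rfl⟩
        exact h x hx
    _ = β * ∑' C : S, volume (C : Set ℝ) := ENNReal.tsum_mul_left
    _ = β * volume (⋃ C ∈ S, C) := by
        have := measure_biUnion (μ := volume) hcount hdis (fun C hC => (hop C hC).measurableSet)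
        simp only [id] at this
        rw [this]
    _ ≤ β * volume U := by
        gcongr
        apply iUnion₂_subset
        rintro _ ⟨x, hx, rfl⟩
        exact connectedComponentIn_subset _ _

/-- each component has a boundary point where f ≥ M. -/
lemma comp_end (f : ℝ → ℝ) (hf : Continuous f) (M : ℝ) (U : Set ℝ)
    (hU : U = {x | x ∈ Ioo (-1:ℝ) 1 ∧ f x < M}) (hvol : volume U < 2) (x : ℝ) (hx : x ∈ U) :
    ∃ ℓ : ℝ, 0 < ℓ ∧ volume (connectedComponentIn U x) = ENNReal.ofReal ℓ ∧
      ∃ x₀ ∈ Icc (-1:ℝ) 1, M ≤ f x₀ ∧ ∀ y ∈ connectedComponentIn U x, |y - x₀| ≤ ℓ := by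
  have hUo : IsOpen U := by
    rw [hU]; exact isOpen_Ioo.inter (isOpen_lt hf continuous_const)
  set C := connectedComponentIn U x with hC
  have hCo : IsOpen C := hUo.connectedComponentIn
  have hxC : x ∈ C := mem_connectedComponentIn hx
  have hCU : C ⊆ U := connectedComponentIn_subset _ _
  have hCp : IsPreconnected C := isPreconnected_connectedComponentIn
  have hCI : C ⊆ Ioo (-1:ℝ) 1 := fun y hy => by
    have := hCU hy; rw [hU] at this; exact this.1
  have hb : BddBelow C := ⟨-1, fun y hy => (hCI hy).1.le⟩
  have ha : BddAbove C := ⟨1, fun y hy => (hCI hy).2.le⟩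
  have hne : C.Nonempty := ⟨x, hxC⟩
  set a := sInf C with hadef
  set b := sSup C with hbdef
  have hsub : C ⊆ Icc a b := fun y hy => ⟨csInf_le hb hy, le_csSup ha hy⟩
  have hsup : Ioo a b ⊆ C := IsConnected.Ioo_csInf_csSup_subset ⟨hne, hCp⟩ hb ha
  have hv : volume C = ENNReal.ofReal (b - a) := by
    apply le_antisymm
    · rw [← Real.volume_Icc]; exact measure_mono hsub
    · rw [← Real.volume_Ioo]; exact measure_mono hsup
  have hvpos : 0 < volume C := hCo.measure_pos _ hne
  have hab : 0 < b - a := by rw [hv] at hvpos; exact ENNReal.ofReal_pos.mp hvpos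
  have ha1 : -1 ≤ a := le_csInf hne (fun y hy => (hCI hy).1.le)
  have hb1 : b ≤ 1 := csSup_le hne (fun y hy => (hCI hy).2.le)
  have hcl : ∀ y ∈ closure C, y ∈ U → y ∈ C := by
    intro y hy hyU
    have hp : IsPreconnected (insert y C) := hCp.subset_closure (subset_insert _ _)
      (insert_subset hy subset_closure)
    exact hp.subset_connectedComponentIn (mem_insert_of_mem _ hxC) (insert_subset hyU hCU) (mem_insert _ _)
  have haC : a ∉ C := fun h => by
    obtain ⟨e, he, hball⟩ := Metric.isOpen_iff.mp hCo a h
    have hy : a - e / 2 ∈ C := hball (by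
      rw [Metric.mem_ball, Real.dist_eq, abs_lt]; constructor <;> linarith)
    have := csInf_le hb hy
    linarith
  have hbC : b ∉ C := fun h => by
    obtain ⟨e, he, hball⟩ := Metric.isOpen_iff.mp hCo b h
    have hy : b + e / 2 ∈ C := hball (by
      rw [Metric.mem_ball, Real.dist_eq, abs_lt]; constructor <;> linarith)
    have := le_csSup ha hy
    linarith
  have haU : a ∉ U := fun h => haC (hcl a (csInf_mem_closure hne hb) h)
  have hbU : b ∉ U := fun h => hbC (hcl b (csSup_mem_closure hne ha) h)
  refine ⟨b - a, hab, hv, ?_⟩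
  by_cases h1 : -1 < a
  · refine ⟨a, ⟨ha1, by linarith⟩, ?_, ?_⟩
    · by_contra hc
      exact haU (by rw [hU]; exact ⟨⟨h1, by linarith⟩, not_le.mp hc⟩)
    · intro y hy
      have := hsub hy
      rw [abs_of_nonneg (by linarith [this.1])]; linarith [this.2]
  · have h1' : a = -1 := le_antisymm (not_lt.mp h1) ha1
    have h2 : b < 1 := by
      by_contra hc
      have h2' : b = 1 := le_antisymm hb1 (not_lt.mp hc)
      have := measure_mono (μ := volume) hCU
      rw [hv, h1', h2'] at this
      norm_num at this
      exact absurd hvol (not_lt.mpr this)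
    refine ⟨b, ⟨by linarith, hb1⟩, ?_, ?_⟩
    · by_contra hc
      exact hbU (by rw [hU]; exact ⟨⟨by linarith, h2⟩, not_le.mp hc⟩)
    · intro y hy
      have := hsub hy
      rw [abs_sub_comm, abs_of_nonneg (by linarith [this.2])]; linarith [this.1]
/-- The growth estimate seen from a point of [-1,1]. -/
lemma growth_pt (s : Multiset ℂ) (x₀ B η R : ℝ) (hx₀ : x₀ ∈ Icc (-1:ℝ) 1) (hη : 0 < η) (hη1 : η ≤ 1)
    (hR : R = (Real.cosh η - 1) / 8)
    (hB : ∀ y ∈ Icc (-1:ℝ) 1, 2 * R ≤ |y - x₀| → (s.map (fun z : ℂ => ‖(y : ℂ) - z‖)).prod ≤ B) :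
    (s.map (fun z : ℂ => ‖(x₀ : ℂ) - z‖)).prod ≤ B * Real.exp (η * s.card) := by
  have hc1 : 1 ≤ Real.cosh η := Real.one_le_cosh η
  have hc3 : Real.cosh η ≤ 3 := by
    rw [Real.cosh_eq]
    have h1 : Real.exp η ≤ Real.exp 1 := Real.exp_le_exp.mpr hη1
    have h2 : Real.exp (-η) ≤ 1 := Real.exp_le_one_iff.mpr (by linarith)
    have := Real.exp_one_lt_d9
    linarith
  rcases le_total x₀ 0 with hx | hx
  · have := growth s (x₀ + Real.cosh η / 4) (-1/4) B η hη (by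
      intro θ
      have t1 := Real.cos_le_one θ
      have t2 := Real.neg_one_le_cos θ
      apply hB
      · constructor <;> linarith [hx₀.1]
      · refine le_trans ?_ (le_abs_self _)
        rw [hR]; linarith)
    rwa [show x₀ + Real.cosh η / 4 + -1/4 * Real.cosh η = x₀ by ring] at this
  · have := growth s (x₀ - Real.cosh η / 4) (1/4) B η hη (by
      intro θ
      have t1 := Real.cos_le_one θ
      have t2 := Real.neg_one_le_cos θ
      apply hB
      · constructor <;> linarith [hx₀.2]
      · refine le_trans ?_ (neg_le_abs _)
        rw [hR]; linarith)
    rwa [show x₀ - Real.cosh η / 4 + 1/4 * Real.cosh η = x₀ by ring] at this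

lemma prod_le_pow (s : Multiset ℂ) (f : ℂ → ℝ) (r : ℝ) (h0 : ∀ z ∈ s, 0 ≤ f z) (h : ∀ z ∈ s, f z ≤ r) :
    (s.map f).prod ≤ r ^ s.card := by
  have := Multiset.prod_map_le_prod_map₀ f (fun _ => r) h0 h
  simpa using this

lemma pow_le_prod (s : Multiset ℂ) (f : ℂ → ℝ) (r : ℝ) (h0 : 0 ≤ r) (h : ∀ z ∈ s, r ≤ f z) :
    r ^ s.card ≤ (s.map f).prod := by
  have := Multiset.prod_map_le_prod_map₀ (fun _ => r) f (fun _ _ => h0) h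
  simpa using this

lemma prod_nn (s : Multiset ℂ) (x : ℂ) : 0 ≤ (s.map (fun z : ℂ => ‖x - z‖)).prod := by
  apply Multiset.prod_nonneg
  intro a ha
  obtain ⟨z, _, rfl⟩ := Multiset.mem_map.mp ha
  exact norm_nonneg _

open Classical in
/-- local estimate near a point where the polynomial is not too small. -/
lemma local_est (s : Multiset ℂ) (n : ℕ) (hn : 0 < n) (hs : s.card ≤ n) (a N δ c η R K ℓ x₀ : ℝ)
    (ha : 0 < a) (hN : 0 < N) (hδ : 0 < δ) (hc : 0 < c)
    (hη : 0 < η) (hη1 : η ≤ 1) (hηδ : η < (1 - c) * δ)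
    (hR : R = (Real.cosh η - 1) / 8) (hRpos : 0 < R) (hK : K = 1 / (1 - Real.exp (-η)))
    (hℓ : 0 < ℓ) (hKℓ : K * ℓ ≤ R) (hx₀ : x₀ ∈ Icc (-1:ℝ) 1)
    (hF : ∀ y ∈ Icc (-1:ℝ) 1, a * (s.map (fun z : ℂ => ‖(y : ℂ) - z‖)).prod ≤ N)
    (hFx : Real.exp (-(c * δ) * n) * N ≤ a * (s.map (fun z : ℂ => ‖(x₀ : ℂ) - z‖)).prod)
    (A : Set ℝ) (hfin : volume A ≠ ⊤) (hAm : MeasurableSet A)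
    (hA1 : ∀ x ∈ A, |x - x₀| ≤ ℓ)
    (hA2 : ∀ x ∈ A, a * (s.map (fun z : ℂ => ‖(x : ℂ) - z‖)).prod ≤ Real.exp (-δ * n) * N) :
    volume A ≤ ENNReal.ofReal (25 * (K * ℓ * (K * ℓ / R) ^ (((1 - c) * δ - η) / (c * δ + η)))) := by
  have hn' : (0:ℝ) < n := by exact_mod_cast hn
  have hexp : Real.exp (-η) < 1 := by rw [Real.exp_lt_one_iff]; linarith
  have hKpos : 0 < K := by rw [hK]; apply one_div_pos.mpr; linarith
  have hKe : Real.exp (-η) = 1 - 1 / K := by rw [hK]; simp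
  set r := K * ℓ with hr
  have hrpos : 0 < r := by positivity
  set s₁ := s.filter (fun z => ‖(x₀ : ℂ) - z‖ ≤ r) with hs₁
  set s₂ := s.filter (fun z => ¬ ‖(x₀ : ℂ) - z‖ ≤ r) with hs₂
  have hsplit : ∀ y : ℝ, (s.map (fun z : ℂ => ‖(y : ℂ) - z‖)).prod =
      (s₁.map (fun z : ℂ => ‖(y : ℂ) - z‖)).prod * (s₂.map (fun z : ℂ => ‖(y : ℂ) - z‖)).prod := by
    intro y
    rw [← Multiset.prod_add, ← Multiset.map_add, Multiset.filter_add_not]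
  have hcard2 : (s₂.card : ℝ) ≤ n := by
    exact_mod_cast (Multiset.card_le_card (Multiset.filter_le _ s)).trans hs
  have hnear : ∀ z ∈ s₁, ‖(x₀ : ℂ) - z‖ ≤ r := fun z hz => (Multiset.mem_filter.mp hz).2
  have hfar : ∀ z ∈ s₂, r < ‖(x₀ : ℂ) - z‖ := fun z hz => not_le.mp (Multiset.mem_filter.mp hz).2
  set k := s₁.card with hk
  set p := (s₂.map (fun z : ℂ => ‖(x₀ : ℂ) - z‖)).prod with hp
  have hppos : 0 < p := by
    apply Multiset.prod_pos
    intro w hw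
    obtain ⟨z, hz, rfl⟩ := Multiset.mem_map.mp hw
    exact hrpos.trans (hfar z hz)
  have hnear_x0 : (s₁.map (fun z : ℂ => ‖(x₀ : ℂ) - z‖)).prod ≤ r ^ k :=
    prod_le_pow _ _ _ (fun _ _ => norm_nonneg _) hnear
  -- the count of near roots
  have hgrow : p ≤ N / (a * R ^ k) * Real.exp (η * s₂.card) := by
    apply growth_pt s₂ x₀ _ η R hx₀ hη hη1 hR
    intro y hy hyR
    rw [le_div_iff₀ (by positivity)]
    have h1 := hF y hy
    rw [hsplit y] at h1
    have h2 : R ^ k ≤ (s₁.map (fun z : ℂ => ‖(y : ℂ) - z‖)).prod := by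
      apply pow_le_prod _ _ _ hRpos.le
      intro z hz
      have t1 := hnear z hz
      have t2 : ‖(y : ℂ) - x₀‖ = |y - x₀| := by
        rw [← Complex.ofReal_sub, Complex.norm_real, Real.norm_eq_abs]
      have t3 := norm_sub_le_norm_sub_add_norm_sub (y : ℂ) z x₀
      rw [norm_sub_rev z] at t3
      linarith
    calc _ = a * (R ^ k * (s₂.map (fun z : ℂ => ‖(y : ℂ) - z‖)).prod) := by ring
      _ ≤ a * ((s₁.map (fun z : ℂ => ‖(y : ℂ) - z‖)).prod * (s₂.map (fun z : ℂ => ‖(y : ℂ) - z‖)).prod) := by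
        gcongr
        exact prod_nn _ _
      _ ≤ N := h1
  have hgrow2 : p ≤ N / (a * R ^ k) * Real.exp (η * n) := by
    refine hgrow.trans ?_
    gcongr
  have hcount : Real.exp (-((c * δ + η) * n)) ≤ (r / R) ^ k := by
    have h1 : Real.exp (-(c * δ) * n) * N ≤ a * (r ^ k * (N / (a * R ^ k) * Real.exp (η * n))) := by
      refine hFx.trans ?_
      rw [hsplit x₀]
      gcongr
    have h2 : a * (r ^ k * (N / (a * R ^ k) * Real.exp (η * n))) = (r / R) ^ k * Real.exp (η * n) * N := by
      rw [div_pow]; field_simp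
    rw [h2] at h1
    have h3 := le_of_mul_le_mul_right h1 hN
    have h4 : Real.exp (-((c * δ + η) * n)) = Real.exp (-(c * δ) * n) * Real.exp (-(η * n)) := by
      rw [← Real.exp_add]; ring_nf
    rw [h4]
    calc _ ≤ (r / R) ^ k * Real.exp (η * n) * Real.exp (-(η * n)) := by gcongr
      _ = _ := by rw [mul_assoc, ← Real.exp_add]; simp
  set β := ((1 - c) * δ - η) / (c * δ + η) with hβ
  have hden : 0 < c * δ + η := by positivity
  have hβpos : 0 < β := div_pos (by linarith) hden
  have hrR : 0 < r / R := by positivity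
  have hcount2 : Real.exp (-(((1 - c) * δ - η) * n)) ≤ ((r / R) ^ β) ^ k := by
    have h1 := Real.rpow_le_rpow (Real.exp_pos _).le hcount hβpos.le
    rw [← Real.exp_mul] at h1
    calc _ = Real.exp (-((c * δ + η) * n) * β) := by
          congr 1; rw [hβ]; field_simp
      _ ≤ _ := h1
      _ = _ := by
        rw [← Real.rpow_natCast, ← Real.rpow_natCast, ← Real.rpow_mul hrR.le, ← Real.rpow_mul hrR.le, mul_comm]
  -- pointwise estimate on A
  have hpt : ∀ x ∈ A, (s₁.map (fun z : ℂ => ‖(x : ℂ) - z‖)).prod ≤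
      Real.exp (-(((1 - c) * δ - η) * n)) * r ^ k := by
    intro x hx
    have hfarx : Real.exp (-(η * n)) * p ≤ (s₂.map (fun z : ℂ => ‖(x : ℂ) - z‖)).prod := by
      have h1 : (s₂.map (fun z : ℂ => Real.exp (-η) * ‖(x₀ : ℂ) - z‖)).prod ≤
          (s₂.map (fun z : ℂ => ‖(x : ℂ) - z‖)).prod := by
        apply Multiset.prod_map_le_prod_map₀
        · intro z _; positivity
        · intro z hz
          have t1 := hfar z hz
          have t2 : ‖(x₀ : ℂ) - x‖ = |x - x₀| := by
            rw [← Complex.ofReal_sub, Complex.norm_real, Real.norm_eq_abs, abs_sub_comm]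
          have t3 := norm_sub_le_norm_sub_add_norm_sub (x₀ : ℂ) x z
          have t4 := hA1 x hx
          have t5 : ℓ ≤ 1 / K * ‖(x₀ : ℂ) - z‖ := by
            rw [one_div, le_inv_mul_iff₀ hKpos]; exact t1.le
          rw [hKe]
          linarith
      rw [Multiset.prod_map_mul] at h1
      simp only [Multiset.map_const', Multiset.prod_replicate] at h1
      refine le_trans ?_ h1
      gcongr
      rw [← Real.exp_nat_mul]
      apply Real.exp_le_exp.mpr
      nlinarith
    have h1 := hA2 x hx
    rw [hsplit x] at h1
    rw [hsplit x₀] at hFx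
    set q := (s₁.map (fun z : ℂ => ‖(x : ℂ) - z‖)).prod with hq
    have hq0 : 0 ≤ q := prod_nn _ _
    have h2 : a * (q * (Real.exp (-(η * n)) * p)) ≤
        Real.exp (-((1 - c) * δ * n)) * (a * (r ^ k * p)) := by
      calc _ ≤ a * (q * (s₂.map (fun z : ℂ => ‖(x : ℂ) - z‖)).prod) := by gcongr
        _ ≤ Real.exp (-δ * n) * N := h1
        _ = Real.exp (-((1 - c) * δ * n)) * (Real.exp (-(c * δ) * n) * N) := by
          rw [← mul_assoc, ← Real.exp_add]; ring_nf
        _ ≤ Real.exp (-((1 - c) * δ * n)) *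
            (a * ((s₁.map (fun z : ℂ => ‖(x₀ : ℂ) - z‖)).prod * p)) := by gcongr
        _ ≤ _ := by gcongr
    have h3 : (q * Real.exp (-(η * n))) * (a * p) ≤ (Real.exp (-((1 - c) * δ * n)) * r ^ k) * (a * p) := by
      calc _ = a * (q * (Real.exp (-(η * n)) * p)) := by ring
        _ ≤ _ := h2
        _ = _ := by ring
    have h4 := le_of_mul_le_mul_right h3 (by positivity)
    calc q = q * Real.exp (-(η * n)) * Real.exp (η * n) := by
          rw [mul_assoc, ← Real.exp_add]; simp
      _ ≤ Real.exp (-((1 - c) * δ * n)) * r ^ k * Real.exp (η * n) := by gcongr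
      _ = _ := by
        rw [mul_right_comm, ← Real.exp_add]; ring_nf
  rcases Nat.eq_zero_or_pos k with hk0 | hkpos
  · have : A = ∅ := by
      rw [eq_empty_iff_forall_notMem]
      intro x hx
      have h1 := hpt x hx
      have h2 : s₁ = 0 := Multiset.card_eq_zero.mp hk0
      rw [hk0, h2] at h1
      simp only [Multiset.map_zero, Multiset.prod_zero, pow_zero, mul_one] at h1
      rw [Real.one_le_exp_iff] at h1
      have : 0 < ((1 - c) * δ - η) * n := mul_pos (by linarith) hn'
      linarith
    simp [this]
  · apply cartan s₁ hkpos _ (by positivity) A hfin hAm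
    intro x hx
    refine (hpt x hx).trans ?_
    calc _ ≤ ((r / R) ^ β) ^ k * r ^ k := mul_le_mul_of_nonneg_right hcount2 (pow_nonneg hrpos.le _)
      _ = (r * (r / R) ^ β) ^ k := by rw [mul_pow r, mul_comm]

lemma abs_eval_eq (P : Polynomial ℝ) (x : ℝ) :
    |P.eval x| = |P.leadingCoeff| *
      ((P.map (algebraMap ℝ ℂ)).roots.map (fun z : ℂ => ‖(x : ℂ) - z‖)).prod := by
  set Q := P.map (algebraMap ℝ ℂ) with hQ
  have h1 := (IsAlgClosed.splits Q).eq_prod_roots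
  have h2 : Q.eval (x : ℂ) = ((P.eval x : ℝ) : ℂ) := by
    have := Polynomial.eval_map_apply (p := P) (algebraMap ℝ ℂ) x
    simpa [hQ] using this
  have h3 : ‖Q.eval (x : ℂ)‖ = |P.eval x| := by
    rw [h2, Complex.norm_real, Real.norm_eq_abs]
  rw [← h3]
  conv_lhs => rw [h1]
  rw [Polynomial.eval_mul, Polynomial.eval_C, norm_mul]
  congr 1
  · rw [hQ, Polynomial.leadingCoeff_map]
    simp
  · rw [Polynomial.eval_multiset_prod, Multiset.map_map]
    have := map_multiset_prod (normHom : ℂ →*₀ ℝ) (Q.roots.map (fun z : ℂ => (x : ℂ) - z))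
    simpa using this

lemma abs_eval_le_supNorm (P : Polynomial ℝ) (x : ℝ) (hx : x ∈ Icc (-1:ℝ) 1) :
    |P.eval x| ≤ supNorm P := by
  apply le_csSup
  · exact (isCompact_Icc.image (by fun_prop : Continuous fun x => |P.eval x|)).bddAbove
  · exact ⟨x, hx, rfl⟩

lemma supNorm_pos (P : Polynomial ℝ) (hP : P ≠ 0) : 0 < supNorm P := by
  by_contra hc
  apply hP
  apply Polynomial.eq_zero_of_infinite_isRoot
  apply (Icc_infinite (show (-1:ℝ) < 1 by norm_num)).mono
  intro x hx
  have := abs_eval_le_supNorm P x hx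
  have h0 : |P.eval x| ≤ 0 := by linarith
  exact abs_nonpos_iff.mp h0

lemma sublevel_closed (P : Polynomial ℝ) (n : ℕ) (δ : ℝ) : IsClosed (sublevelSet P n δ) :=
  isClosed_Icc.inter (isClosed_le P.continuous.abs continuous_const)

lemma sublevel_fin (P : Polynomial ℝ) (n : ℕ) (δ : ℝ) : volume (sublevelSet P n δ) ≠ ⊤ := by
  have : volume (sublevelSet P n δ) ≤ volume (Icc (-1:ℝ) 1) := measure_mono (fun x hx => hx.1)
  exact ne_top_of_le_ne_top (by simp) this

lemma global_est (P : Polynomial ℝ) (hP : P ≠ 0) (n : ℕ) (hn : 0 < n) (hPn : P.natDegree ≤ n)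
    (δ c η R K Λ : ℝ)
    (hδ : 0 < δ) (hc : 0 < c) (hc1 : c < 1)
    (hη : 0 < η) (hη1 : η ≤ 1) (hηδ : η < (1 - c) * δ)
    (hR : R = (Real.cosh η - 1) / 8) (hRpos : 0 < R) (hK : K = 1 / (1 - Real.exp (-η)))
    (hKpos : 0 < K)
    (hΛ : Λ = (volume (sublevelSet P n (c * δ))).toReal) (hΛ2 : Λ < 2) (hKΛ : K * Λ ≤ R) :
    (volume (sublevelSet P n δ)).toReal ≤
      25 * K * (K * Λ / R) ^ (((1 - c) * δ - η) / (c * δ + η)) * Λ := by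
  have hn' : (0:ℝ) < n := by exact_mod_cast hn
  have hNpos := supNorm_pos P hP
  set β := ((1 - c) * δ - η) / (c * δ + η) with hβ
  have hβpos : 0 < β := div_pos (by linarith) (by positivity)
  set M := Real.exp (-(c * δ) * n) * supNorm P with hM
  set U : Set ℝ := {x | x ∈ Ioo (-1:ℝ) 1 ∧ |P.eval x| < M} with hU
  have hcont : Continuous fun x => |P.eval x| := by fun_prop
  have hUo : IsOpen U := isOpen_Ioo.inter (isOpen_lt hcont continuous_const)
  have hUE : U ⊆ sublevelSet P n (c * δ) := fun x hx => ⟨Ioo_subset_Icc_self hx.1, hx.2.le⟩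
  have hΛ0 : 0 ≤ Λ := by rw [hΛ]; exact ENNReal.toReal_nonneg
  have hΛE : volume (sublevelSet P n (c * δ)) = ENNReal.ofReal Λ := by
    rw [hΛ, ENNReal.ofReal_toReal (sublevel_fin _ _ _)]
  have hUv : volume U ≤ ENNReal.ofReal Λ := hΛE ▸ measure_mono hUE
  have hU2 : volume U < 2 := by
    refine hUv.trans_lt ?_
    rw [show (2 : ENNReal) = ENNReal.ofReal 2 by simp]
    exact (ENNReal.ofReal_lt_ofReal_iff (by norm_num)).mpr hΛ2
  set A := sublevelSet P n δ ∩ Ioo (-1:ℝ) 1 with hA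
  have hAm : MeasurableSet A := (sublevel_closed _ _ _).measurableSet.inter measurableSet_Ioo
  have hAU : A ⊆ U := by
    rintro x ⟨hx1, hx2⟩
    refine ⟨hx2, hx1.2.trans_lt ?_⟩
    rw [hM]
    apply mul_lt_mul_of_pos_right _ hNpos
    apply Real.exp_lt_exp.mpr
    have : c * δ < δ := by nlinarith
    nlinarith
  have hAv : volume (sublevelSet P n δ) ≤ volume A := by
    have : sublevelSet P n δ ⊆ A ∪ {-1, 1} := by
      intro x hx
      rcases eq_or_lt_of_le hx.1.1 with h | h
      · right; left; exact h.symm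
      · rcases eq_or_lt_of_le hx.1.2 with h' | h'
        · right; right; exact h'
        · left; exact ⟨hx, h, h'⟩
    calc _ ≤ _ := measure_mono this
      _ ≤ _ := measure_union_le _ _
      _ = _ := by rw [(Set.toFinite ({-1, 1} : Set ℝ)).measure_zero, add_zero]
  have hmain : volume A ≤ ENNReal.ofReal (25 * K * (K * Λ / R) ^ β) * volume U := by
    apply comp_sum U A hUo hAU
    intro x hx
    obtain ⟨ℓ, hℓ, hvol, x₀, hx₀, hMx, hdist⟩ := comp_end (fun x => |P.eval x|) hcont M U hU hU2 x hx
    have hℓΛ : ℓ ≤ Λ := by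
      have := (measure_mono (μ := volume) (connectedComponentIn_subset U x)).trans hUv
      rw [hvol] at this
      exact (ENNReal.ofReal_le_ofReal_iff hΛ0).mp this
    have hle := local_est (P.map (algebraMap ℝ ℂ)).roots n hn
      ((Polynomial.card_roots' _).trans ((Polynomial.natDegree_map_le).trans hPn))
      |P.leadingCoeff| (supNorm P) δ c η R K ℓ x₀ (abs_pos.mpr (Polynomial.leadingCoeff_ne_zero.mpr hP))
      hNpos hδ hc hη hη1 hηδ hR hRpos hK hℓ
      ((mul_le_mul_of_nonneg_left hℓΛ hKpos.le).trans hKΛ) hx₀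
      (fun y hy => by rw [← abs_eval_eq]; exact abs_eval_le_supNorm P y hy)
      (by rw [← abs_eval_eq]; exact hMx)
      (A ∩ connectedComponentIn U x)
      (ne_top_of_le_ne_top (sublevel_fin P n δ) (measure_mono (fun y hy => hy.1.1)))
      (hAm.inter hUo.connectedComponentIn.measurableSet)
      (fun y hy => hdist y hy.2)
      (fun y hy => by rw [← abs_eval_eq]; exact hy.1.1.2)
    refine hle.trans ?_
    rw [hvol, ← ENNReal.ofReal_mul (by positivity)]
    apply ENNReal.ofReal_le_ofReal
    calc _ = 25 * K * (K * ℓ / R) ^ β * ℓ := by ring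
      _ ≤ _ := by gcongr
  have hfin := hAv.trans (hmain.trans (mul_le_mul_right hUv _))
  rw [← ENNReal.ofReal_mul (by positivity)] at hfin
  exact ENNReal.toReal_le_of_le_ofReal (by positivity) hfin

set_option maxHeartbeats 1000000 in
theorem comparison_claim :
    ∀ δ₀ : ℝ, 0 < δ₀ → ∀ c₀ : ℝ, 0 < c₀ → c₀ < 1 → ∀ ε : ℝ, 0 < ε →
    ∃ κ : ℝ, 0 < κ ∧
      ∀ n : ℕ, 0 < n → ∀ P : Polynomial ℝ, P ≠ 0 → P.natDegree ≤ n →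
      ∀ δ : ℝ, δ₀ ≤ δ → ∀ c : ℝ, c₀ ≤ c → c < 1 → ε < (1 - c) / (2 - c) →
      (volume (sublevelSet P n δ)).toReal ≤ κ →
      (volume (sublevelSet P n (c * δ))).toReal ≥
        ((volume (sublevelSet P n δ)).toReal) ^ (1 / (2 - c) + ε) := by
  intro δ₀ hδ₀ c₀ hc₀ hc₀1 ε hε
  set η : ℝ := min (c₀ * ε / 2 * δ₀) 1 with hηdef
  have hη : 0 < η := by rw [hηdef]; positivity
  have hη1 : η ≤ 1 := min_le_right _ _
  have hηδ₀ : η ≤ c₀ * ε / 2 * δ₀ := min_le_left _ _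
  set R : ℝ := (Real.cosh η - 1) / 8 with hR
  have hRpos : 0 < R := by
    have := Real.one_lt_cosh.mpr hη.ne'
    rw [hR]; linarith
  set K : ℝ := 1 / (1 - Real.exp (-η)) with hK
  have hexp : Real.exp (-η) < 1 := by rw [Real.exp_lt_one_iff]; linarith
  have hK1 : 1 ≤ K := by
    rw [hK, le_div_iff₀ (by linarith)]
    have := Real.exp_pos (-η); linarith
  have hKpos : 0 < K := by linarith
  have hR1 : R ≤ 1 := by
    have h1 : Real.exp η ≤ Real.exp 1 := Real.exp_le_exp.mpr hη1
    have := Real.exp_one_lt_d9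
    rw [hR, Real.cosh_eq]; linarith
  set D : ℝ := 25 * K * (K / R) with hD
  have hDpos : 0 < D := by positivity
  set σ : ℝ := (ε / 2) / (1 + ε / 2) with hσ
  have hσpos : 0 < σ := by positivity
  refine ⟨min 1 (min ((R / K) ^ 2) ((1 / D) ^ (1 / σ))), by positivity, ?_⟩
  intro n hn P hP hPn δ hδ c hcc hc1 hεc hκ
  have hc : 0 < c := hc₀.trans_le hcc
  have hδpos : 0 < δ := hδ₀.trans_le hδ
  have hε1 : ε * (2 - c) < 1 - c := by rwa [lt_div_iff₀ (by linarith)] at hεc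
  have hε2 : ε < 1 - c := by nlinarith
  set lam := (volume (sublevelSet P n δ)).toReal with hlam
  set Λ := (volume (sublevelSet P n (c * δ))).toReal with hΛ
  set p := 1 / (2 - c) + ε with hp
  have hp12 : 1 / 2 ≤ p := by
    have : 1 / 2 ≤ 1 / (2 - c) := one_div_le_one_div_of_le (by linarith) (by linarith)
    linarith
  have hlam0 : 0 ≤ lam := ENNReal.toReal_nonneg
  have hΛ0 : 0 ≤ Λ := ENNReal.toReal_nonneg
  rcases hlam0.eq_or_lt with h0 | hlpos
  · rw [← h0, Real.zero_rpow (by linarith)]; exact hΛ0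
  by_contra hcon
  have hcon : Λ < lam ^ p := not_le.mp hcon
  have hl1 : lam ≤ 1 := hκ.trans (min_le_left _ _)
  have hl2 : lam ≤ (R / K) ^ 2 := hκ.trans ((min_le_right _ _).trans (min_le_left _ _))
  have hl3 : lam ≤ (1 / D) ^ (1 / σ) := hκ.trans ((min_le_right _ _).trans (min_le_right _ _))
  have hΛRK : Λ ≤ R / K := by
    calc Λ ≤ lam ^ p := hcon.le
      _ ≤ lam ^ (1 / 2 : ℝ) := Real.rpow_le_rpow_of_exponent_ge hlpos hl1 hp12
      _ ≤ ((R / K) ^ 2) ^ (1 / 2 : ℝ) := by gcongr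
      _ = R / K := by rw [← Real.sqrt_eq_rpow, Real.sqrt_sq (by positivity)]
  have hKΛ : K * Λ ≤ R := by
    rw [le_div_iff₀ hKpos] at hΛRK; linarith
  have hΛ2 : Λ < 2 := by nlinarith
  have hηδ1 : η ≤ c * (ε / 2) * δ := by
    calc η ≤ c₀ * ε / 2 * δ₀ := hηδ₀
      _ = c₀ * (ε / 2) * δ₀ := by ring
      _ ≤ _ := by gcongr
  have hηδ : η < (1 - c) * δ := by
    have : c * (ε / 2) < 1 - c := by nlinarith
    nlinarith
  have hg := global_est P hP n hn hPn δ c η R K Λ hδpos hc hc1 hη hη1 hηδ hR hRpos hK hKpos hΛ hΛ2 hKΛ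
  -- exponents
  set q := (2 - c) / (1 + ε / 2) with hq
  have hq1 : 1 ≤ q := by rw [hq, le_div_iff₀ (by positivity)]; linarith
  have hq2 : q ≤ 2 := by rw [hq, div_le_iff₀ (by positivity)]; linarith
  have hβq : q - 1 ≤ ((1 - c) * δ - η) / (c * δ + η) := by
    have h1 : ((1 - c) * δ - η) / (c * δ + η) = δ / (c * δ + η) - 1 := by
      have : c * δ + η ≠ 0 := by positivity
      field_simp; ring
    rw [h1]
    apply sub_le_sub_right
    rw [hq, div_le_div_iff₀ (by positivity) (by positivity)]
    have h2 : c * δ + η ≤ c * δ * (1 + ε / 2) := by linarith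
    calc (2 - c) * (c * δ + η) ≤ (2 - c) * (c * δ * (1 + ε / 2)) := by
          apply mul_le_mul_of_nonneg_left h2; linarith
      _ = ((2 - c) * c) * (δ * (1 + ε / 2)) := by ring
      _ ≤ 1 * (δ * (1 + ε / 2)) := by
          apply mul_le_mul_of_nonneg_right _ (by positivity)
          nlinarith [sq_nonneg (1 - c)]
      _ = _ := by ring
  have hΛpos : 0 < Λ := by
    rcases hΛ0.eq_or_lt with h | h
    · rw [← h] at hg; simp at hg; linarith
    · exact h
  have hb : lam ≤ D * Λ ^ q := by
    calc lam ≤ _ := hg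
      _ ≤ 25 * K * (K * Λ / R) ^ (q - 1) * Λ := by
        have : (K * Λ / R) ^ (((1 - c) * δ - η) / (c * δ + η)) ≤ (K * Λ / R) ^ (q - 1) :=
          Real.rpow_le_rpow_of_exponent_ge (by positivity) ((div_le_one hRpos).mpr hKΛ) hβq
        gcongr
      _ = 25 * K * (K / R) ^ (q - 1) * Λ ^ q := by
        rw [mul_div_right_comm, Real.mul_rpow (by positivity) hΛ0]
        have : Λ ^ q = Λ ^ (q - 1) * Λ := by
          rw [← Real.rpow_add_one hΛpos.ne']; ring_nf
        rw [this]; ring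
      _ ≤ 25 * K * (K / R) ^ (1 : ℝ) * Λ ^ q := by
        have : (K / R) ^ (q - 1) ≤ (K / R) ^ (1 : ℝ) :=
          Real.rpow_le_rpow_of_exponent_le (by rw [le_div_iff₀ hRpos]; linarith) (by linarith)
        gcongr
      _ = _ := by rw [Real.rpow_one]
  have hpq : 1 + σ ≤ p * q := by
    have e1 : p * q = (1 + ε * (2 - c)) / (1 + ε / 2) := by
      rw [hp, hq]
      have : 2 - c ≠ 0 := by linarith
      field_simp
    have e2 : 1 + σ = (1 + ε) / (1 + ε / 2) := by
      rw [hσ]; field_simp; ring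
    rw [e1, e2]
    gcongr
    nlinarith
  have hlt : lam < D * lam ^ (1 + σ) := by
    calc lam ≤ D * Λ ^ q := hb
      _ < D * (lam ^ p) ^ q := by
        apply mul_lt_mul_of_pos_left _ hDpos
        exact Real.rpow_lt_rpow hΛ0 hcon (by linarith)
      _ = D * lam ^ (p * q) := by rw [Real.rpow_mul hlam0]
      _ ≤ _ := by
        apply mul_le_mul_of_nonneg_left _ hDpos.le
        exact Real.rpow_le_rpow_of_exponent_ge hlpos hl1 hpq
  have hfin : lam ^ σ ≤ 1 / D := by
    calc lam ^ σ ≤ ((1 / D) ^ (1 / σ)) ^ σ := by gcongr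
      _ = 1 / D := by
        rw [← Real.rpow_mul (by positivity), one_div_mul_cancel hσpos.ne', Real.rpow_one]
  have hlast : D * lam ^ (1 + σ) ≤ lam := by
    rw [Real.rpow_add hlpos, Real.rpow_one]
    calc _ = lam * (D * lam ^ σ) := by ring
      _ ≤ lam * (D * (1 / D)) := by gcongr
      _ = lam := by field_simp
  linarith
end

section
/- (Comparison lemma.) For every δ_0 > 0, every t_0 ∈ (0,1) and every γ > 0 there exists κ = κ(δ_0, γ, t_0) > 0 with the following property. Let n be a positive integer, let P be a nonzero real polynomial of degree ≤ n, let δ ≥ δ_0, and let t satisfy t_0 ≤ t < 1 and 0 < γ < 1−t. If |𝔈_P(δ)| ≤ κ, then |𝔈_P(tδ)| ≥ |𝔈_P(δ)|^{t+γ}. -/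
open MeasureTheory Set

/-- Bernstein–Walsh via the Joukowski map. -/
lemma bernstein_walsh (Q : Polynomial ℂ) (n : ℕ) (hQ : Q.natDegree ≤ n) (B : ℝ)
    (hB : ∀ v : ℝ, v ∈ Icc (-1:ℝ) 1 → ‖Q.eval (v:ℂ)‖ ≤ B) (w : ℂ) (hw : 1 ≤ ‖w‖) :
    ‖Q.eval ((w + w⁻¹) / 2)‖ ≤ B * ‖w‖ ^ n := by
  set G : ℂ → ℂ := fun u => ∑ j ∈ Finset.range (n+1), Q.coeff j * (u ^ (n - j) * ((u^2 + 1)/2)^j) with hG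
  have key : ∀ u : ℂ, u ≠ 0 → G u = u ^ n * Q.eval ((u + u⁻¹)/2) := by
    intro u hu
    rw [Polynomial.eval_eq_sum_range' (Nat.lt_succ_of_le hQ), Finset.mul_sum]
    refine Finset.sum_congr rfl fun j hj => ?_
    have hj' : j ≤ n := by simpa [Nat.lt_succ_iff] using hj
    have h1 : (u^2+1)/2 = u * ((u + u⁻¹)/2) := by field_simp
    rw [h1, mul_pow, ← Nat.sub_add_cancel hj', pow_add]
    simp only [Nat.add_sub_cancel]
    ring
  have hd : Differentiable ℂ G := by
    simp only [hG]; fun_prop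
  have hle : ∀ u : ℂ, ‖u‖ ≤ 1 → ‖G u‖ ≤ B := by
    intro u hu
    refine Complex.norm_le_of_forall_mem_frontier_norm_le (U := Metric.ball (0:ℂ) 1)
      Metric.isBounded_ball hd.diffContOnCl ?_ ?_
    · intro z hz
      rw [frontier_ball _ one_ne_zero] at hz
      have hz1 : ‖z‖ = 1 := by simpa using hz
      have hz0 : z ≠ 0 := by intro h; simp [h] at hz1
      rw [key z hz0, norm_mul, norm_pow, hz1, one_pow, one_mul]
      have h2 : (z + z⁻¹)/2 = ((z.re : ℝ) : ℂ) := by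
        rw [Complex.inv_eq_conj hz1, Complex.add_conj]; simp
      rw [h2]
      apply hB
      have := Complex.abs_re_le_norm z
      rw [hz1] at this
      exact abs_le.1 this
    · rw [closure_ball _ one_ne_zero]; simpa using hu
  have hw0 : w ≠ 0 := by intro h; simp [h] at hw; linarith
  have h3 := hle w⁻¹ (by rw [norm_inv]; exact inv_le_one_of_one_le₀ hw)
  rw [key _ (inv_ne_zero hw0), norm_mul, norm_pow, norm_inv, inv_inv, add_comm w⁻¹ w] at h3
  have hp : 0 < ‖w‖ ^ n := by positivity
  rw [inv_pow, inv_mul_le_iff₀ hp] at h3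
  linarith

/-- A polynomial with `k` roots close to `x₀` is small at `x₀`. -/
lemma cluster_bound (R Q : Polynomial ℂ) (n k : ℕ) (hk : 0 < k) (hkn : k ≤ n)
    (hQ : Q.natDegree ≤ n) (ρ : ℝ) (x₀ : ℝ) (hx₀ : x₀ ∈ Icc (-1:ℝ) 1)
    (hbd : ∀ x : ℝ, x ∈ Icc (-1:ℝ) 1 → ‖R.eval (x:ℂ)‖ * ‖Q.eval (x:ℂ)‖ ≤ 1)
    (hR0 : ‖R.eval (x₀:ℂ)‖ ≤ ρ ^ k)
    (hR : ∀ x : ℝ, ρ ≤ |x - x₀| → (|x - x₀| - ρ) ^ k ≤ ‖R.eval (x:ℂ)‖) (hρ : 0 < ρ) :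
    ‖R.eval (x₀:ℂ)‖ * ‖Q.eval (x₀:ℂ)‖ ≤ (54 * ρ * ((n:ℝ)/k) ^ 2) ^ k := by
  have hk' : (0:ℝ) < k := by exact_mod_cast hk
  have hn' : (0:ℝ) < n := by exact_mod_cast lt_of_lt_of_le hk hkn
  set α : ℝ := (k:ℝ)/n with hα
  have hα0 : 0 < α := by positivity
  have hα1 : α ≤ 1 := by rw [hα, div_le_one hn']; exact_mod_cast hkn
  have hinv : (n:ℝ)/k = α⁻¹ := by rw [hα, inv_div]
  rw [hinv]
  set q : ℝ := α^2/(2*(1+α)) with hq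
  have hq0 : 0 < q := by positivity
  have hq1 : α^2/4 ≤ q := by
    rw [hq, div_le_div_iff₀ (by norm_num) (by positivity)]; nlinarith [sq_nonneg α]
  have hq2 : q ≤ 1/4 := by
    rw [hq, div_le_div_iff₀ (by positivity) (by norm_num)]; nlinarith
  set s : ℝ := q/(2+q) with hs
  have hs0 : 0 < s := by positivity
  have hs1 : s * (2 + q) = q := by rw [hs]; field_simp
  have hs2 : α^2/9 ≤ s := by
    rw [hs, le_div_iff₀ (by positivity)]; nlinarith
  have hs3 : s ≤ 1 := by nlinarith
  by_cases hc : s / 2 ≤ ρ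
  · refine (hbd x₀ hx₀).trans (one_le_pow₀ ?_)
    have : α^2 ≤ 54 * ρ := by nlinarith
    rw [inv_pow, ← div_eq_mul_inv, le_div_iff₀ (by positivity)]; linarith
  push Not at hc
  obtain ⟨σ, hσ, hσx⟩ : ∃ σ : ℝ, (|σ| = 1) ∧ ∀ y : ℝ, 0 ≤ y → y ≤ 1 → x₀ + σ * y ∈ Icc (-1:ℝ) 1 := by
    rcases le_total x₀ 0 with h | h
    · exact ⟨1, by simp, fun y h0 h1 => ⟨by linarith [hx₀.1], by linarith⟩⟩
    · exact ⟨-1, by simp, fun y h0 h1 => ⟨by linarith, by linarith [hx₀.2]⟩⟩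
  set A : Polynomial ℂ := Polynomial.C ((x₀ + σ * (s + (1-s)/2) : ℝ) : ℂ)
    + Polynomial.C ((σ * ((1-s)/2) : ℝ) : ℂ) * Polynomial.X with hA
  have hAe : ∀ v : ℝ, A.eval (v:ℂ) = ((x₀ + σ * (s + (1-s)/2 * (1 + v)) : ℝ) : ℂ) := by
    intro v; simp only [hA, Polynomial.eval_add, Polynomial.eval_mul, Polynomial.eval_C, Polynomial.eval_X]
    push_cast; ring
  have hdeg : (Q.comp A).natDegree ≤ n := by
    rw [Polynomial.natDegree_comp]
    have : A.natDegree ≤ 1 := by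
      rw [hA]; 
      refine (Polynomial.natDegree_add_le _ _).trans ?_
      simp only [Polynomial.natDegree_C, zero_le, sup_of_le_right]
      exact (Polynomial.natDegree_C_mul_le _ _).trans Polynomial.natDegree_X_le
    calc _ ≤ n * 1 := Nat.mul_le_mul hQ this
      _ = n := by simp
  have hmain := bernstein_walsh (Q.comp A) n hdeg ((2/s)^k) (by
    intro v hv
    rw [Polynomial.eval_comp, hAe]
    set y : ℝ := s + (1-s)/2 * (1 + v) with hy
    have hy0 : s ≤ y := by rw [hy]; nlinarith [hv.1]
    have hy1 : y ≤ 1 := by rw [hy]; nlinarith [hv.2]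
    have h1 := hbd _ (hσx y (by linarith) hy1)
    have habs : |x₀ + σ * y - x₀| = y := by
      rw [add_sub_cancel_left, abs_mul, hσ, one_mul, abs_of_pos (by linarith)]
    have h2 := hR (x₀ + σ * y) (by rw [habs]; linarith)
    rw [habs] at h2
    have h3 : (s/2)^k ≤ (y-ρ)^k := pow_le_pow_left₀ (by positivity) (by linarith) _
    have h4 : (s/2)^k * ‖Q.eval ((x₀ + σ * y : ℝ):ℂ)‖ ≤ 1 :=
      le_trans (mul_le_mul_of_nonneg_right (h3.trans h2) (norm_nonneg _)) h1
    have h5 : (2/s)^k = ((s/2)^k)⁻¹ := by rw [← inv_pow, inv_div]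
    rw [h5, ← one_div, le_div_iff₀ (by positivity)]; linarith) (((-(1+α) : ℝ)):ℂ) (by
      rw [Complex.norm_real, Real.norm_eq_abs, abs_neg, abs_of_pos (by linarith)]; linarith)
  have hpt : (((-(1+α) : ℝ):ℂ) + ((-(1+α) : ℝ):ℂ)⁻¹)/2 = ((-(1+q) : ℝ) : ℂ) := by
    rw [← Complex.ofReal_inv, ← Complex.ofReal_add]
    have : (-(1+α) + (-(1+α))⁻¹)/2 = -(1+q) := by
      rw [hq]
      have : 1 + α ≠ 0 := by positivity
      rw [inv_neg]
      field_simp; ring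
    rw [← this]; push_cast; ring
  rw [hpt, Polynomial.eval_comp, hAe] at hmain
  have h0 : x₀ + σ * (s + (1-s)/2 * (1 + -(1+q))) = x₀ := by
    have : s + (1-s)/2 * (1 + -(1+q)) = 0 := by linarith
    rw [this]; ring
  rw [h0, Complex.norm_real, Real.norm_eq_abs, abs_neg, abs_of_pos (by linarith : 0 < 1 + α)] at hmain
  have hexp : (1+α)^n ≤ 3 ^ k := by
    have h1 : (1+α) ≤ Real.exp α := by linarith [Real.add_one_le_exp α]
    calc (1+α)^n ≤ (Real.exp α)^n := pow_le_pow_left₀ (by positivity) h1 _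
      _ = (Real.exp 1)^k := by
        rw [← Real.exp_nat_mul, ← Real.exp_nat_mul, hα]; congr 1; field_simp
      _ ≤ 3^k := pow_le_pow_left₀ (by positivity) (by linarith [Real.exp_one_lt_d9]) _
  calc _ ≤ ρ^k * ((2/s)^k * 3^k) := by
        refine mul_le_mul hR0 (hmain.trans ?_) (norm_nonneg _) (by positivity)
        gcongr
    _ = (ρ * (2/s) * 3)^k := by rw [mul_pow, mul_pow]; ring
    _ ≤ _ := by
      refine pow_le_pow_left₀ (by positivity) ?_ _
      have : 2/s ≤ 18 * α⁻¹^2 := by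
        rw [div_le_iff₀ hs0, inv_pow]
        have : α^2 * (α^2)⁻¹ = 1 := mul_inv_cancel₀ (by positivity)
        have h9 : 0 < (α^2)⁻¹ := by positivity
        nlinarith
      nlinarith [mul_le_mul_of_nonneg_left this hρ.le]

lemma lint_sqrt (a l : ℝ) (hl : 0 < l) :
    ∫⁻ x in Icc (a - 4*l) (a + 4*l), ENNReal.ofReal (Real.sqrt (l / |x - a|)) ≤ ENNReal.ofReal (8*l) := by
  have hval : ∫ x in (0:ℝ)..(4*l), x ^ (-(1/2):ℝ) = 4 * Real.sqrt l := by
    rw [integral_rpow (Or.inl (by norm_num))]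
    rw [Real.zero_rpow (by norm_num)]
    rw [show (-(1/2:ℝ) + 1) = 1/2 by norm_num, ← Real.sqrt_eq_rpow, Real.sqrt_mul (by norm_num),
      show (4:ℝ) = 2^2 by norm_num, Real.sqrt_sq (by norm_num)]
    ring
  have hpt : ∀ y : ℝ, 0 ≤ y → Real.sqrt (l / y) = Real.sqrt l * y ^ (-(1/2):ℝ) := by
    intro y hy
    rw [Real.sqrt_div hl.le, Real.rpow_neg hy, ← Real.sqrt_eq_rpow]; rfl
  have hss : Real.sqrt l * (4 * Real.sqrt l) = 4 * l := by
    nlinarith [Real.mul_self_sqrt hl.le]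
  have h1 : ∫⁻ x in Icc a (a + 4*l), ENNReal.ofReal (Real.sqrt (l / |x - a|)) = ENNReal.ofReal (4*l) := by
    have hii : IntervalIntegrable (fun x : ℝ => Real.sqrt l * (x - a) ^ (-(1/2):ℝ)) volume a (a + 4*l) := by
      have := (intervalIntegral.intervalIntegrable_rpow' (a := 0) (b := 4*l) (r := -(1/2)) (by norm_num)).comp_sub_right a
      simp only [zero_add] at this
      rw [add_comm a]
      exact this.const_mul _
    have heq : ∀ x ∈ Ioc a (a+4*l), Real.sqrt (l / |x - a|) = Real.sqrt l * (x - a) ^ (-(1/2):ℝ) := by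
      intro x hx
      rw [abs_of_pos (by linarith [hx.1]), hpt _ (by linarith [hx.1])]
    rw [Measure.restrict_congr_set Ioc_ae_eq_Icc.symm, setLIntegral_congr_fun measurableSet_Ioc (fun x hx => by rw [heq x hx])]
    rw [← ofReal_integral_eq_lintegral_ofReal, ← intervalIntegral.integral_of_le (by linarith)]
    · rw [intervalIntegral.integral_const_mul, intervalIntegral.integral_comp_sub_right (fun x => x ^ (-(1/2):ℝ))]
      simp only [sub_self, add_sub_cancel_left]
      rw [hval, hss]
    · exact (intervalIntegrable_iff_integrableOn_Ioc_of_le (by linarith)).1 hii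
    · refine (ae_restrict_iff' measurableSet_Ioc).2 (Filter.Eventually.of_forall fun x hx => ?_)
      have : 0 < x - a := by linarith [hx.1]
      simp only [Pi.zero_apply]; positivity
  have h2 : ∫⁻ x in Icc (a - 4*l) a, ENNReal.ofReal (Real.sqrt (l / |x - a|)) = ENNReal.ofReal (4*l) := by
    have hii : IntervalIntegrable (fun x : ℝ => Real.sqrt l * (a - x) ^ (-(1/2):ℝ)) volume (a - 4*l) a := by
      have := (intervalIntegral.intervalIntegrable_rpow' (a := 0) (b := 4*l) (r := -(1/2)) (by norm_num)).comp_sub_left a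
      simp only [sub_zero] at this
      exact this.symm.const_mul _
    have heq : ∀ x ∈ Ioc (a-4*l) a, Real.sqrt (l / |x - a|) = Real.sqrt l * (a - x) ^ (-(1/2):ℝ) := by
      intro x hx
      rw [abs_sub_comm, abs_of_nonneg (by linarith [hx.2]), hpt _ (by linarith [hx.2])]
    rw [Measure.restrict_congr_set Ioc_ae_eq_Icc.symm, setLIntegral_congr_fun measurableSet_Ioc (fun x hx => by rw [heq x hx])]
    rw [← ofReal_integral_eq_lintegral_ofReal, ← intervalIntegral.integral_of_le (by linarith)]
    · rw [intervalIntegral.integral_const_mul, intervalIntegral.integral_comp_sub_left (fun x => x ^ (-(1/2):ℝ))]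
      simp only [sub_self, sub_sub_cancel]
      rw [hval, hss]
    · exact (intervalIntegrable_iff_integrableOn_Ioc_of_le (by linarith)).1 hii
    · refine (ae_restrict_iff' measurableSet_Ioc).2 (Filter.Eventually.of_forall fun x hx => ?_)
      have : 0 ≤ a - x := by linarith [hx.2]
      simp only [Pi.zero_apply]; positivity
  calc _ ≤ ∫⁻ x in Icc (a - 4*l) a ∪ Icc a (a+4*l), ENNReal.ofReal (Real.sqrt (l / |x - a|)) := by
        apply lintegral_mono_set
        rw [Icc_union_Icc_eq_Icc (by linarith) (by linarith)]
    _ ≤ _ := lintegral_union_le _ _ _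
    _ = _ := by rw [h1, h2, ← ENNReal.ofReal_add (by linarith) (by linarith)]; congr 1; ring

/-- Cartan / Pólya type estimate for sublevel sets of monic polynomials. -/
lemma cartan_s9 {ι : Type*} [Fintype ι] [Nonempty ι] (a : ι → ℝ) (l : ℝ) (hl : 0 < l) (S : Set ℝ)
    (hSm : MeasurableSet S) (hSf : volume S ≠ ⊤)
    (hS : ∀ x ∈ S, ∏ i, |x - a i| ≤ l ^ (Fintype.card ι)) :
    volume S ≤ ENNReal.ofReal (16 * l) := by
  set k := Fintype.card ι with hk
  have hkpos : 0 < k := Fintype.card_pos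
  set S' := S \ Set.range a with hS'
  have hnull : volume S' = volume S := measure_sdiff_null ((Set.finite_range a).measure_zero volume)
  have hSm' : MeasurableSet S' := hSm.diff (Set.finite_range a).measurableSet
  have hpt : ∀ x ∈ S', (k:ℝ) ≤ ∑ i, Real.sqrt (l / |x - a i|) := by
    intro x hx
    have hne : ∀ i, 0 < |x - a i| := by
      intro i; rw [abs_pos, sub_ne_zero]; rintro rfl; exact hx.2 ⟨i, rfl⟩
    have h1 : ∑ i, Real.log |x - a i| ≤ k * Real.log l := by
      rw [← Real.log_prod (fun i _ => (hne i).ne'), ← Real.log_pow]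
      exact Real.log_le_log (Finset.prod_pos fun i _ => hne i) (hS x hx.1)
    have h2 : ∀ i, 1 + (Real.log l - Real.log |x - a i|)/2 ≤ Real.sqrt (l / |x - a i|) := by
      intro i
      have hp : 0 < Real.sqrt (l / |x - a i|) := Real.sqrt_pos.2 (div_pos hl (hne i))
      have := Real.log_le_sub_one_of_pos hp
      rw [Real.log_sqrt (div_pos hl (hne i)).le, Real.log_div hl.ne' (hne i).ne'] at this
      linarith
    have h3 := Finset.sum_le_sum (s := Finset.univ) (fun i _ => h2 i)
    have h4 : ∑ i : ι, (1 + (Real.log l - Real.log |x - a i|)/2) = k + (k * Real.log l - ∑ i, Real.log |x - a i|)/2 := by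
      rw [Finset.sum_add_distrib, ← Finset.sum_div, Finset.sum_sub_distrib]
      simp [hk]
    linarith
  have hmeas : ∀ i, Measurable (fun x : ℝ => ENNReal.ofReal (Real.sqrt (l / |x - a i|))) := by
    intro i; fun_prop
  have hone : ∀ i, ∫⁻ x in S', ENNReal.ofReal (Real.sqrt (l / |x - a i|)) ≤
      ENNReal.ofReal (8*l) + ENNReal.ofReal (1/2) * volume S := by
    intro i
    set I := Icc (a i - 4*l) (a i + 4*l)
    calc _ ≤ ∫⁻ x in I ∪ (S' \ I), ENNReal.ofReal (Real.sqrt (l / |x - a i|)) := by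
          apply lintegral_mono_set; intro x hx; by_cases h : x ∈ I
          · exact Or.inl h
          · exact Or.inr ⟨hx, h⟩
      _ ≤ _ := lintegral_union_le _ _ _
      _ ≤ _ := by
        refine add_le_add (lint_sqrt _ _ hl) ?_
        calc _ ≤ ∫⁻ x in S' \ I, ENNReal.ofReal (1/2) := by
              refine setLIntegral_mono' (hSm'.diff measurableSet_Icc) fun x hx => ?_
              apply ENNReal.ofReal_le_ofReal
              have : 4*l < |x - a i| := by
                by_contra hcon
                push Not at hcon
                apply hx.2
                have := abs_le.1 hcon
                exact ⟨by linarith, by linarith⟩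
              rw [Real.sqrt_le_left (by norm_num), div_le_iff₀ (by linarith)]
              linarith
          _ = ENNReal.ofReal (1/2) * volume (S' \ I) := by rw [setLIntegral_const]
          _ ≤ _ := by gcongr; exact sdiff_subset.trans sdiff_subset
  have htot : (k:ENNReal) * volume S ≤ k * (ENNReal.ofReal (8*l) + ENNReal.ofReal (1/2) * volume S) := by
    calc (k:ENNReal) * volume S = ∫⁻ x in S', (k:ENNReal) := by rw [setLIntegral_const, hnull]
      _ ≤ ∫⁻ x in S', ∑ i, ENNReal.ofReal (Real.sqrt (l / |x - a i|)) := by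
        refine setLIntegral_mono' hSm' fun x hx => ?_
        rw [← ENNReal.ofReal_sum_of_nonneg (fun i _ => Real.sqrt_nonneg _), ← ENNReal.ofReal_natCast]
        exact ENNReal.ofReal_le_ofReal (hpt x hx)
      _ = ∑ i, ∫⁻ x in S', ENNReal.ofReal (Real.sqrt (l / |x - a i|)) :=
        lintegral_finsetSum _ (fun i _ => hmeas i)
      _ ≤ ∑ i : ι, (ENNReal.ofReal (8*l) + ENNReal.ofReal (1/2) * volume S) :=
        Finset.sum_le_sum fun i _ => hone i
      _ = _ := by rw [Finset.sum_const, Finset.card_univ, nsmul_eq_mul]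
  have h5 : volume S ≤ ENNReal.ofReal (8*l) + ENNReal.ofReal (1/2) * volume S :=
    (ENNReal.mul_le_mul_iff_right (by simpa using hkpos.ne') (by simp)).1 htot
  rw [← ENNReal.ofReal_toReal hSf] at h5 ⊢
  rw [← ENNReal.ofReal_mul (by norm_num), ← ENNReal.ofReal_add (by positivity) (by positivity),
    ENNReal.ofReal_le_ofReal_iff (by positivity)] at h5
  apply ENNReal.ofReal_le_ofReal
  linarith

lemma norm_eval_prod (s : Multiset ℂ) (x : ℂ) :
    ‖((s.map fun z => Polynomial.X - Polynomial.C z).prod).eval x‖ = (s.map fun z => ‖x - z‖).prod := by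
  induction s using Multiset.induction with
  | empty => simp
  | cons a s ih => simp [ih]

lemma prod_map_le (s : Multiset ℂ) (f g : ℂ → ℝ) (hf : ∀ z ∈ s, 0 ≤ f z) (hfg : ∀ z ∈ s, f z ≤ g z) :
    0 ≤ (s.map f).prod ∧ (s.map f).prod ≤ (s.map g).prod := by
  induction s using Multiset.induction with
  | empty => simp
  | cons a s ih =>
    have h := ih (fun z hz => hf z (Multiset.mem_cons_of_mem hz)) (fun z hz => hfg z (Multiset.mem_cons_of_mem hz))
    have ha := hf a (Multiset.mem_cons_self a s)
    have hb := hfg a (Multiset.mem_cons_self a s)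
    simp only [Multiset.map_cons, Multiset.prod_cons]
    exact ⟨mul_nonneg ha h.1, mul_le_mul hb h.2 h.1 (ha.trans hb)⟩

lemma local_core (p : Polynomial ℂ) (n : ℕ) (hn : 0 < n) (hp : p.natDegree ≤ n)
    (hbd : ∀ x : ℝ, x ∈ Icc (-1:ℝ) 1 → ‖p.eval (x:ℂ)‖ ≤ 1)
    (δ t θ h ρ : ℝ) (hh : 0 < h) (hρ : 2 * h ≤ ρ) (hθ : 0 < θ) (hδ : 0 < δ)
    (hθ2 : 2 * h / ρ ≤ (1 - t - θ) * δ)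
    (x₀ : ℝ) (hx₀ : x₀ ∈ Icc (-1:ℝ) 1) (hP : Real.exp (-(t * δ) * n) ≤ ‖p.eval (x₀:ℂ)‖)
    (S : Set ℝ) (hSm : MeasurableSet S) (hS : ∀ x ∈ S, |x - x₀| ≤ h ∧ ‖p.eval (x:ℂ)‖ ≤ Real.exp (-δ * n)) :
    S = ∅ ∨ ∃ a : ℝ, 1 ≤ a ∧ volume S ≤ ENNReal.ofReal (16 * (ρ * Real.exp (-(θ * δ * a)))) ∧
      Real.exp (-(t * δ * a)) ≤ 54 * ρ * a ^ 2 := by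
  classical
  have hρ0 : 0 < ρ := by linarith
  have hp0 : p ≠ 0 := by
    rintro rfl; simp at hP; exact absurd hP (not_le.2 (Real.exp_pos _))
  have hn' : (0:ℝ) < n := by exact_mod_cast hn
  set inn := p.roots.filter (fun z => ‖(x₀:ℂ) - z‖ < ρ) with hinn
  set out := p.roots.filter (fun z => ¬ ‖(x₀:ℂ) - z‖ < ρ) with hout
  have hsplit : inn + out = p.roots := Multiset.filter_add_not _ _
  set R := (inn.map fun z => Polynomial.X - Polynomial.C z).prod with hR
  set Q := Polynomial.C p.leadingCoeff * (out.map fun z => Polynomial.X - Polynomial.C z).prod with hQ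
  have hpRQ : p = R * Q := by
    conv_lhs => rw [(IsAlgClosed.splits p).eq_prod_roots, ← hsplit, Multiset.map_add, Multiset.prod_add]
    rw [hR, hQ]; ring
  have hcard : inn.card + out.card = p.natDegree := by
    rw [← Multiset.card_add, hsplit, (IsAlgClosed.splits p).natDegree_eq_card_roots]
  have hQdeg : Q.natDegree ≤ n :=
    (Polynomial.natDegree_le_of_dvd ⟨R, by rw [mul_comm]; exact hpRQ⟩ hp0).trans hp
  set k := inn.card with hk
  have hkn : k ≤ n := by omega
  have hev : ∀ x : ℝ, ‖p.eval (x:ℂ)‖ = ‖R.eval (x:ℂ)‖ * ‖Q.eval (x:ℂ)‖ := by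
    intro x; rw [hpRQ, Polynomial.eval_mul, norm_mul]
  have hRn : ∀ x : ℝ, ‖R.eval (x:ℂ)‖ = (inn.map fun z => ‖(x:ℂ) - z‖).prod := fun x => norm_eval_prod _ _
  have hQn : ∀ x : ℝ, ‖Q.eval (x:ℂ)‖ = ‖p.leadingCoeff‖ * (out.map fun z => ‖(x:ℂ) - z‖).prod := by
    intro x; rw [hQ, Polynomial.eval_mul, norm_mul, norm_eval_prod, Polynomial.eval_C]
  have hR0 : ‖R.eval (x₀:ℂ)‖ ≤ ρ ^ k := by
    rw [hRn]
    refine (prod_map_le inn _ (fun _ => ρ) (fun z _ => norm_nonneg _) (fun z hz => ?_)).2.trans ?_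
    · exact (Multiset.mem_filter.1 hz).2.le
    · simp [hk]
  have hRx : ∀ x : ℝ, ρ ≤ |x - x₀| → (|x - x₀| - ρ) ^ k ≤ ‖R.eval (x:ℂ)‖ := by
    intro x hx
    rw [hRn]
    refine le_trans ?_ (prod_map_le inn (fun _ => |x - x₀| - ρ) _ (fun z _ => by linarith) (fun z hz => ?_)).2
    · simp [hk]
    · have h1 := (Multiset.mem_filter.1 hz).2
      have h2 : ‖(x:ℂ) - x₀‖ = |x - x₀| := by rw [← Complex.ofReal_sub, Complex.norm_real, Real.norm_eq_abs]
      have h3 : ‖(x:ℂ) - x₀‖ ≤ ‖(x:ℂ) - z‖ + ‖(x₀:ℂ) - z‖ := by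
        have := norm_sub_le ((x:ℂ) - z) ((x₀:ℂ) - z)
        simpa using this
      rw [h2] at h3
      linarith
  -- outer factor
  set c := Real.exp (-(2 * h / ρ)) with hc
  have hc0 : 0 < c := Real.exp_pos _
  have hc1 : c ≤ 1 := Real.exp_le_one_iff.2 (by have : 0 < 2 * h / ρ := by positivity
                                                linarith)
  have hc2 : c ≤ 1 - h / ρ := by
    have hu : h / ρ ≤ 1/2 := by rw [div_le_iff₀ hρ0]; linarith
    have hu0 : 0 < h / ρ := by positivity
    have h1 : 2 * h / ρ = 2 * (h/ρ) := by ring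
    rw [hc, h1, Real.exp_neg]
    have h2 : 1 + 2 * (h/ρ) ≤ Real.exp (2 * (h/ρ)) := by linarith [Real.add_one_le_exp (2 * (h/ρ))]
    refine (inv_anti₀ (by positivity) h2).trans ?_
    rw [inv_le_iff_one_le_mul₀ (by positivity)]
    nlinarith
  have hQx : ∀ x : ℝ, |x - x₀| ≤ h → c ^ n * ‖Q.eval (x₀:ℂ)‖ ≤ ‖Q.eval (x:ℂ)‖ := by
    intro x hx
    have h1 := (prod_map_le out (fun z => c * ‖(x₀:ℂ) - z‖) (fun z => ‖(x:ℂ) - z‖)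
      (fun z _ => by positivity) (fun z hz => by
        have h1 := (Multiset.mem_filter.1 hz).2
        push Not at h1
        have h2 : ‖(x:ℂ) - x₀‖ = |x - x₀| := by rw [← Complex.ofReal_sub, Complex.norm_real, Real.norm_eq_abs]
        have h3 : ‖(x₀:ℂ) - z‖ ≤ ‖(x:ℂ) - z‖ + ‖(x:ℂ) - x₀‖ := by
          have := norm_sub_le ((x:ℂ) - z) ((x:ℂ) - x₀)
          simpa using this
        rw [h2] at h3
        have h4 : (1 - h/ρ) * ‖(x₀:ℂ) - z‖ ≤ ‖(x₀:ℂ) - z‖ - h := by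
          have : h ≤ h/ρ * ‖(x₀:ℂ) - z‖ := by
            rw [div_mul_eq_mul_div, le_div_iff₀ hρ0]; nlinarith
          linarith
        have h5 := mul_le_mul_of_nonneg_right hc2 (norm_nonneg ((x₀:ℂ) - z))
        linarith)).2
    rw [Multiset.prod_map_mul] at h1
    simp only [Multiset.map_const', Multiset.prod_replicate] at h1
    have h0 := (prod_map_le out (fun z => ‖(x₀:ℂ) - z‖) (fun z => ‖(x₀:ℂ) - z‖)
      (fun z _ => norm_nonneg _) (fun z _ => le_rfl)).1
    have h2 : c ^ n ≤ c ^ out.card := pow_le_pow_of_le_one hc0.le hc1 (by omega)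
    have h3 := (mul_le_mul_of_nonneg_right h2 h0).trans h1
    rw [hQn, hQn]
    nlinarith [mul_le_mul_of_nonneg_left h3 (norm_nonneg p.leadingCoeff)]
  have hQ0 : 0 < ‖Q.eval (x₀:ℂ)‖ := by
    rcases (norm_nonneg (Q.eval (x₀:ℂ))).lt_or_eq with h | h
    · exact h
    · rw [hev, ← h, mul_zero] at hP; exact absurd hP (not_le.2 (Real.exp_pos _))
  -- pointwise bound on S
  have hSR : ∀ x ∈ S, (inn.map fun z => ‖(x:ℂ) - z‖).prod ≤ ρ ^ k * Real.exp (-(θ * δ) * n) := by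
    intro x hx
    obtain ⟨h1, h2⟩ := hS x hx
    rw [← hRn]
    have h3 := hQx x h1
    have h4 : ‖R.eval (x:ℂ)‖ * (c ^ n * ‖Q.eval (x₀:ℂ)‖) ≤ Real.exp (-δ * n) := by
      refine le_trans (mul_le_mul_of_nonneg_left h3 (norm_nonneg _)) ?_
      rw [← hev]; exact h2
    have h5 : Real.exp (-(t * δ) * n) ≤ ρ ^ k * ‖Q.eval (x₀:ℂ)‖ := by
      rw [hev] at hP
      exact hP.trans (mul_le_mul_of_nonneg_right hR0 (norm_nonneg _))
    have h6 : Real.exp (-δ * n) ≤ Real.exp (-(θ * δ) * n) * c ^ n * Real.exp (-(t * δ) * n) := by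
      rw [hc, ← Real.exp_nat_mul, ← Real.exp_add, ← Real.exp_add, Real.exp_le_exp]
      nlinarith [mul_le_mul_of_nonneg_right hθ2 hn'.le]
    have h7 : Real.exp (-(θ * δ) * n) * c ^ n * Real.exp (-(t * δ) * n) ≤
        Real.exp (-(θ * δ) * n) * c ^ n * (ρ ^ k * ‖Q.eval (x₀:ℂ)‖) :=
      mul_le_mul_of_nonneg_left h5 (by positivity)
    have h8 : 0 < c ^ n * ‖Q.eval (x₀:ℂ)‖ := by positivity
    refine le_of_mul_le_mul_right ?_ h8
    calc _ ≤ _ := h4.trans (h6.trans h7)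
      _ = _ := by ring
  rcases Nat.eq_zero_or_pos k with hk0 | hkpos
  · left
    rw [Set.eq_empty_iff_forall_notMem]
    intro x hx
    have h1 := hSR x hx
    have hi : inn = 0 := Multiset.card_eq_zero.1 hk0
    rw [hk0, hi] at h1
    simp only [Multiset.map_zero, Multiset.prod_zero, pow_zero, one_mul] at h1
    have : Real.exp (-(θ * δ) * n) < 1 := by
      rw [Real.exp_lt_one_iff]; have : 0 < θ * δ * n := by positivity
      linarith
    linarith
  right
  have hk' : (0:ℝ) < k := by exact_mod_cast hkpos
  refine ⟨(n:ℝ)/k, ?_, ?_, ?_⟩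
  · rw [le_div_iff₀ hk', one_mul]; exact_mod_cast hkn
  · have hSf : volume S ≠ ⊤ := by
      refine ne_top_of_le_ne_top (b := volume (Icc (x₀ - h) (x₀ + h))) (by simp) (measure_mono ?_)
      intro x hx
      have := abs_le.1 (hS x hx).1
      exact ⟨by linarith, by linarith⟩
    have hcd : Fintype.card inn = k := by rw [Multiset.card_coe]
    have : Nonempty inn := Fintype.card_pos_iff.1 (by rw [hcd]; exact hkpos)
    refine cartan_s9 (ι := inn) (fun i => (i : ℂ).re) _ (by positivity) S hSm hSf ?_
    intro x hx
    rw [hcd, mul_pow, ← Real.exp_nat_mul]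
    have e1 : (k:ℝ) * -(θ * δ * (n/k)) = -(θ * δ) * n := by field_simp
    rw [e1]
    refine le_trans ?_ (hSR x hx)
    rw [← Multiset.map_univ inn (fun z : ℂ => ‖(x:ℂ) - z‖)]
    refine Finset.prod_le_prod (fun i _ => abs_nonneg _) (fun i _ => ?_)
    have := Complex.abs_re_le_norm ((x:ℂ) - (i:ℂ))
    simpa using this
  · have h1 := cluster_bound R Q n k hkpos hkn hQdeg ρ x₀ hx₀ (fun x hx => by rw [← hev]; exact hbd x hx)
      hR0 hRx hρ0
    rw [← hev] at h1
    have h2 := hP.trans h1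
    have e1 : Real.exp (-(t * δ) * n) = Real.exp (-(t * δ * (n/k))) ^ k := by
      rw [← Real.exp_nat_mul]; congr 1; field_simp
    rw [e1] at h2
    exact (pow_le_pow_iff_left₀ (Real.exp_pos _).le (by positivity) hkpos.ne').1 h2

set_option maxHeartbeats 1000000 in
lemma local_est_s9 (δ₀ t₀ γ : ℝ) (hδ₀ : 0 < δ₀) (ht₀ : 0 < t₀) (hγ : 0 < γ) :
    ∃ h₀ : ℝ, 0 < h₀ ∧ ∀ h : ℝ, 0 < h → h ≤ h₀ →
      ∀ (p : Polynomial ℂ) (n : ℕ), 0 < n → p.natDegree ≤ n →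
      (∀ x : ℝ, x ∈ Icc (-1:ℝ) 1 → ‖p.eval (x:ℂ)‖ ≤ 1) →
      ∀ δ t : ℝ, δ₀ ≤ δ → t₀ ≤ t → t < 1 → γ < 1 - t →
      ∀ x₀ : ℝ, x₀ ∈ Icc (-1:ℝ) 1 → Real.exp (-(t * δ) * n) ≤ ‖p.eval (x₀:ℂ)‖ →
      ∀ S : Set ℝ, MeasurableSet S →
      (∀ x ∈ S, |x - x₀| ≤ h ∧ ‖p.eval (x:ℂ)‖ ≤ Real.exp (-δ * n)) →
      volume S ≤ ENNReal.ofReal (h ^ ((1 - γ/4)/t)) := by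
  set ε : ℝ := γ/24 with hε
  have hε0 : 0 < ε := by positivity
  set H₀ : ℝ := 4/ε + 3 + (1/t₀ + 1) / (γ * δ₀ * ε^2/16) + 16/(γ*δ₀*ε) with hH₀
  refine ⟨Real.exp (-H₀), Real.exp_pos _, ?_⟩
  intro h hh hh0 p n hn hp hbd δ t hδ ht ht1 hγt x₀ hx₀ hP S hSm hS
  set H : ℝ := -Real.log h with hH
  have hhe : h = Real.exp (-H) := by rw [hH, neg_neg, Real.exp_log hh]
  have hHH : H₀ ≤ H := by
    rw [hhe, Real.exp_le_exp] at hh0; linarith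
  have q1 : 0 < 4/ε := by positivity
  have q2 : 0 < (1/t₀ + 1) / (γ * δ₀ * ε^2/16) := by positivity
  have q3 : 0 < 16/(γ*δ₀*ε) := by positivity
  have H1 : 4 ≤ ε * H := by
    have : 4/ε ≤ H := by linarith
    rw [div_le_iff₀ hε0] at this; linarith
  have H2 : 3 ≤ H := by linarith
  have H3 : 1/t₀ + 1 ≤ H * (γ * δ₀ * ε^2/16) := by
    rw [← div_le_iff₀ (by positivity)]; linarith
  have H4 : 16 ≤ H * (γ*δ₀*ε) := by
    rw [← div_le_iff₀ (by positivity)]; linarith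
  have ht0 : 0 < t := by linarith
  have hδ0 : 0 < δ := by linarith
  set θ : ℝ := 1 - t - γ/8 with hθ
  have hθ0 : γ/2 ≤ θ := by linarith
  set ρ : ℝ := Real.exp (-((1-ε) * H)) with hρ
  have hhρ : h = ρ * Real.exp (-(ε * H)) := by
    rw [hρ, ← Real.exp_add, hhe]; congr 1; ring
  have hρ0 : 0 < ρ := Real.exp_pos _
  have hexp : Real.exp (-(ε * H)) ≤ 1/(ε*H) := by
    rw [Real.exp_neg, ← one_div]
    apply one_div_le_one_div_of_le (by linarith)
    linarith [Real.add_one_le_exp (ε*H)]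
  have hexp2 : Real.exp (-(ε*H)) ≤ 1/4 := hexp.trans (one_div_le_one_div_of_le (by norm_num) H1)
  have hexp3 : Real.exp (-(ε*H)) ≤ γ * δ₀ / 16 := by
    refine hexp.trans ?_
    rw [div_le_iff₀ (by linarith)]; nlinarith
  have hcore := local_core p n hn hp hbd δ t θ h ρ hh (by rw [hhρ]; nlinarith) (by linarith) hδ0
    (by
      have : 2 * h / ρ = 2 * Real.exp (-(ε*H)) := by rw [hhρ]; field_simp
      rw [this, hθ]; nlinarith) x₀ hx₀ hP S hSm hS
  rcases hcore with h0 | ⟨a, ha1, hvol, hcon⟩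
  · rw [h0]; simp
  refine hvol.trans (ENNReal.ofReal_le_ofReal ?_)
  have l16 : (16:ℝ) ≤ Real.exp 3 := by
    have := Real.exp_one_gt_d9
    have e : Real.exp 3 = Real.exp 1 ^ 3 := by rw [← Real.exp_nat_mul]; norm_num
    rw [e]
    calc (16:ℝ) ≤ 2.7^3 := by norm_num
      _ ≤ _ := pow_le_pow_left₀ (by norm_num) (by linarith) _
  have l54 : (54:ℝ) ≤ Real.exp 4 := by
    have := Real.exp_one_gt_d9
    have e : Real.exp 4 = Real.exp 1 ^ 4 := by rw [← Real.exp_nat_mul]; norm_num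
    rw [e]
    calc (54:ℝ) ≤ 2.718^4 := by norm_num
      _ ≤ _ := pow_le_pow_left₀ (by norm_num) (by linarith) _
  have hhp : h ^ ((1 - γ/4)/t) = Real.exp (-(H * (1-γ/4)/t)) := by
    rw [hhe, ← Real.exp_mul]; congr 1; ring
  rw [hhp]
  have hstep : 16 * (ρ * Real.exp (-(θ * δ * a))) ≤ Real.exp (3 - (1-ε)*H - θ * δ * a) := by
    calc _ ≤ Real.exp 3 * (ρ * Real.exp (-(θ * δ * a))) := by gcongr
      _ = _ := by rw [hρ, ← Real.exp_add, ← Real.exp_add]; congr 1; ring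
  refine hstep.trans (Real.exp_le_exp.2 ?_)
  have hγ1 : γ < 1 := by linarith
  rcases le_total a (Real.exp (ε*H/2)) with hca | hca
  · have hc1 : Real.exp (-(t * δ * a)) ≤ Real.exp (4 - (1-ε)*H + ε*H) := by
      refine hcon.trans ?_
      calc 54 * ρ * a^2 ≤ Real.exp 4 * ρ * (Real.exp (ε*H/2))^2 := by gcongr
        _ = _ := by rw [hρ, ← Real.exp_nat_mul, ← Real.exp_add, ← Real.exp_add]; congr 1; push_cast; ring
    rw [Real.exp_le_exp] at hc1
    have hc2 : (1 - 3*ε) * H ≤ t * δ * a := by linarith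
    have hc3 : θ * ((1-3*ε)*H) ≤ θ * (t * δ * a) := mul_le_mul_of_nonneg_left hc2 (by linarith)
    have hfin : H * (1-γ/4) ≤ t * (- (3 - (1-ε)*H - θ * δ * a)) := by
      have k1 : t * (3 - (1-ε)*H) ≤ t * (-(1-2*ε)*H) := mul_le_mul_of_nonneg_left (by linarith) ht0.le
      have k2 : t * ((1-3*ε)*H) ≤ t * ((1-2*ε)*H) := mul_le_mul_of_nonneg_left (by nlinarith) ht0.le
      have k3 : (t + θ) * ((1-3*ε)*H) ≥ H * (1-γ/4) := by
        have : t + θ = 1 - γ/8 := by rw [hθ]; ring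
        rw [this, hε]
        nlinarith [mul_nonneg (sq_nonneg γ) (by linarith : 0 ≤ H)]
      nlinarith
    have : H * (1-γ/4)/t ≤ -(3 - (1-ε)*H - θ * δ * a) := by
      rw [div_le_iff₀ ht0]; linarith
    linarith
  · have h1 : (ε*H/2)^2/2 ≤ a := by
      refine le_trans ?_ hca
      have := Real.quadratic_le_exp_of_nonneg (x := ε*H/2) (by linarith)
      linarith
    have hθp : 0 < θ := by linarith
    have h2 : γ/2 * δ₀ * ((ε*H/2)^2/2) ≤ θ * δ * a := by gcongr
    have h3 : H * (1/t₀+1) ≤ θ * δ * a := by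
      refine le_trans (mul_le_mul_of_nonneg_left H3 (by linarith)) (le_trans (le_of_eq ?_) h2)
      ring
    have h4 : H * (1-γ/4)/t ≤ H * (1/t₀) := by
      rw [mul_div_assoc]
      apply mul_le_mul_of_nonneg_left _ (by linarith)
      exact div_le_div₀ (by norm_num) (by linarith) ht₀ ht
    have h5 : 0 ≤ (1-ε)*H := mul_nonneg (by rw [hε]; linarith) (by linarith)
    linarith

lemma covering (f : ℝ → ℝ) (hf : Continuous f) (a b p : ℝ) (hab : a < b) (hp : 1 ≤ p)
    (E F G : Set ℝ) (hE : E = {x | x ∈ Icc (-1:ℝ) 1 ∧ f x ≤ a}) (hF : F = {x | x ∈ Icc (-1:ℝ) 1 ∧ f x ≤ b})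
    (hG : G = {x | x ∈ Icc (-1:ℝ) 1 ∧ b ≤ f x}) (hGne : G.Nonempty)
    (hloc : ∀ y ∈ G, ∀ h : ℝ, 0 < h → h ≤ 7 * (volume F).toReal →
      volume (E ∩ Metric.closedBall y h) ≤ ENNReal.ofReal (h ^ p)) :
    volume E ≤ ENNReal.ofReal ((7 * (volume F).toReal) ^ p) := by
  set M := (volume F).toReal with hM
  have hFsub : F ⊆ Icc (-1:ℝ) 1 := by rw [hF]; exact fun x hx => hx.1
  have hFf : volume F ≠ ⊤ := ne_top_of_le_ne_top (by simp) (measure_mono hFsub)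
  have hM0 : 0 ≤ M := ENNReal.toReal_nonneg
  have hGc : IsCompact G := by
    have : G = Icc (-1:ℝ) 1 ∩ {x | b ≤ f x} := by rw [hG]; rfl
    rw [this]
    exact isCompact_Icc.inter_right (isClosed_le continuous_const hf)
  set r : ℝ → ℝ := fun x => Metric.infDist x G / 2 with hr
  have hy : ∀ x, ∃ y ∈ G, dist x y = 2 * r x := by
    intro x
    obtain ⟨y, hyG, h⟩ := hGc.exists_infDist_eq_dist hGne x
    exact ⟨y, hyG, by rw [hr]; simp only; linarith⟩
  have hrpos : ∀ x ∈ E, 0 < r x := by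
    intro x hx
    obtain ⟨y, hyG, h⟩ := hy x
    have : 0 < dist x y := by
      rw [dist_pos]; rintro rfl
      rw [hE] at hx; rw [hG] at hyG
      linarith [hx.2, hyG.2]
    linarith
  have hEI : ∀ x ∈ E, x ∈ Icc (-1:ℝ) 1 := by rw [hE]; exact fun x hx => hx.1
  have hr1 : ∀ x ∈ E, r x ≤ 1 := by
    intro x hx
    obtain ⟨y, hyG, h⟩ := hy x
    rw [hG] at hyG
    have h1 := hEI x hx
    have h2 := hyG.1
    rw [Real.dist_eq] at h
    have : |x - y| ≤ 2 := abs_le.2 ⟨by linarith [h1.1, h2.2], by linarith [h1.2, h2.1]⟩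
    linarith
  have hsubF : ∀ x ∈ E, Metric.closedBall x (r x) ∩ Icc (-1:ℝ) 1 ⊆ F := by
    intro x hx z hz
    rw [hF]
    refine ⟨hz.2, ?_⟩
    by_contra hcon
    push Not at hcon
    have hzG : z ∈ G := by rw [hG]; exact ⟨hz.2, hcon.le⟩
    have h1 := Metric.infDist_le_dist_of_mem (x := x) hzG
    have h2 : dist x z ≤ r x := by rw [dist_comm]; exact hz.1
    have h3 := hrpos x hx
    have h4 : Metric.infDist x G = 2 * r x := by rw [hr]; simp only; ring
    linarith
  have hvol : ∀ x ∈ E, ENNReal.ofReal (r x) ≤ volume (Metric.closedBall x (r x) ∩ Icc (-1:ℝ) 1) := by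
    intro x hx
    have h0 := hrpos x hx
    have h1 := hr1 x hx
    have hI := hEI x hx
    rw [Real.closedBall_eq_Icc]
    rcases le_total x 0 with h | h
    · calc ENNReal.ofReal (r x) = volume (Icc x (x + r x)) := by rw [Real.volume_Icc]; congr 1; ring
        _ ≤ volume (Icc (x - r x) (x + r x) ∩ Icc (-1:ℝ) 1) := measure_mono (fun z hz => ⟨⟨by linarith [hz.1], hz.2⟩, ⟨by linarith [hz.1, hI.1], by linarith [hz.2]⟩⟩)
    · calc ENNReal.ofReal (r x) = volume (Icc (x - r x) x) := by rw [Real.volume_Icc]; congr 1; ring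
        _ ≤ volume (Icc (x - r x) (x + r x) ∩ Icc (-1:ℝ) 1) := measure_mono (fun z hz => ⟨⟨hz.1, by linarith [hz.2]⟩, ⟨by linarith [hz.1], by linarith [hz.2, hI.2]⟩⟩)
  have hrM : ∀ x ∈ E, r x ≤ M := by
    intro x hx
    have := (hvol x hx).trans (measure_mono (hsubF x hx))
    rw [← ENNReal.ofReal_toReal hFf] at this
    exact (ENNReal.ofReal_le_ofReal_iff hM0).1 this
  obtain ⟨u, huE, hdisj, hcov⟩ := Vitali.exists_disjoint_subfamily_covering_enlargement_closedBall
    E (fun x => x) r 1 hr1 5 (by norm_num)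
  have hcount : u.Countable := hdisj.countable_of_nonempty_interior (fun x hx => by
    refine ⟨x, Metric.ball_subset_interior_closedBall (Metric.mem_ball_self (hrpos x (huE hx)))⟩)
  have hcount' : Countable u := hcount.to_subtype
  have hEcov : E ⊆ ⋃ x ∈ u, E ∩ Metric.closedBall x (5 * r x) := by
    intro x hx
    obtain ⟨c, hc, hsub⟩ := hcov x hx
    exact mem_biUnion hc ⟨hx, hsub (Metric.mem_closedBall_self (hrpos x hx).le)⟩
  have hterm : ∀ x : u, volume (E ∩ Metric.closedBall (x:ℝ) (5 * r x)) ≤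
      ENNReal.ofReal (7 * (7*M)^(p-1)) * volume (Metric.closedBall (x:ℝ) (r x) ∩ Icc (-1:ℝ) 1) := by
    rintro ⟨x, hxu⟩
    have hx := huE hxu
    obtain ⟨y, hyG, hd⟩ := hy x
    have h0 := hrpos x hx
    have hM' := hrM x hx
    calc _ ≤ volume (E ∩ Metric.closedBall y (7 * r x)) := by
          refine measure_mono (inter_subset_inter_right _ (Metric.closedBall_subset_closedBall' ?_))
          rw [hd]; linarith
      _ ≤ ENNReal.ofReal ((7 * r x)^p) := hloc y hyG _ (by positivity) (by linarith)
      _ ≤ ENNReal.ofReal (7 * (7*M)^(p-1) * r x) := by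
          apply ENNReal.ofReal_le_ofReal
          have h7 : 0 < 7 * r x := by positivity
          have : (7 * r x)^p = (7 * r x) ^ (p-1) * (7 * r x) := by
            rw [← Real.rpow_add_one h7.ne']; congr 1; ring
          rw [this]
          have h8 : (7 * r x)^(p-1) ≤ (7*M)^(p-1) :=
            Real.rpow_le_rpow h7.le (by linarith) (by linarith)
          nlinarith
      _ = ENNReal.ofReal (7 * (7*M)^(p-1)) * ENNReal.ofReal (r x) := ENNReal.ofReal_mul (by positivity)
      _ ≤ _ := by gcongr; exact hvol x hx
  calc volume E ≤ volume (⋃ x ∈ u, E ∩ Metric.closedBall x (5 * r x)) := measure_mono hEcov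
    _ ≤ ∑' x : u, volume (E ∩ Metric.closedBall (x:ℝ) (5 * r x)) := measure_biUnion_le _ hcount _
    _ ≤ ∑' x : u, ENNReal.ofReal (7 * (7*M)^(p-1)) * volume (Metric.closedBall (x:ℝ) (r x) ∩ Icc (-1:ℝ) 1) :=
      ENNReal.tsum_le_tsum hterm
    _ = ENNReal.ofReal (7 * (7*M)^(p-1)) * ∑' x : u, volume (Metric.closedBall (x:ℝ) (r x) ∩ Icc (-1:ℝ) 1) :=
      ENNReal.tsum_mul_left
    _ ≤ ENNReal.ofReal (7 * (7*M)^(p-1)) * volume F := by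
      gcongr
      rw [← measure_iUnion]
      · exact measure_mono (iUnion_subset fun x => hsubF x (huE x.2))
      · intro x y hxy
        exact (hdisj x.2 y.2 (fun h => hxy (Subtype.ext h))).mono inter_subset_left inter_subset_left
      · intro x; exact Metric.isClosed_closedBall.measurableSet.inter measurableSet_Icc
    _ = ENNReal.ofReal (7 * (7*M)^(p-1) * M) := by
      rw [ENNReal.ofReal_mul (q := M) (by positivity), hM, ENNReal.ofReal_toReal hFf]
    _ ≤ _ := by
      apply ENNReal.ofReal_le_ofReal
      rcases hM0.lt_or_eq with h | h
      · have : (7 * M)^p = (7 * M) ^ (p-1) * (7 * M) := by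
          rw [← Real.rpow_add_one (by positivity)]; congr 1; ring
        rw [this]; apply le_of_eq; ring
      · rw [← h, mul_zero]; positivity

theorem comparison_lemma :
    ∀ δ₀ : ℝ, 0 < δ₀ → ∀ t₀ : ℝ, 0 < t₀ → t₀ < 1 → ∀ γ : ℝ, 0 < γ →
    ∃ κ : ℝ, 0 < κ ∧
      ∀ n : ℕ, 0 < n → ∀ P : Polynomial ℝ, P ≠ 0 → P.natDegree ≤ n →
      ∀ δ : ℝ, δ₀ ≤ δ → ∀ t : ℝ, t₀ ≤ t → t < 1 → γ < 1 - t →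
      (volume (sublevelSet P n δ)).toReal ≤ κ →
      (volume (sublevelSet P n (t * δ))).toReal ≥
        ((volume (sublevelSet P n δ)).toReal) ^ (t + γ) := by
  intro δ₀ hδ₀ t₀ ht₀ ht₀1 γ hγ
  obtain ⟨h₀, hh₀, hloc⟩ := local_est_s9 δ₀ t₀ γ hδ₀ ht₀ hγ
  refine ⟨min 1 (min ((h₀/7)^(1/t₀)) (((7:ℝ)^(-(1/t₀)))^(2/γ))), by positivity, ?_⟩
  intro n hn P hP hdeg δ hδ t ht ht1 hγt hκ
  set E := sublevelSet P n δ with hE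
  set F := sublevelSet P n (t * δ) with hF
  set m := (volume E).toReal with hm
  set M := (volume F).toReal with hM
  have hm0 : 0 ≤ m := ENNReal.toReal_nonneg
  have hM0 : 0 ≤ M := ENNReal.toReal_nonneg
  have ht0 : 0 < t := by linarith
  have hδ0 : 0 < δ := by linarith
  have hn' : (0:ℝ) < n := by exact_mod_cast hn
  have hκ1 : m ≤ 1 := hκ.trans (min_le_left _ _)
  have hκ2 : m ≤ (h₀/7)^(1/t₀) := hκ.trans ((min_le_right _ _).trans (min_le_left _ _))
  have hκ3 : m ≤ ((7:ℝ)^(-(1/t₀)))^(2/γ) := hκ.trans ((min_le_right _ _).trans (min_le_right _ _))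
  rcases hm0.eq_or_lt with hm0' | hmpos
  · rw [← hm0', Real.zero_rpow (by linarith)]; exact hM0
  by_contra hcon
  simp only [ge_iff_le, not_le] at hcon
  -- the sup norm
  set N := supNorm P with hN
  have hbddN : BddAbove ((fun x => |P.eval x|) '' Icc (-1:ℝ) 1) :=
    (isCompact_Icc.image (by fun_prop)).bddAbove
  have hleN : ∀ x ∈ Icc (-1:ℝ) 1, |P.eval x| ≤ N := fun x hx =>
    le_csSup hbddN ⟨x, hx, rfl⟩
  have hNpos : 0 < N := by
    by_contra hc
    push Not at hc
    apply hP
    refine Polynomial.eq_zero_of_infinite_isRoot P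
      ((Icc_infinite (show (-1:ℝ) < 1 by norm_num)).mono fun x hx => ?_)
    exact abs_nonpos_iff.1 ((hleN x hx).trans hc)
  set p : Polynomial ℂ := Polynomial.C (((N⁻¹ : ℝ)) : ℂ) * P.map Complex.ofRealHom with hp
  have hpe : ∀ x : ℝ, ‖p.eval (x:ℂ)‖ = |P.eval x| / N := by
    intro x
    have : (P.map Complex.ofRealHom).eval (x:ℂ) = ((P.eval x : ℝ) : ℂ) := by
      have := Polynomial.eval_map_apply Complex.ofRealHom (p := P) x
      simpa using this
    rw [hp, Polynomial.eval_mul, Polynomial.eval_C, this, norm_mul, Complex.norm_real, Complex.norm_real,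
      Real.norm_eq_abs, Real.norm_eq_abs, abs_of_pos (inv_pos.2 hNpos)]
    field_simp
  have hpdeg : p.natDegree ≤ n :=
    (Polynomial.natDegree_C_mul_le _ _).trans ((Polynomial.natDegree_map_le).trans hdeg)
  set f : ℝ → ℝ := fun x => |P.eval x| / N with hf
  have hfc : Continuous f := by rw [hf]; fun_prop
  have hE' : E = {x | x ∈ Icc (-1:ℝ) 1 ∧ f x ≤ Real.exp (-δ * n)} := by
    rw [hE]; ext x; exact and_congr_right fun _ => (div_le_iff₀ hNpos).symm
  have hF' : F = {x | x ∈ Icc (-1:ℝ) 1 ∧ f x ≤ Real.exp (-(t*δ) * n)} := by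
    rw [hF]; ext x; exact and_congr_right fun _ => (div_le_iff₀ hNpos).symm
  have hEm : MeasurableSet E := by
    rw [hE']
    exact (isClosed_Icc.inter (isClosed_le hfc continuous_const)).measurableSet
  have hEf : volume E ≠ ⊤ := by
    refine ne_top_of_le_ne_top (b := volume (Icc (-1:ℝ) 1)) (by simp) (measure_mono ?_)
    rw [hE']; exact fun x hx => hx.1
  have hM1 : M < 1 := hcon.trans_le (Real.rpow_le_one hm0 hκ1 (by linarith))
  have hMh : 7 * M ≤ h₀ := by
    have h1 : m ^ (t + γ) ≤ m ^ t₀ := Real.rpow_le_rpow_of_exponent_ge hmpos hκ1 (by linarith)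
    have h2 : m ^ t₀ ≤ ((h₀/7)^(1/t₀))^t₀ := Real.rpow_le_rpow hm0 hκ2 ht₀.le
    rw [← Real.rpow_mul (by positivity), one_div_mul_cancel ht₀.ne', Real.rpow_one] at h2
    linarith
  set q : ℝ := (1-γ/4)/t with hq
  have hq1 : 1 ≤ q := by rw [hq, le_div_iff₀ ht0]; linarith
  set G := {x | x ∈ Icc (-1:ℝ) 1 ∧ Real.exp (-(t*δ) * n) ≤ f x} with hG
  have hGne : G.Nonempty := by
    by_contra hne
    rw [not_nonempty_iff_eq_empty] at hne
    have hFI : F = Icc (-1:ℝ) 1 := by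
      rw [hF']; ext x
      refine ⟨fun hx => hx.1, fun hx => ⟨hx, ?_⟩⟩
      by_contra hc
      push Not at hc
      have : x ∈ G := ⟨hx, hc.le⟩
      rw [hne] at this; exact this
    rw [hM, hFI, Real.volume_Icc, ENNReal.toReal_ofReal (by norm_num)] at hM1
    linarith
  have hmain := covering f hfc _ _ q (by
      rw [Real.exp_lt_exp]
      nlinarith [mul_pos hδ0 hn', mul_pos (mul_pos hδ0 hn') (by linarith : 0 < 1 - t)]) hq1 E F G hE' hF' hG hGne (by
    intro y hy h hh hhM
    refine hloc h hh (hhM.trans hMh) p n hn hpdeg (fun x hx => ?_) δ t hδ ht ht1 hγt y hy.1 ?_ _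
      (hEm.inter Metric.isClosed_closedBall.measurableSet) ?_
    · rw [hpe, div_le_one hNpos]; exact hleN x hx
    · rw [hpe]; exact hy.2
    · rintro x ⟨hx1, hx2⟩
      rw [hE'] at hx1
      refine ⟨by rw [← Real.dist_eq]; exact hx2, by rw [hpe]; exact hx1.2⟩)
  rw [← ENNReal.ofReal_toReal hEf, ENNReal.ofReal_le_ofReal_iff (by positivity)] at hmain
  -- final contradiction
  have hqt : q ≤ 1/t₀ := div_le_div₀ (by norm_num) (by linarith) ht₀ ht
  have hqγ : 1 + γ/2 ≤ (t+γ) * q := by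
    rw [hq, mul_div_assoc', le_div_iff₀ ht0]
    nlinarith [mul_pos hγ ht0, mul_pos hγ hγ]
  have h1 : (7*M)^q < (7 * m^(t+γ))^q :=
    Real.rpow_lt_rpow (by positivity) (by linarith) (by linarith)
  have h2 : (7 * m^(t+γ))^q = 7^q * m^((t+γ)*q) := by
    rw [Real.mul_rpow (by norm_num) (by positivity), ← Real.rpow_mul hm0]
  have h3 : m^((t+γ)*q) ≤ m^(1+γ/2) := Real.rpow_le_rpow_of_exponent_ge hmpos hκ1 hqγ
  have h4 : (7:ℝ)^q ≤ 7^(1/t₀) := Real.rpow_le_rpow_of_exponent_le (by norm_num) hqt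
  have h5 : m^(γ/2) ≤ 7^(-(1/t₀)) := by
    have := Real.rpow_le_rpow hm0 hκ3 (by positivity : 0 ≤ γ/2)
    rwa [← Real.rpow_mul (by positivity), show 2/γ*(γ/2) = 1 by field_simp, Real.rpow_one] at this
  have h6 : m^(1+γ/2) = m * m^(γ/2) := by rw [Real.rpow_add hmpos, Real.rpow_one]
  have h7 : (7:ℝ)^(1/t₀) * 7^(-(1/t₀)) = 1 := by
    rw [← Real.rpow_add (by norm_num)]; simp
  have h8 : (7:ℝ)^q * m^((t+γ)*q) ≤ 7^(1/t₀) * (m * 7^(-(1/t₀))) := by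
    rw [h6] at h3
    refine mul_le_mul h4 (h3.trans ?_) (by positivity) (by positivity)
    exact mul_le_mul_of_nonneg_left h5 hm0
  have h9 : (7:ℝ)^(1/t₀) * (m * 7^(-(1/t₀))) = m := by
    rw [mul_left_comm, h7, mul_one]
  rw [h2] at h1
  linarith
end
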